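/- arXiv:2006.13867 — 2 statements merged into one kernel-verified Lean document; each statement's English description precedes it below -/
import Mathlib

section
/- For every bounded open set E ⊆ Σ with smooth boundary and w(E) > 0, one has Per_w(E) / w(E)^((D−1)/D) ≥ Per_w(B₁ ∩ Σ) / w(B₁ ∩ Σ)^((D−1)/D), where Per_w(B₁ ∩ Σ) = ∫_{∂B₁ ∩ Σ} w dH^{n−1} and B₁ is the open unit ball centered at the origin. -/
open MeasureTheory Metric Set
open scoped RealInnerProductSpace ENNReal NNReal Topology

noncomputable section

abbrev Euc (n : ℕ) := EuclideanSpace ℝ (Fin n)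

/-- `S` is an open convex cone with vertex at the origin. -/
def IsOpenConvexCone {n : ℕ} (S : Set (Euc n)) : Prop :=
  IsOpen S ∧ Convex ℝ S ∧ ∀ x ∈ S, ∀ t : ℝ, 0 < t → t • x ∈ S

/-- `w` is a continuous nonnegative weight on `closure S`, not identically zero,
positively `α`-homogeneous, with `w ^ (1/α)` concave on `S`. -/
def IsAdmissibleWeight {n : ℕ} (S : Set (Euc n)) (α : ℝ) (w : Euc n → ℝ) : Prop :=
  ContinuousOn w (closure S) ∧ (∀ x ∈ closure S, 0 ≤ w x) ∧
  (∃ x ∈ closure S, w x ≠ 0) ∧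
  (∀ x ∈ closure S, ∀ t : ℝ, 0 < t → w (t • x) = t ^ α * w x) ∧
  ConcaveOn ℝ S (fun x => w x ^ (1 / α))

/-- Weighted volume `w(E) = ∫_E w`. -/
def wVol {n : ℕ} (w : Euc n → ℝ) (E : Set (Euc n)) : ℝ≥0∞ :=
  ∫⁻ x in E, ENNReal.ofReal (w x)

/-- Weighted perimeter inside the cone: `∫_{∂E ∩ S} w dH^{n-1}`. -/
def wPer {n : ℕ} (S : Set (Euc n)) (w : Euc n → ℝ) (E : Set (Euc n)) : ℝ≥0∞ :=
  ∫⁻ x in frontier E ∩ S, ENNReal.ofReal (w x) ∂(μH[(n : ℝ) - 1])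

/-- `E` is an open set with smooth boundary, given by a smooth defining function. -/
def HasSmoothBoundary {n : ℕ} (E : Set (Euc n)) : Prop :=
  ∃ f : Euc n → ℝ, ContDiff ℝ (⊤ : ℕ∞) f ∧ E = {x | f x < 0} ∧
    frontier E = {x | f x = 0} ∧ ∀ x ∈ frontier E, fderiv ℝ f x ≠ 0

/-!
Write `B = B₁ ∩ Σ`, `D = n + α` and `V = w(E)`. Homogeneity together with concavity of `w^(1/α)`
yields the Brunn–Minkowski inequality `w(E + ε B)^(1/D) ≥ V^(1/D) + ε w(B)^(1/D)` inside the cone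
(through the Borell–Brascamp–Lieb inequality, by induction on the dimension). By Bernoulli, the
layer `(E + ε B) \ E` therefore has weighted volume at least `ε D V^((D-1)/D) w(B)^(1/D)`.

In the other direction, the layer has weighted volume at most `ε (Per_w(E) + o(1))`. Near a boundary
point in `Σ` the layer lies within distance `ε` of the boundary, and a chart with bi-Lipschitz
constants close to `1` flattens it to a slab of width `ε`. At a boundary point outside `Σ`, the cone
is contained in the half-space of directions pointing into `E`, so adding `ε B` moves such points
out of `E` by `o(ε)` only. Letting `ε → 0` gives `D V^((D-1)/D) w(B)^(1/D) ≤ Per_w(E)`.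

It remains to see that the sphere satisfies the reverse inequality `Per_w(B₁ ∩ Σ) ≤ D w(B)`. On a
small cap, central projection from the tangent hyperplane is a contraction, and integrating the
homogeneous weight over that hyperplane gives `D` times its integral over the truncated cone below.
-/

section BrunnMinkowski

open scoped Pointwise
open Filter

lemma volume_add_volume_le_of_isCompact {K L : Set ℝ} (hK : IsCompact K) (hL : IsCompact L)
    (hK₀ : K.Nonempty) (hL₀ : L.Nonempty) : volume K + volume L ≤ volume (K + L) := by
  -- The translates `sInf L + K` and `sSup K + L` meet only at `sSup K + sInf L`.
  have hsub : (sInf L +ᵥ K) ∪ (sSup K +ᵥ L) ⊆ K + L := by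
    rintro _ (⟨x, hx, rfl⟩ | ⟨y, hy, rfl⟩)
    · exact ⟨x, hx, sInf L, hL.sInf_mem hL₀, add_comm _ _⟩
    · exact ⟨sSup K, hK.sSup_mem hK₀, y, hy, rfl⟩
  have hdisj : AEDisjoint volume (sInf L +ᵥ K) (sSup K +ᵥ L) := by
    refine measure_mono_null (t := {sSup K + sInf L}) ?_ (by simp)
    rintro _ ⟨⟨x, hx, rfl⟩, ⟨y, hy, hxy⟩⟩
    have hx' : x ≤ sSup K := le_csSup hK.bddAbove hx
    have hy' : sInf L ≤ y := csInf_le hL.bddBelow hy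
    simp only [vadd_eq_add] at hxy
    simp only [vadd_eq_add, mem_singleton_iff]
    linarith
  calc volume K + volume L = volume ((sInf L +ᵥ K) ∪ (sSup K +ᵥ L)) := by
        rw [measure_union₀ (hL.measurableSet.const_vadd _).nullMeasurableSet hdisj,
          measure_vadd, measure_vadd]
    _ ≤ volume (K + L) := measure_mono hsub

lemma volume_add_volume_le {A B : Set ℝ} (hA : MeasurableSet A) (hB : MeasurableSet B)
    (hA₀ : A.Nonempty) (hB₀ : B.Nonempty) : volume A + volume B ≤ volume (A + B) := by
  obtain ⟨a, ha⟩ := hA₀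
  obtain ⟨b, hb⟩ := hB₀
  rw [hA.measure_eq_iSup_isCompact, hB.measure_eq_iSup_isCompact]
  simp only [iSup_and']
  refine ENNReal.biSup_add_biSup_le' ⟨∅, empty_subset _, isCompact_empty⟩
    ⟨∅, empty_subset _, isCompact_empty⟩ fun K hK L hL => ?_
  calc volume K + volume L ≤ volume (insert a K) + volume (insert b L) := by
        gcongr <;> exact subset_insert _ _
    _ ≤ volume (insert a K + insert b L) :=
        volume_add_volume_le_of_isCompact (hK.2.insert a) (hL.2.insert b) (insert_nonempty _ _)
          (insert_nonempty _ _)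
    _ ≤ volume (A + B) :=
        measure_mono (add_subset_add (insert_subset ha hK.1) (insert_subset hb hL.1))

lemma lintegral_eq_setLIntegral_Ioo_measure_lt {X : Type*} [MeasurableSpace X] {μ : Measure X}
    {u : X → ℝ≥0∞} (hu : Measurable u) (hu₁ : ∀ x, u x ≤ 1) :
    ∫⁻ x, u x ∂μ = ∫⁻ t in Ioo (0 : ℝ) 1, μ {x | ENNReal.ofReal t < u x} := by
  have hfin : ∀ x, u x ≠ ∞ := fun x => ne_top_of_le_ne_top ENNReal.one_ne_top (hu₁ x)
  have hlevel : ∀ t ∈ Ioi (0 : ℝ), μ {x | t < (u x).toReal} =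
      (Iio (1 : ℝ)).indicator (fun t => μ {x | ENNReal.ofReal t < u x}) t := by
    intro t ht
    by_cases ht₁ : t < 1
    · simp only [indicator_of_mem (mem_Iio.mpr ht₁),
        ENNReal.ofReal_lt_iff_lt_toReal (le_of_lt ht) (hfin _)]
    · have hle : ∀ x, (u x).toReal ≤ t := fun x =>
        (ENNReal.toReal_mono ENNReal.one_ne_top (hu₁ x)).trans (by simpa using ht₁)
      simp [indicator_of_notMem (notMem_Iio.mpr (not_lt.mp ht₁)), (hle _).not_gt]
  calc ∫⁻ x, u x ∂μ = ∫⁻ x, ENNReal.ofReal (u x).toReal ∂μ := by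
        simp only [ENNReal.ofReal_toReal (hfin _)]
    _ = ∫⁻ t in Ioi (0 : ℝ), μ {x | t < (u x).toReal} :=
        lintegral_eq_lintegral_meas_lt μ (ae_of_all _ fun x => ENNReal.toReal_nonneg)
          hu.ennreal_toReal.aemeasurable
    _ = ∫⁻ t in Ioo (0 : ℝ) 1, μ {x | ENNReal.ofReal t < u x} := by
        rw [setLIntegral_congr_fun measurableSet_Ioi hlevel,
          setLIntegral_indicator measurableSet_Iio, Iio_inter_Ioi]

lemma lintegral_add_lintegral_le_of_iSup_eq_one {f g h : ℝ → ℝ≥0∞} (hf : Measurable f)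
    (hg : Measurable g) (hh : Measurable h) (hf₁ : ⨆ x, f x = 1) (hg₁ : ⨆ x, g x = 1)
    (hfgh : ∀ x y, min (f x) (g y) ≤ h (x + y)) :
    (∫⁻ x, f x) + ∫⁻ x, g x ≤ ∫⁻ x, h x := by
  rw [lintegral_eq_setLIntegral_Ioo_measure_lt hf (fun x => hf₁ ▸ le_iSup f x),
    lintegral_eq_setLIntegral_Ioo_measure_lt hg (fun x => hg₁ ▸ le_iSup g x)]
  calc _ ≤ ∫⁻ t in Ioo (0 : ℝ) 1, (volume {x | ENNReal.ofReal t < f x} +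
          volume {x | ENNReal.ofReal t < g x}) := le_lintegral_add _ _
    _ ≤ ∫⁻ t in Ioo (0 : ℝ) 1, volume {x | ENNReal.ofReal t < min (h x) 1} := by
        refine setLIntegral_mono' measurableSet_Ioo fun t ht => ?_
        have ht₁ : ENNReal.ofReal t < 1 := by simpa using ht.2
        have nonempty : ∀ {u : ℝ → ℝ≥0∞}, ⨆ x, u x = 1 → {x | ENNReal.ofReal t < u x}.Nonempty :=
          fun hu => let ⟨x, hx⟩ := lt_iSup_iff.mp (ht₁.trans_eq hu.symm); ⟨x, hx⟩
        refine (volume_add_volume_le (measurableSet_lt measurable_const hf)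
          (measurableSet_lt measurable_const hg) (nonempty hf₁) (nonempty hg₁)).trans
          (measure_mono ?_)
        rintro _ ⟨x, hx, y, hy, rfl⟩
        exact lt_min ((lt_min hx hy).trans_le (hfgh x y)) ht₁
    _ = ∫⁻ x, min (h x) 1 :=
        (lintegral_eq_setLIntegral_Ioo_measure_lt (hh.min measurable_const)
          fun x => min_le_right _ _).symm
    _ ≤ ∫⁻ x, h x := lintegral_mono fun x => min_le_left _ _

lemma rpow_add_rpow_le_div_add_div_mul {α : ℝ} (hα : 0 < α) {F G a b : ℝ≥0∞} (ha : a ≠ 0)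
    (ha' : a ≠ ∞) (hb : b ≠ 0) (hb' : b ≠ ∞) :
    F ^ (1 / (α + 1)) + G ^ (1 / (α + 1)) ≤
      ((F / a + G / b) * (a ^ (1 / α) + b ^ (1 / α)) ^ α) ^ (1 / (α + 1)) := by
  have hconj : (α + 1).HolderConjugate ((α + 1) / α) := by
    rw [Real.holderConjugate_iff]
    exact ⟨by linarith, by field_simp; ring⟩
  have holder := ENNReal.inner_le_Lp_mul_Lq (Finset.univ : Finset (Fin 2))
    ![(F / a) ^ (1 / (α + 1)), (G / b) ^ (1 / (α + 1))]
    ![a ^ (1 / (α + 1)), b ^ (1 / (α + 1))] hconj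
  have hexp₁ : 1 / (α + 1) * (α + 1) = 1 := by field_simp
  have hexp₂ : 1 / (α + 1) * ((α + 1) / α) = 1 / α := by field_simp
  have hexp₃ : 1 / ((α + 1) / α) = α * (1 / (α + 1)) := by field_simp
  simp only [Fin.sum_univ_two, Matrix.cons_val_zero, Matrix.cons_val_one, ← ENNReal.rpow_mul,
    ← ENNReal.mul_rpow_of_nonneg _ _ (show 0 ≤ 1 / (α + 1) by positivity),
    ENNReal.div_mul_cancel ha ha', ENNReal.div_mul_cancel hb hb', hexp₁, hexp₂, hexp₃,
    ENNReal.rpow_one] at holder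
  rwa [ENNReal.mul_rpow_of_nonneg _ _ (by positivity), ← ENNReal.rpow_mul]

/-- The hypothesis of the Borell–Brascamp–Lieb inequality: `h ^ p` dominates the sup-convolution
of `f ^ p` and `g ^ p`, taken over points where neither `f` nor `g` vanishes. -/
def DominatesSupConv {X : Type*} [Add X] (p : ℝ) (f g h : X → ℝ≥0∞) : Prop :=
  ∀ x y, f x ≠ 0 → g y ≠ 0 → f x ^ p + g y ^ p ≤ h (x + y) ^ p

lemma DominatesSupConv.min_div_mul_le {X : Type*} [Add X] {α : ℝ} (hα : 0 < α) {f g h : X → ℝ≥0∞}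
    (hfgh : DominatesSupConv (1 / α) f g h) {a b : ℝ≥0∞} (ha : a ≠ 0) (hb : b ≠ 0) (x y : X) :
    min (f x / a) (g y / b) * (a ^ (1 / α) + b ^ (1 / α)) ^ α ≤ h (x + y) := by
  set t := min (f x / a) (g y / b)
  rcases eq_or_ne t 0 with ht₀ | ht₀
  · simp [ht₀]
  have hα' : 0 < 1 / α := by positivity
  have hfx : t * a ≤ f x := ENNReal.mul_le_of_le_div (min_le_left _ _)
  have hgy : t * b ≤ g y := ENNReal.mul_le_of_le_div (min_le_right _ _)
  rw [← ENNReal.rpow_le_rpow_iff hα']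
  calc (t * (a ^ (1 / α) + b ^ (1 / α)) ^ α) ^ (1 / α) = (t * a) ^ (1 / α) + (t * b) ^ (1 / α) := by
        simp only [ENNReal.mul_rpow_of_nonneg _ _ hα'.le]
        rw [← ENNReal.rpow_mul, mul_one_div_cancel hα.ne', ENNReal.rpow_one, mul_add]
    _ ≤ f x ^ (1 / α) + g y ^ (1 / α) := by gcongr
    _ ≤ h (x + y) ^ (1 / α) := hfgh x y
        (ne_bot_of_le_ne_bot (mul_ne_zero ht₀ ha) hfx)
        (ne_bot_of_le_ne_bot (mul_ne_zero ht₀ hb) hgy)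

lemma DominatesSupConv.lintegral_real_of_iSup_ne_top {α : ℝ} (hα : 0 < α) {f g h : ℝ → ℝ≥0∞}
    (hf : Measurable f) (hg : Measurable g) (hh : Measurable h)
    (hfgh : DominatesSupConv (1 / α) f g h) (hf₀ : ∫⁻ x, f x ≠ 0) (hg₀ : ∫⁻ x, g x ≠ 0)
    (hfb : ⨆ x, f x ≠ ∞) (hgb : ⨆ x, g x ≠ ∞) :
    (∫⁻ x, f x) ^ (1 / (α + 1)) + (∫⁻ x, g x) ^ (1 / (α + 1)) ≤ (∫⁻ x, h x) ^ (1 / (α + 1)) := by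
  have iSup_ne_zero : ∀ {u : ℝ → ℝ≥0∞}, ∫⁻ x, u x ≠ 0 → ⨆ x, u x ≠ 0 := fun hu hsup =>
    hu (by simp [ENNReal.iSup_eq_zero.mp hsup])
  set a := ⨆ x, f x
  set b := ⨆ x, g x
  set c := (a ^ (1 / α) + b ^ (1 / α)) ^ α with hc
  have ha : a ≠ 0 := iSup_ne_zero hf₀
  have hb : b ≠ 0 := iSup_ne_zero hg₀
  have hc₀ : c ≠ 0 := by simp [hc, ha, hfb, hα.not_gt, hα]
  have hct : c ≠ ∞ := by simp [hc, hα, ha, hfb, hgb, hα.not_gt]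
  refine (rpow_add_rpow_le_div_add_div_mul hα ha hfb hb hgb).trans ?_
  gcongr
  rw [← ENNReal.le_div_iff_mul_le (Or.inl hc₀) (Or.inl hct)]
  have normalized : (∫⁻ x, f x / a) + ∫⁻ x, g x / b ≤ ∫⁻ x, h x / c :=
    lintegral_add_lintegral_le_of_iSup_eq_one (hf.div_const a) (hg.div_const b) (hh.div_const c)
      (by rw [← ENNReal.iSup_div, ENNReal.div_self ha hfb])
      (by rw [← ENNReal.iSup_div, ENNReal.div_self hb hgb])
      fun x y => (ENNReal.le_div_iff_mul_le (Or.inl hc₀) (Or.inl hct)).mpr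
        (hfgh.min_div_mul_le hα ha hb x y)
  simpa only [div_eq_mul_inv, lintegral_mul_const _ hf, lintegral_mul_const _ hg,
    lintegral_mul_const _ hh] using normalized

lemma tendsto_lintegral_min_natCast {X : Type*} [MeasurableSpace X] {μ : Measure X}
    {u : X → ℝ≥0∞} (hu : Measurable u) :
    Tendsto (fun k : ℕ => ∫⁻ x, min (u x) k ∂μ) atTop (𝓝 (∫⁻ x, u x ∂μ)) := by
  refine lintegral_tendsto_of_tendsto_of_monotone
    (fun k => (hu.min measurable_const).aemeasurable)
    (ae_of_all _ fun x i j hij => min_le_min le_rfl (by exact_mod_cast hij))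
    (ae_of_all _ fun x => ?_)
  simpa using (tendsto_const_nhds (x := u x)).min ENNReal.tendsto_nat_nhds_top

lemma DominatesSupConv.lintegral_real {α : ℝ} (hα : 0 < α) {f g h : ℝ → ℝ≥0∞}
    (hf : Measurable f) (hg : Measurable g) (hh : Measurable h)
    (hfgh : DominatesSupConv (1 / α) f g h) (hf₀ : ∫⁻ x, f x ≠ 0) (hg₀ : ∫⁻ x, g x ≠ 0) :
    (∫⁻ x, f x) ^ (1 / (α + 1)) + (∫⁻ x, g x) ^ (1 / (α + 1)) ≤ (∫⁻ x, h x) ^ (1 / (α + 1)) := by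
  have iSup_ne_top : ∀ (u : ℝ → ℝ≥0∞) (k : ℕ), ⨆ x, min (u x) (k : ℝ≥0∞) ≠ ∞ := fun u k =>
    ne_top_of_le_ne_top (ENNReal.natCast_ne_top k) (iSup_le fun x => min_le_right _ _)
  have rpow_continuous := ENNReal.continuous_rpow_const (y := 1 / (α + 1))
  refine le_of_tendsto
    (((rpow_continuous.tendsto _).comp (tendsto_lintegral_min_natCast hf)).add
      ((rpow_continuous.tendsto _).comp (tendsto_lintegral_min_natCast hg))) ?_
  filter_upwards [(tendsto_lintegral_min_natCast hf).eventually_ne hf₀,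
    (tendsto_lintegral_min_natCast hg).eventually_ne hg₀] with k hfk hgk
  refine DominatesSupConv.lintegral_real_of_iSup_ne_top hα (hf.min measurable_const)
    (hg.min measurable_const) hh (fun x y hx hy => ?_) hfk hgk (iSup_ne_top f k) (iSup_ne_top g k)
  calc min (f x) (k : ℝ≥0∞) ^ (1 / α) + min (g y) (k : ℝ≥0∞) ^ (1 / α)
      ≤ f x ^ (1 / α) + g y ^ (1 / α) := by gcongr <;> exact min_le_left _ _
    _ ≤ h (x + y) ^ (1 / α) :=
        hfgh x y (fun h₀ => hx (by simp [h₀])) fun h₀ => hy (by simp [h₀])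

end BrunnMinkowski

section Coordinates

open scoped Pointwise

variable {m : ℕ}

/-- The point `(t, z)` of `ℝ × ℝᵐ`, as a point of `ℝ^(m+1)`. -/
def consEuc (t : ℝ) (z : Euc m) : Euc (m + 1) := WithLp.toLp 2 (Fin.cons t z.ofLp)

@[simp] lemma consEuc_apply_zero (t : ℝ) (z : Euc m) : consEuc t z 0 = t := by simp [consEuc]

lemma consEuc_add (s t : ℝ) (y z : Euc m) :
    consEuc (s + t) (y + z) = consEuc s y + consEuc t z := by
  ext i
  refine Fin.cases ?_ (fun j => ?_) i <;> simp [consEuc]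

lemma consEuc_smul (r t : ℝ) (z : Euc m) : consEuc (r * t) (r • z) = r • consEuc t z := by
  ext i
  refine Fin.cases ?_ (fun j => ?_) i <;> simp [consEuc]

lemma measurePreserving_consEuc :
    MeasurePreserving (fun p : ℝ × Euc m => consEuc p.1 p.2) volume volume := by
  have split := (volume_preserving_piFinSuccAbove (fun _ : Fin (m + 1) => ℝ) 0).symm.comp
    ((MeasurePreserving.id (volume : Measure ℝ)).prod (PiLp.volume_preserving_ofLp (Fin m)))
  have hcons : (fun p : ℝ × Euc m => consEuc p.1 p.2) = WithLp.toLp 2 ∘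
      (MeasurableEquiv.piFinSuccAbove (fun _ : Fin (m + 1) => ℝ) 0).symm ∘
        Prod.map id WithLp.ofLp := by
    funext p
    ext i
    refine Fin.cases ?_ (fun j => ?_) i <;>
      simp [consEuc, MeasurableEquiv.piFinSuccAbove_symm_apply]
  rw [hcons]
  exact (PiLp.volume_preserving_toLp (Fin (m + 1))).comp split

lemma continuous_consEuc : Continuous fun p : ℝ × Euc m => consEuc p.1 p.2 := by
  refine (PiLp.continuous_toLp 2 _).comp (continuous_pi fun i => ?_)
  refine Fin.cases ?_ (fun j => ?_) i
  · simpa using continuous_fst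
  · simp only [Fin.cons_succ]
    fun_prop

lemma isometry_consEuc (t : ℝ) : Isometry (consEuc t : Euc m → Euc (m + 1)) :=
  Isometry.of_dist_eq fun x y => by simp [EuclideanSpace.dist_eq, consEuc, Fin.sum_univ_succ]

lemma range_consEuc (t : ℝ) : range (consEuc t : Euc m → Euc (m + 1)) = {y | y 0 = t} := by
  ext y
  refine ⟨?_, fun hy => ⟨WithLp.toLp 2 (Fin.tail y.ofLp), ?_⟩⟩
  · rintro ⟨z, rfl⟩
    exact consEuc_apply_zero t z
  · subst hy
    simp only [consEuc]
    exact congrArg (WithLp.toLp 2) (Fin.cons_self_tail y.ofLp)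

lemma lintegral_eq_lintegral_consEuc {f : Euc (m + 1) → ℝ≥0∞} (hf : Measurable f) :
    ∫⁻ x, f x = ∫⁻ t, ∫⁻ z, f (consEuc t z) := by
  rw [← measurePreserving_consEuc.lintegral_comp hf]
  exact lintegral_prod _ (hf.comp continuous_consEuc.measurable).aemeasurable

lemma measurable_lintegral_consEuc {f : Euc (m + 1) → ℝ≥0∞} (hf : Measurable f) :
    Measurable fun t => ∫⁻ z : Euc m, f (consEuc t z) :=
  (hf.comp continuous_consEuc.measurable).lintegral_prod_right'

end Coordinates

theorem DominatesSupConv.lintegral {n : ℕ} {α : ℝ} (hα : 0 < α) {f g h : Euc n → ℝ≥0∞}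
    (hf : Measurable f) (hg : Measurable g) (hh : Measurable h)
    (hfgh : DominatesSupConv (1 / α) f g h) (hf₀ : ∫⁻ x, f x ≠ 0) (hg₀ : ∫⁻ x, g x ≠ 0) :
    (∫⁻ x, f x) ^ (1 / (n + α)) + (∫⁻ x, g x) ^ (1 / (n + α)) ≤ (∫⁻ x, h x) ^ (1 / (n + α)) := by
  induction n with
  | zero =>
    have eval : ∀ u : Euc 0 → ℝ≥0∞, ∫⁻ x, u x = u 0 := fun u => by
      rw [volume_euclideanSpace_eq_dirac, lintegral_dirac]
    simp only [eval] at hf₀ hg₀ ⊢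
    simpa using hfgh 0 0 hf₀ hg₀
  | succ n ih =>
    rw [lintegral_eq_lintegral_consEuc hf] at hf₀
    rw [lintegral_eq_lintegral_consEuc hg] at hg₀
    rw [lintegral_eq_lintegral_consEuc hf, lintegral_eq_lintegral_consEuc hg,
      lintegral_eq_lintegral_consEuc hh]
    have slice : ∀ {u : Euc (n + 1) → ℝ≥0∞}, Measurable u → ∀ t, Measurable (u <| consEuc t ·) :=
      fun hu t => hu.comp (isometry_consEuc t).continuous.measurable
    have slices : DominatesSupConv (1 / (n + α)) (fun t => ∫⁻ z, f (consEuc t z))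
        (fun t => ∫⁻ z, g (consEuc t z)) fun t => ∫⁻ z, h (consEuc t z) := fun s t hs ht =>
      ih (slice hf s) (slice hg t) (slice hh (s + t))
        (fun y z hy hz => consEuc_add s t y z ▸ hfgh _ _ hy hz) hs ht
    rw [show ((n + 1 : ℕ) : ℝ) + α = n + α + 1 by push_cast; ring]
    exact slices.lintegral_real (by positivity) (measurable_lintegral_consEuc hf)
      (measurable_lintegral_consEuc hg) (measurable_lintegral_consEuc hh) hf₀ hg₀

section ConeWeights

open scoped Pointwise

variable {n : ℕ} {S : Set (Euc n)} {α : ℝ} {w W : Euc n → ℝ}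

lemma IsOpenConvexCone.add_mem (hS : IsOpenConvexCone S) {x y : Euc n} (hx : x ∈ S)
    (hy : y ∈ S) : x + y ∈ S := by
  have hmid : (1 / 2 : ℝ) • x + (1 / 2 : ℝ) • y ∈ S :=
    hS.2.1 hx hy (by norm_num) (by norm_num) (by norm_num)
  simpa [← smul_add, smul_smul] using hS.2.2 _ hmid 2 two_pos

lemma IsOpenConvexCone.smul_subset (hS : IsOpenConvexCone S) {A : Set (Euc n)} (hA : A ⊆ S)
    {t : ℝ} (ht : 0 < t) : t • A ⊆ S := by
  rintro _ ⟨a, ha, rfl⟩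
  exact hS.2.2 a (hA ha) t ht

lemma IsOpenConvexCone.exists_subset_smul_ball (hS : IsOpenConvexCone S) {E : Set (Euc n)}
    (hES : E ⊆ S) (hE : Bornology.IsBounded E) : ∃ r : ℝ, 0 < r ∧ E ⊆ r • (ball 0 1 ∩ S) := by
  obtain ⟨r, hr, hEr⟩ := hE.subset_ball_lt 0 0
  refine ⟨r, hr, fun x hx => (mem_smul_set_iff_inv_smul_mem₀ hr.ne' _ _).mpr
    ⟨?_, hS.2.2 x (hES hx) _ (inv_pos.mpr hr)⟩⟩
  rw [← mem_smul_set_iff_inv_smul_mem₀ hr.ne', smul_unitBall_of_pos hr]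
  exact hEr hx

/-- A weight on all of `ℝⁿ` that is admissible in the cone `S`: continuous and nonnegative, and on
`S` positively `α`-homogeneous with `W ^ (1/α)` superadditive. For homogeneous weights the latter
is the same as concavity of `W ^ (1/α)`. -/
structure IsConeWeight (S : Set (Euc n)) (α : ℝ) (W : Euc n → ℝ) : Prop where
  continuous : Continuous W
  nonneg : ∀ x, 0 ≤ W x
  map_smul : ∀ x ∈ S, ∀ t : ℝ, 0 < t → W (t • x) = t ^ α * W x
  rpow_add_rpow_le : ∀ x ∈ S, ∀ y ∈ S, W x ^ (1 / α) + W y ^ (1 / α) ≤ W (x + y) ^ (1 / α)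

lemma IsAdmissibleWeight.rpow_add_rpow_le (hw : IsAdmissibleWeight S α w)
    (hS : IsOpenConvexCone S) (hα : 0 < α) {x y : Euc n} (hx : x ∈ S) (hy : y ∈ S) :
    w x ^ (1 / α) + w y ^ (1 / α) ≤ w (x + y) ^ (1 / α) := by
  obtain ⟨-, hnonneg, -, hhom, hconc⟩ := hw
  have hxy := subset_closure (hS.add_mem hx hy)
  have hmid : (1 / 2) * w x ^ (1 / α) + (1 / 2) * w y ^ (1 / α) ≤
      w ((1 / 2 : ℝ) • (x + y)) ^ (1 / α) := by
    simpa only [smul_eq_mul, smul_add] using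
      hconc.2 hx hy one_half_pos.le one_half_pos.le (add_halves 1)
  rw [hhom _ hxy _ one_half_pos, Real.mul_rpow (by positivity) (hnonneg _ hxy),
    ← Real.rpow_mul (by norm_num), mul_one_div_cancel hα.ne', Real.rpow_one] at hmid
  linarith

lemma IsAdmissibleWeight.exists_isConeWeight (hw : IsAdmissibleWeight S α w)
    (hS : IsOpenConvexCone S) (hα : 0 < α) : ∃ W, IsConeWeight S α W ∧ EqOn W w S := by
  obtain ⟨g, hg⟩ := ContinuousMap.exists_restrict_eq isClosed_closure
    ⟨_, continuousOn_iff_continuous_domRestrict.mp hw.1⟩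
  set W : Euc n → ℝ := fun x => max (g x) 0
  have hWw : EqOn W w S := fun x hx => by
    have hgx : g x = w x := congrArg (fun φ => φ ⟨x, subset_closure hx⟩) hg
    simpa only [W, hgx] using max_eq_left (hw.2.1 x (subset_closure hx))
  refine ⟨W, ⟨by fun_prop, fun x => le_max_right _ _, fun x hx t ht => ?_, fun x hx y hy => ?_⟩,
    hWw⟩
  · rw [hWw hx, hWw (hS.2.2 x hx t ht)]
    exact hw.2.2.2.1 x (subset_closure hx) t ht
  · rw [hWw hx, hWw hy, hWw (hS.add_mem hx hy)]
    exact hw.rpow_add_rpow_le hS hα hx hy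

lemma wVol_eq_lintegral_indicator {A : Set (Euc n)} (hA : MeasurableSet A) :
    wVol W A = ∫⁻ x, A.indicator (fun x => ENNReal.ofReal (W x)) x :=
  (lintegral_indicator hA _).symm

lemma wVol_ne_top (hW : Continuous W) {A : Set (Euc n)} (hA : Bornology.IsBounded A) :
    wVol W A ≠ ∞ := by
  obtain ⟨C, hC⟩ := hA.isCompact_closure.exists_bound_of_continuousOn hW.continuousOn
  refine ne_top_of_le_ne_top (b := ∫⁻ _ in closure A, ENNReal.ofReal C) ?_
    ((lintegral_mono_set subset_closure).trans (setLIntegral_mono measurable_const fun _ hx =>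
      ENNReal.ofReal_le_ofReal ((le_abs_self _).trans (hC _ hx))))
  rw [setLIntegral_const]
  exact ENNReal.mul_ne_top ENNReal.ofReal_ne_top hA.isCompact_closure.measure_lt_top.ne

lemma lintegral_eq_mul_lintegral_comp_smul {F : Euc n → ℝ≥0∞} (hF : Measurable F) {t : ℝ}
    (ht : 0 < t) : ∫⁻ x, F x = ENNReal.ofReal (t ^ n) * ∫⁻ x, F (t • x) := by
  have hmap := Measure.map_addHaar_smul (volume : Measure (Euc n)) ht.ne'
  rw [finrank_euclideanSpace_fin, abs_of_pos (by positivity)] at hmap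
  rw [← lintegral_map hF (measurable_const_smul t), hmap, lintegral_smul_measure, smul_eq_mul,
    ← mul_assoc, ← ENNReal.ofReal_mul (by positivity), mul_inv_cancel₀ (by positivity),
    ENNReal.ofReal_one, one_mul]

lemma IsConeWeight.wVol_smul (hW : IsConeWeight S α W) {A : Set (Euc n)} (hA : MeasurableSet A)
    (hAS : A ⊆ S) {t : ℝ} (ht : 0 < t) :
    wVol W (t • A) = ENNReal.ofReal (t ^ (n + α)) * wVol W A := by
  have htA : MeasurableSet (t • A) := hA.const_smul₀ t
  have hWm : Measurable fun x => ENNReal.ofReal (W x) := hW.continuous.measurable.ennreal_ofReal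
  have hpull : ∀ x, (t • A).indicator (fun x => ENNReal.ofReal (W x)) (t • x) =
      ENNReal.ofReal (t ^ α) * A.indicator (fun x => ENNReal.ofReal (W x)) x := fun x => by
    by_cases hx : x ∈ A
    · rw [indicator_of_mem (smul_mem_smul_set hx), indicator_of_mem hx,
        hW.map_smul x (hAS hx) t ht, ENNReal.ofReal_mul (by positivity)]
    · rw [indicator_of_notMem hx, indicator_of_notMem, mul_zero]
      rwa [smul_mem_smul_set_iff₀ ht.ne']
  rw [wVol_eq_lintegral_indicator htA, wVol_eq_lintegral_indicator hA,
    lintegral_eq_mul_lintegral_comp_smul (hWm.indicator htA) ht, lintegral_congr hpull,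
    lintegral_const_mul _ (hWm.indicator hA), Real.rpow_add ht, Real.rpow_natCast,
    ENNReal.ofReal_mul (by positivity), mul_assoc]

lemma IsConeWeight.wVol_ball_ne_zero (hW : IsConeWeight S α W) (hS : IsOpenConvexCone S)
    {E : Set (Euc n)} (hES : E ⊆ S) (hE : Bornology.IsBounded E) (hE₀ : wVol W E ≠ 0) :
    wVol W (ball 0 1 ∩ S) ≠ 0 := by
  obtain ⟨r, hr, hEr⟩ := hS.exists_subset_smul_ball hES hE
  refine fun hball => hE₀ (nonpos_iff_eq_zero.mp ((lintegral_mono_set hEr).trans_eq ?_))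
  exact (hW.wVol_smul (measurableSet_ball.inter hS.1.measurableSet) inter_subset_right hr).trans
    (by rw [hball, mul_zero])

theorem IsConeWeight.wVol_rpow_add_le (hW : IsConeWeight S α W) (hα : 0 < α) {A B : Set (Euc n)}
    (hA : IsOpen A) (hB : IsOpen B) (hAS : A ⊆ S) (hBS : B ⊆ S) (hA₀ : wVol W A ≠ 0)
    (hB₀ : wVol W B ≠ 0) :
    wVol W A ^ (1 / (n + α)) + wVol W B ^ (1 / (n + α)) ≤ wVol W (A + B) ^ (1 / (n + α)) := by
  have hmeas : ∀ {C : Set (Euc n)}, IsOpen C →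
      Measurable (C.indicator fun x => ENNReal.ofReal (W x)) := fun hC =>
    hW.continuous.measurable.ennreal_ofReal.indicator hC.measurableSet
  have hAB : IsOpen (A + B) := hA.add_right
  rw [wVol_eq_lintegral_indicator hA.measurableSet] at hA₀ ⊢
  rw [wVol_eq_lintegral_indicator hB.measurableSet] at hB₀ ⊢
  rw [wVol_eq_lintegral_indicator hAB.measurableSet]
  refine DominatesSupConv.lintegral hα (hmeas hA) (hmeas hB) (hmeas hAB) ?_ hA₀ hB₀
  intro x y hx hy
  have hxA : x ∈ A := mem_of_indicator_ne_zero hx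
  have hyB : y ∈ B := mem_of_indicator_ne_zero hy
  have hα' : 0 ≤ 1 / α := by positivity
  rw [indicator_of_mem hxA, indicator_of_mem hyB, indicator_of_mem (add_mem_add hxA hyB)]
  simp only [ENNReal.ofReal_rpow_of_nonneg (hW.nonneg _) hα']
  rw [← ENNReal.ofReal_add (Real.rpow_nonneg (hW.nonneg _) _) (Real.rpow_nonneg (hW.nonneg _) _)]
  exact ENNReal.ofReal_le_ofReal (hW.rpow_add_rpow_le _ (hAS hxA) _ (hBS hyB))

lemma rpow_add_mul_rpow_sub_one_mul_le {p : ℝ} (hp : 1 ≤ p) {v : ℝ≥0∞} (hv : v ≠ 0) (u : ℝ≥0∞) :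
    v ^ p + ENNReal.ofReal p * v ^ (p - 1) * u ≤ (v + u) ^ p := by
  have hp₀ : 0 < p := by linarith
  rcases eq_or_ne v ∞ with rfl | hvt
  · simp [hp₀]
  rcases eq_or_ne u ∞ with rfl | hut
  · simp [hp₀]
  lift v to ℝ≥0 using hvt
  lift u to ℝ≥0 using hut
  have hv₀ : (0 : ℝ) < v := by exact_mod_cast pos_iff_ne_zero.mpr (by exact_mod_cast hv)
  have bernoulli : (v : ℝ) ^ p + p * (v : ℝ) ^ (p - 1) * u ≤ ((v : ℝ) + u) ^ p :=
    calc (v : ℝ) ^ p + p * (v : ℝ) ^ (p - 1) * u = (v : ℝ) ^ p * (1 + p * (u / v)) := by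
          rw [Real.rpow_sub_one hv₀.ne']
          ring
      _ ≤ (v : ℝ) ^ p * (1 + u / v) ^ p := by
          gcongr
          exact one_add_mul_self_le_rpow_one_add
            (by linarith [show 0 ≤ (u : ℝ) / v by positivity]) hp
      _ = ((v : ℝ) + u) ^ p := by
          rw [← Real.mul_rpow hv₀.le (by positivity), mul_add, mul_one, mul_div_cancel₀ _ hv₀.ne']
  have hcoe : ENNReal.ofReal p = (p.toNNReal : ℝ≥0∞) := rfl
  rw [hcoe, ← ENNReal.coe_rpow_of_nonneg _ hp₀.le,
    ← ENNReal.coe_rpow_of_nonneg _ (sub_nonneg.mpr hp), ← ENNReal.coe_add,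
    ← ENNReal.coe_rpow_of_nonneg _ hp₀.le]
  norm_cast
  rw [← NNReal.coe_le_coe]
  simpa [Real.coe_toNNReal p hp₀.le] using bernoulli

theorem IsConeWeight.wVol_rpow_add_ofReal_mul_le (hW : IsConeWeight S α W)
    (hS : IsOpenConvexCone S) (hα : 0 < α) {E B : Set (Euc n)} (hE : IsOpen E) (hB : IsOpen B)
    (hES : E ⊆ S) (hBS : B ⊆ S) (hE₀ : wVol W E ≠ 0) (hB₀ : wVol W B ≠ 0) {ε : ℝ} (hε : 0 < ε) :
    wVol W E ^ (1 / (n + α)) + ENNReal.ofReal ε * wVol W B ^ (1 / (n + α)) ≤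
      wVol W (E + ε • B) ^ (1 / (n + α)) := by
  have hD₀ : 0 < n + α := by positivity
  have hscale : wVol W (ε • B) = ENNReal.ofReal (ε ^ (n + α)) * wVol W B :=
    hW.wVol_smul hB.measurableSet hBS hε
  have hεB₀ : wVol W (ε • B) ≠ 0 := by
    rw [hscale]
    exact mul_ne_zero (ENNReal.ofReal_pos.mpr (by positivity)).ne' hB₀
  have hadd := hW.wVol_rpow_add_le hα hE (hB.smul₀ hε.ne') hES (hS.smul_subset hBS hε) hE₀ hεB₀
  rwa [hscale, ENNReal.mul_rpow_of_nonneg _ _ (by positivity),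
    ENNReal.ofReal_rpow_of_nonneg (by positivity) (by positivity), ← Real.rpow_mul hε.le,
    mul_one_div_cancel hD₀.ne', Real.rpow_one] at hadd

theorem IsConeWeight.ofReal_mul_le_wVol_diff (hW : IsConeWeight S α W) (hS : IsOpenConvexCone S)
    (hα : 0 < α) (hD : 1 ≤ n + α) {E B : Set (Euc n)} (hE : IsOpen E) (hB : IsOpen B)
    (hES : E ⊆ S) (hBS : B ⊆ S) (hE₀ : wVol W E ≠ 0) (hEt : wVol W E ≠ ∞) {ε : ℝ} (hε : 0 < ε) :
    ENNReal.ofReal ε * (ENNReal.ofReal (n + α) * wVol W E ^ ((n + α - 1) / (n + α)) *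
      wVol W B ^ (1 / (n + α))) ≤ wVol W ((E + ε • B) \ E) := by
  rcases eq_or_ne (wVol W B) 0 with hB₀ | hB₀
  · have hD₀ : 0 < n + α := by positivity
    simp [hB₀, hD₀]
  have brunn_minkowski := hW.wVol_rpow_add_ofReal_mul_le hS hα hE hB hES hBS hE₀ hB₀ hε
  set D : ℝ := n + α
  set V := wVol W E
  set U := wVol W B
  have hD₀ : 0 < D := by linarith
  refine (ENNReal.add_le_add_iff_left hEt).mp ?_
  calc V + ENNReal.ofReal ε * (ENNReal.ofReal D * V ^ ((D - 1) / D) * U ^ (1 / D))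
      = (V ^ (1 / D)) ^ D +
          ENNReal.ofReal D * (V ^ (1 / D)) ^ (D - 1) * (ENNReal.ofReal ε * U ^ (1 / D)) := by
        rw [← ENNReal.rpow_mul, ← ENNReal.rpow_mul, one_div_mul_cancel hD₀.ne', ENNReal.rpow_one,
          one_div_mul_eq_div]
        ring
    _ ≤ (V ^ (1 / D) + ENNReal.ofReal ε * U ^ (1 / D)) ^ D :=
        rpow_add_mul_rpow_sub_one_mul_le hD (by simp [ENNReal.rpow_eq_zero_iff, hE₀, hEt]) _
    _ ≤ (wVol W (E + ε • B) ^ (1 / D)) ^ D := by gcongr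
    _ = wVol W (E + ε • B) := by
        rw [← ENNReal.rpow_mul, one_div_mul_cancel hD₀.ne', ENNReal.rpow_one]
    _ ≤ wVol W (E ∪ ((E + ε • B) \ E)) := by
        rw [union_sdiff_self]
        exact lintegral_mono_set subset_union_right
    _ ≤ V + wVol W ((E + ε • B) \ E) := lintegral_union_le _ _ _

end ConeWeights

section LipschitzMaps

variable {X Y : Type*} [EMetricSpace X] [MeasurableSpace X] [BorelSpace X] [EMetricSpace Y]
  [MeasurableSpace Y] [BorelSpace Y] {K : ℝ≥0} {d : ℕ}

lemma euclideanHausdorffMeasure_image_le_of_lipschitzOnWith {f : X → Y} {A : Set X}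
    (hf : LipschitzOnWith K f A) : μHE[d] (f '' A) ≤ (K : ℝ≥0∞) ^ d * μHE[d] A := by
  simp only [Measure.euclideanHausdorffMeasure_def, Measure.smul_apply, ENNReal.smul_def,
    smul_eq_mul]
  rw [mul_left_comm, ← ENNReal.rpow_natCast]
  gcongr
  exact hf.hausdorffMeasure_image_le (Nat.cast_nonneg d)

lemma setLIntegral_preimage_homeomorph_le (Φ : X ≃ₜ Y) (hΦ : LipschitzWith K Φ.symm)
    (F : Y → ℝ≥0∞) (A : Set Y) :
    ∫⁻ x in Φ ⁻¹' A, F (Φ x) ∂μHE[d] ≤ (K : ℝ≥0∞) ^ d * ∫⁻ y in A, F y ∂μHE[d] := by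
  have map_le : (μHE[d] : Measure X).map Φ.toMeasurableEquiv ≤ (K : ℝ≥0∞) ^ d • μHE[d] := by
    refine Measure.le_iff.mpr fun s _ => ?_
    rw [MeasurableEquiv.map_apply, Homeomorph.toMeasurableEquiv_coe, ← Φ.image_symm,
      Measure.smul_apply, smul_eq_mul]
    exact euclideanHausdorffMeasure_image_le_of_lipschitzOnWith hΦ.lipschitzOnWith
  calc ∫⁻ x in Φ ⁻¹' A, F (Φ x) ∂μHE[d]
      = ∫⁻ y in A, F y ∂(μHE[d] : Measure X).map Φ.toMeasurableEquiv := by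
        rw [MeasurableEquiv.restrict_map, lintegral_map_equiv, Homeomorph.toMeasurableEquiv_coe]
    _ ≤ ∫⁻ y in A, F y ∂((K : ℝ≥0∞) ^ d • μHE[d]) := by gcongr
    _ = (K : ℝ≥0∞) ^ d * ∫⁻ y in A, F y ∂μHE[d] := by
        rw [Measure.restrict_smul, lintegral_smul_measure, smul_eq_mul]

lemma setLIntegral_range_le_of_lipschitzWith {f : X → Y} (hf : LipschitzWith K f) {F : Y → ℝ≥0∞}
    (hF : Measurable F) :
    ∫⁻ y in range f, F y ∂μHE[d] ≤ (K : ℝ≥0∞) ^ d * ∫⁻ x, F (f x) ∂μHE[d] := by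
  have restrict_le : (μHE[d] : Measure Y).restrict (range f) ≤
      (K : ℝ≥0∞) ^ d • (μHE[d] : Measure X).map f := by
    refine Measure.le_iff.mpr fun s hs => ?_
    rw [Measure.restrict_apply hs, ← image_preimage_eq_inter_range, Measure.smul_apply,
      Measure.map_apply hf.continuous.measurable hs, smul_eq_mul]
    exact euclideanHausdorffMeasure_image_le_of_lipschitzOnWith hf.lipschitzOnWith
  calc ∫⁻ y in range f, F y ∂μHE[d]
      ≤ ∫⁻ y, F y ∂((K : ℝ≥0∞) ^ d • (μHE[d] : Measure X).map f) :=
        lintegral_mono' restrict_le le_rfl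
    _ = (K : ℝ≥0∞) ^ d * ∫⁻ x, F (f x) ∂μHE[d] := by
        rw [lintegral_smul_measure, lintegral_map hF hf.continuous.measurable, smul_eq_mul]

end LipschitzMaps

section OuterContent

open Filter
open scoped Pointwise

lemma limsup_sum_le {ι β : Type*} {l : Filter β} (s : Finset ι) (u : ι → β → ℝ≥0∞) :
    limsup (fun x => ∑ i ∈ s, u i x) l ≤ ∑ i ∈ s, limsup (u i) l := by
  have add_le : ∀ v w : β → ℝ≥0∞, limsup (fun x => v x + w x) l ≤ limsup v l + limsup w l := by
    refine fun v w => ENNReal.le_of_forall_pos_le_add fun δ hδ hfin => ?_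
    have hδ' : ((δ / 2 : ℝ≥0) : ℝ≥0∞) ≠ 0 := by simpa using hδ.ne'
    obtain ⟨hv, hw⟩ := ENNReal.add_lt_top.mp hfin
    refine limsup_le_of_le (h := ?_)
    filter_upwards [eventually_lt_of_limsup_lt (ENNReal.lt_add_right hv.ne hδ'),
      eventually_lt_of_limsup_lt (ENNReal.lt_add_right hw.ne hδ')] with x hvx hwx
    calc v x + w x ≤ limsup v l + (δ / 2 : ℝ≥0) + (limsup w l + (δ / 2 : ℝ≥0)) :=
          add_le_add hvx.le hwx.le
      _ = limsup v l + limsup w l + δ := by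
        rw [add_add_add_comm, ← ENNReal.coe_add, add_halves]
  classical
  induction s using Finset.induction_on with
  | empty => simpa using (limsup_const_bot (α := ℝ≥0∞) (f := l)).le
  | insert i s hi ih =>
    simp only [Finset.sum_insert hi]
    exact (add_le _ _).trans (add_le_add_right ih _)

variable {n : ℕ}

/-- The `g`-weighted outer Minkowski content of `E` relative to the gauge body `B`: the rate at
which the layer `(E + ε B) \ E` gains weighted volume as `ε → 0⁺`. -/
def outerContent (g : Euc n → ℝ) (E B : Set (Euc n)) : ℝ≥0∞ :=
  limsup (fun ε : ℝ => wVol g ((E + ε • B) \ E) / ENNReal.ofReal ε) (𝓝[>] 0)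

lemma IsConeWeight.le_outerContent {S E B : Set (Euc n)} {α : ℝ} {W : Euc n → ℝ}
    (hW : IsConeWeight S α W) (hS : IsOpenConvexCone S) (hα : 0 < α) (hD : 1 ≤ n + α)
    (hE : IsOpen E) (hB : IsOpen B) (hES : E ⊆ S) (hBS : B ⊆ S) (hE₀ : wVol W E ≠ 0)
    (hEt : wVol W E ≠ ∞) :
    ENNReal.ofReal (n + α) * wVol W E ^ ((n + α - 1) / (n + α)) * wVol W B ^ (1 / (n + α)) ≤
      outerContent W E B := by
  refine le_limsup_of_frequently_le (Eventually.frequently ?_)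
  filter_upwards [self_mem_nhdsWithin] with ε hε
  rw [ENNReal.le_div_iff_mul_le (by simp [mem_Ioi.mp hε]) (by simp), mul_comm]
  exact hW.ofReal_mul_le_wVol_diff hS hα hD hE hB hES hBS hE₀ hEt hε

end OuterContent

section Slabs

open Filter

variable {m : ℕ} {g : Euc (m + 1) → ℝ}

/-- The `g`-weighted `m`-dimensional area of `A` in `ℝ^(m+1)`. It uses the Hausdorff measure `μHE`
that is normalised to agree with Lebesgue measure on `m`-dimensional subspaces. -/
def wArea (g : Euc (m + 1) → ℝ) (A : Set (Euc (m + 1))) : ℝ≥0∞ :=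
  ∫⁻ x in A, ENNReal.ofReal (g x) ∂μHE[m]

lemma setLIntegral_apply_zero_eq (t : ℝ) (F : Euc (m + 1) → ℝ≥0∞) :
    ∫⁻ y in {y | y 0 = t}, F y ∂μHE[m] = ∫⁻ z, F (consEuc t z) := by
  rw [← range_consEuc, ← (isometry_consEuc t).map_euclideanHausdorffMeasure,
    (isometry_consEuc t).isClosedEmbedding.measurableEmbedding.lintegral_map,
    EuclideanSpace.euclideanHausdorffMeasure_eq_volume]

lemma setLIntegral_apply_zero_mem {F : Euc (m + 1) → ℝ≥0∞} (hF : Measurable F) {T : Set ℝ}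
    (hT : MeasurableSet T) :
    ∫⁻ y in {y | y 0 ∈ T}, F y = ∫⁻ t in T, ∫⁻ z, F (consEuc t z) := by
  have hslab : MeasurableSet {y : Euc (m + 1) | y 0 ∈ T} :=
    (by fun_prop : Measurable fun y : Euc (m + 1) => y 0) hT
  rw [← lintegral_indicator hslab, lintegral_eq_lintegral_consEuc (hF.indicator hslab),
    ← lintegral_indicator hT]
  refine lintegral_congr fun t => ?_
  by_cases ht : t ∈ T <;> simp [indicator, ht]

lemma continuous_lintegral_consEuc (hg : Continuous g) (hgc : HasCompactSupport g) :
    Continuous fun t => ∫⁻ z, ENNReal.ofReal (g (consEuc t z)) := by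
  have norm_le : ∀ (t : ℝ) (z : Euc m), ‖z‖ ≤ ‖consEuc t z‖ := fun t z => by
    rw [EuclideanSpace.norm_eq, EuclideanSpace.norm_eq]
    refine Real.sqrt_le_sqrt ?_
    simpa [consEuc, Fin.sum_univ_succ] using sq_nonneg t
  obtain ⟨C, hC⟩ := hg.bounded_above_of_compact_support hgc
  obtain ⟨R, hR⟩ := hgc.isCompact.isBounded.subset_closedBall 0
  have bound : ∀ t z, ENNReal.ofReal (g (consEuc t z)) ≤
      (closedBall (0 : Euc m) R).indicator (fun _ => ENNReal.ofReal C) z := fun t z => by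
    by_cases hz : z ∈ closedBall 0 R
    · rw [indicator_of_mem hz]
      exact ENNReal.ofReal_le_ofReal ((le_abs_self _).trans (hC _))
    · have hout : consEuc t z ∉ tsupport g := fun h =>
        hz (mem_closedBall_zero_iff.mpr
          ((norm_le t z).trans (mem_closedBall_zero_iff.mp (hR h))))
      simp [image_eq_zero_of_notMem_tsupport hout]
  have hcont : Continuous fun p : ℝ × Euc m => ENNReal.ofReal (g (consEuc p.1 p.2)) :=
    ENNReal.continuous_ofReal.comp (hg.comp continuous_consEuc)
  refine continuous_iff_continuousAt.mpr fun t₀ =>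
    tendsto_lintegral_filter_of_dominated_convergence _
      (Eventually.of_forall fun t => (hcont.comp (Continuous.prodMk_right t)).measurable)
      (Eventually.of_forall fun t => ae_of_all _ (bound t)) ?_
      (ae_of_all _ fun z => (hcont.comp (Continuous.prodMk_left z)).tendsto t₀)
  rw [lintegral_indicator isClosed_closedBall.measurableSet, setLIntegral_const]
  exact ENNReal.mul_ne_top ENNReal.ofReal_ne_top (isCompact_closedBall _ _).measure_lt_top.ne

lemma limsup_wVol_slab_div_le (hg : Continuous g) (hgc : HasCompactSupport g) :
    limsup (fun ε : ℝ => wVol g {y | y 0 ∈ Ico 0 ε} / ENNReal.ofReal ε) (𝓝[>] 0) ≤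
      wArea g {y | y 0 = 0} := by
  refine le_of_forall_gt_imp_ge_of_dense fun C hC => limsup_le_of_le (h := ?_)
  rw [wArea, setLIntegral_apply_zero_eq] at hC
  obtain ⟨τ, hτ, hslice⟩ := Metric.eventually_nhds_iff.mp
    ((continuous_lintegral_consEuc hg hgc).continuousAt.eventually_lt continuousAt_const hC)
  filter_upwards [Ioo_mem_nhdsGT hτ] with ε hε
  refine ENNReal.div_le_of_le_mul ?_
  calc wVol g {y | y 0 ∈ Ico 0 ε}
      = ∫⁻ t in Ico 0 ε, ∫⁻ z, ENNReal.ofReal (g (consEuc t z)) :=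
        setLIntegral_apply_zero_mem (by fun_prop) measurableSet_Ico
    _ ≤ ∫⁻ _ in Ico 0 ε, C := setLIntegral_mono' measurableSet_Ico fun t ht =>
        (hslice (by simpa [abs_of_nonneg ht.1] using ht.2.trans hε.2)).le
    _ = C * ENNReal.ofReal ε := by simp

lemma limsup_wVol_preimage_slab_div_le (Φ : Euc (m + 1) ≃ₜ Euc (m + 1)) {K : ℝ≥0}
    (hΦ : LipschitzWith K Φ) (hΦ' : LipschitzWith K Φ.symm) (hg : Continuous g)
    (hgc : HasCompactSupport g) :
    limsup (fun ε : ℝ => wVol g {x | Φ x 0 ∈ Ico 0 ε} / ENNReal.ofReal ε) (𝓝[>] 0) ≤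
      (K : ℝ≥0∞) ^ (2 * m + 1) * wArea g {x | Φ x 0 = 0} := by
  have hvol : ∀ ε : ℝ, wVol g {x | Φ x 0 ∈ Ico 0 ε} ≤
      (K : ℝ≥0∞) ^ (m + 1) * wVol (g ∘ Φ.symm) {y | y 0 ∈ Ico 0 ε} := fun ε => by
    simpa [wVol, EuclideanSpace.euclideanHausdorffMeasure_eq_volume] using
      setLIntegral_preimage_homeomorph_le (d := m + 1) Φ hΦ'
        (fun y => ENNReal.ofReal (g (Φ.symm y))) {y | y 0 ∈ Ico 0 ε}
  have harea : wArea (g ∘ Φ.symm) {y | y 0 = 0} ≤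
      (K : ℝ≥0∞) ^ m * wArea g {x | Φ x 0 = 0} := by
    simpa [wArea] using setLIntegral_preimage_homeomorph_le (d := m) Φ.symm hΦ
      (fun x => ENNReal.ofReal (g x)) {x | Φ x 0 = 0}
  calc limsup (fun ε : ℝ => wVol g {x | Φ x 0 ∈ Ico 0 ε} / ENNReal.ofReal ε) (𝓝[>] 0)
      ≤ limsup (fun ε : ℝ => (K : ℝ≥0∞) ^ (m + 1) *
          (wVol (g ∘ Φ.symm) {y | y 0 ∈ Ico 0 ε} / ENNReal.ofReal ε)) (𝓝[>] 0) :=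
        limsup_le_limsup (Eventually.of_forall fun ε => by
          simpa only [← mul_div_assoc] using ENNReal.div_le_div_right (hvol ε) _)
    _ ≤ (K : ℝ≥0∞) ^ (m + 1) * wArea (g ∘ Φ.symm) {y | y 0 = 0} := by
        rw [ENNReal.limsup_const_mul_of_ne_top (by simp)]
        gcongr
        exact limsup_wVol_slab_div_le (hg.comp Φ.symm.continuous) (hgc.comp_homeomorph Φ.symm)
    _ ≤ (K : ℝ≥0∞) ^ (2 * m + 1) * wArea g {x | Φ x 0 = 0} := by
        rw [show 2 * m + 1 = m + 1 + m by ring, pow_add _ (m + 1) m, mul_assoc]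
        gcongr

end Slabs

section Charts

variable {m : ℕ}

lemma exists_linearIsometryEquiv_apply_zero_eq_inner {v : Euc (m + 1)} (hv : ‖v‖ = 1) :
    ∃ A : Euc (m + 1) ≃ₗᵢ[ℝ] Euc (m + 1), ∀ x, A x 0 = ⟪v, x⟫ := by
  set e : Euc (m + 1) := EuclideanSpace.single 0 1
  set A := (ℝ ∙ (v - e))ᗮ.reflection
  have hAv : A v = e := Submodule.reflection_sub (by simp [hv, e])
  refine ⟨A, fun x => ?_⟩
  rw [← A.inner_map_map v x, hAv]
  simp [e, EuclideanSpace.inner_single_left]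

lemma exists_homeomorph_eq_linearIsometryEquiv_add {F G : Type*} [NormedAddCommGroup F]
    [NormedSpace ℝ F] [CompleteSpace F] [NormedAddCommGroup G] [NormedSpace ℝ G]
    (A : F ≃ₗᵢ[ℝ] G) {ψ : F → G} {κ : ℝ≥0} (hψ : LipschitzWith κ ψ) (hκ : κ < 1) :
    ∃ Φ : F ≃ₜ G, (∀ x, Φ x = A x + ψ x) ∧ LipschitzWith (1 + κ) Φ ∧
      LipschitzWith (1 - κ)⁻¹ Φ.symm := by
  have approx : ApproximatesLinearOn (fun x => A x + ψ x)
      (A.toContinuousLinearEquiv : F →L[ℝ] G) univ κ := fun x _ y _ => by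
    simpa [map_sub, add_sub_add_comm, ← dist_eq_norm] using hψ.dist_le_mul x y
  have hinv : Subsingleton F ∨ κ < ‖(A.toContinuousLinearEquiv.symm : G →L[ℝ] F)‖₊⁻¹ := by
    refine A.toContinuousLinearEquiv.subsingleton_or_nnnorm_symm_pos.imp_right fun hpos =>
      hκ.trans_le ((one_le_inv₀ hpos).mpr ?_)
    exact ContinuousLinearMap.opNNNorm_le_bound _ _ fun y => by simp
  have anti : AntilipschitzWith (1 - κ)⁻¹ fun x => A x + ψ x := by
    simpa using A.antilipschitz.add_lipschitzWith hψ (by simpa using hκ)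
  exact ⟨approx.toHomeomorph _ hinv, fun _ => rfl, A.lipschitz.add hψ,
    anti.to_rightInverse (approx.toHomeomorph _ hinv).apply_symm_apply⟩

lemma exists_lipschitzWith_eventually_eq_sub {F : Type*} [NormedAddCommGroup F] [NormedSpace ℝ F]
    {f : F → ℝ} {f' : F →L[ℝ] ℝ} {x₀ : F} (hf : HasStrictFDerivAt f f' x₀) {κ : ℝ≥0}
    (hκ : 0 < κ) : ∃ ψ : F → ℝ, LipschitzWith κ ψ ∧ ∀ᶠ x in 𝓝 x₀, ψ x = f x - f' x := by
  have hsub : HasStrictFDerivAt (fun x => f x - f' x) (0 : F →L[ℝ] ℝ) x₀ := by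
    simpa using hf.fun_sub f'.hasStrictFDerivAt
  obtain ⟨s, hs, hlip⟩ := hsub.exists_lipschitzOnWith_of_nnnorm_lt κ (by simpa using hκ)
  obtain ⟨ψ, hψ, hψf⟩ := hlip.extend_real
  exact ⟨ψ, hψ, by filter_upwards [hs] with x hx using (hψf hx).symm⟩

lemma exists_lipschitz_chart_of_hasStrictFDerivAt {f : Euc (m + 1) → ℝ} {x₀ : Euc (m + 1)}
    {f' : Euc (m + 1) →L[ℝ] ℝ} (hf : HasStrictFDerivAt f f' x₀) (hf' : f' ≠ 0) {κ : ℝ≥0}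
    (hκ : 0 < κ) :
    ∃ Φ : Euc (m + 1) ≃ₜ Euc (m + 1), LipschitzWith (1 + κ) Φ ∧ LipschitzWith (1 + κ) Φ.symm ∧
      ∀ᶠ x in 𝓝 x₀, f x = ‖f'‖ * Φ x 0 := by
  have hnorm : ‖f'‖ ≠ 0 := norm_ne_zero_iff.mpr hf'
  obtain ⟨A, hA⟩ := exists_linearIsometryEquiv_apply_zero_eq_inner
    (v := ‖f'‖⁻¹ • (InnerProductSpace.toDual ℝ (Euc (m + 1))).symm f')
    (by simp [norm_smul, inv_mul_cancel₀ hnorm])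
  obtain ⟨ψ, hψ, hψf⟩ := exists_lipschitzWith_eventually_eq_sub (hf.const_mul ‖f'‖⁻¹)
    (show 0 < κ / (1 + κ) by positivity)
  have hψe : LipschitzWith (κ / (1 + κ)) fun x => ψ x • (EuclideanSpace.single 0 1 : Euc (m + 1)) :=
    LipschitzWith.of_dist_le_mul fun x y => by
      simpa [dist_eq_norm, ← sub_smul, norm_smul] using hψ.dist_le_mul x y
  obtain ⟨Φ, hΦ, hΦl, hΦl'⟩ := exists_homeomorph_eq_linearIsometryEquiv_add A hψe
    ((div_lt_one (by positivity)).mpr (lt_one_add κ))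
  have hinv : (1 - κ / (1 + κ))⁻¹ = 1 + κ := by
    rw [← inv_inj, inv_inv]
    refine tsub_eq_of_eq_add ?_
    field_simp
  refine ⟨Φ, hΦl.weaken ?_, hinv ▸ hΦl', ?_⟩
  · gcongr
    exact div_le_self (by positivity) (by simp)
  · filter_upwards [hψf] with x hx
    have hcoord : Φ x 0 = ‖f'‖⁻¹ * f x := by
      simp [hΦ, hA, hx, real_inner_smul_left]
    rw [hcoord, mul_inv_cancel_left₀ hnorm]

end Charts

section Layers

open Filter
open scoped Pointwise

section NormedSpace

variable {F : Type*} [NormedAddCommGroup F] [NormedSpace ℝ F] {f : F → ℝ} {f' : F →L[ℝ] ℝ}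
  {x₀ : F} {B : Set F}

lemma layer_subset_cthickening (hf : Continuous f) (hB : B ⊆ closedBall 0 1) {ε : ℝ}
    (hε : 0 < ε) :
    ({x | f x < 0} + ε • B) \ {x | f x < 0} ⊆ cthickening ε {x | f x = 0} := by
  rintro _ ⟨⟨e, he, _, ⟨b, hb, rfl⟩, rfl⟩, hx⟩
  have hb₁ : ‖b‖ ≤ 1 := by simpa using hB hb
  obtain ⟨t, ht, hft⟩ := intermediate_value_Icc (f := fun t : ℝ => f (e + t • b)) hε.le
    (by fun_prop) ⟨by simpa using (le_of_lt he : f e ≤ 0), not_lt.mp hx⟩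
  refine mem_cthickening_of_dist_le _ (e + t • b) _ _ hft ?_
  calc dist (e + ε • b) (e + t • b) = (ε - t) * ‖b‖ := by
        rw [dist_add_left, dist_eq_norm, ← sub_smul, norm_smul,
          Real.norm_of_nonneg (sub_nonneg.mpr ht.2)]
    _ ≤ ε := by nlinarith [ht.1, ht.2, norm_nonneg b]

lemma exists_nhds_lt_of_mem_layer (hf : HasStrictFDerivAt f f' x₀) (hB : B ⊆ closedBall 0 1)
    {s s' : ℝ} (hs : ∀ b ∈ B, f' b ≤ s) (hss' : s < s') :
    ∃ U ∈ 𝓝 x₀, ∀ᶠ ε in 𝓝[>] (0 : ℝ),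
      ∀ x ∈ U, x ∈ {x | f x < 0} + ε • B → f x < s' * ε := by
  lift s' - s to ℝ≥0 using (sub_pos.mpr hss').le with κ hκ
  obtain ⟨u, hu, happrox⟩ := hf.approximates_deriv_on_nhds (c := κ)
    (Or.inr (by rw [← NNReal.coe_pos, hκ]; exact sub_pos.mpr hss'))
  obtain ⟨r, hr, hru⟩ := Metric.mem_nhds_iff.mp hu
  refine ⟨ball x₀ (r / 2), ball_mem_nhds _ (half_pos hr), ?_⟩
  filter_upwards [Ioo_mem_nhdsGT (half_pos hr)] with ε hε
  rintro _ hx ⟨e, he, _, ⟨b, hb, rfl⟩, rfl⟩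
  have hb₁ : ‖b‖ ≤ 1 := by simpa using hB hb
  have hεb : ‖ε • b‖ ≤ ε := by
    rw [norm_smul, Real.norm_of_nonneg hε.1.le]
    exact mul_le_of_le_one_right hε.1.le hb₁
  have heu : e ∈ u := hru <| calc
    dist e x₀ ≤ dist e (e + ε • b) + dist (e + ε • b) x₀ := dist_triangle _ _ _
    _ < r := by rw [dist_self_add_right]; linarith [hε.2, mem_ball.mp hx]
  have hxu : e + ε • b ∈ u := hru (ball_subset_ball (half_le_self hr.le) hx)
  have hincr : f (e + ε • b) - f e - ε * f' b ≤ (s' - s) * ε := by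
    have := happrox _ hxu _ heu
    rw [add_sub_cancel_left, map_smul, smul_eq_mul, hκ] at this
    exact (le_abs_self _).trans
      (this.trans (mul_le_mul_of_nonneg_left hεb (sub_nonneg.mpr hss'.le)))
  have he : f e < 0 := he
  nlinarith [mul_le_mul_of_nonneg_left (hs b hb) hε.1.le]

end NormedSpace

lemma IsOpenConvexCone.fderiv_nonpos_of_notMem {n : ℕ} {S : Set (Euc n)}
    (hS : IsOpenConvexCone S) {f : Euc n → ℝ} {f' : Euc n →L[ℝ] ℝ} {x₀ : Euc n}
    (hf : HasFDerivAt f f' x₀) (hfS : {x | f x < 0} ⊆ S) (hx₀ : f x₀ = 0) (hx₀S : x₀ ∉ S)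
    {b : Euc n} (hb : b ∈ S) : f' b ≤ 0 := by
  have hmin : IsMinOn f (segment ℝ x₀ (x₀ + -b)) x₀ := by
    rw [isMinOn_iff, segment_eq_image']
    rintro _ ⟨t, ht, rfl⟩
    by_contra! hneg
    have ht₀ : 0 < t := ht.1.lt_of_ne (by rintro rfl; simp at hneg)
    have hmem : x₀ + t • (x₀ + -b - x₀) ∈ S := hfS (mem_ofPred_eq ▸ hneg.trans_eq hx₀)
    have hx₀' : x₀ + t • (x₀ + -b - x₀) + t • b = x₀ := by module
    exact hx₀S (hx₀' ▸ hS.add_mem hmem (hS.2.2 b hb t ht₀))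
  have hnonneg : 0 ≤ f' (-b) :=
    hmin.localize.hasFDerivWithinAt_nonneg hf.hasFDerivWithinAt
      (mem_posTangentConeAt_of_segment_subset subset_rfl)
  rw [map_neg] at hnonneg
  exact neg_nonneg.mp hnonneg

lemma setLIntegral_le_of_inter_support_subset {X : Type*} [MeasurableSpace X] {μ : Measure X}
    {F : X → ℝ≥0∞} (hF : Measurable F) {A A' : Set X} (hA : F.support ∩ A ⊆ A') :
    ∫⁻ x in A, F x ∂μ ≤ ∫⁻ x in A', F x ∂μ := by
  calc ∫⁻ x in A, F x ∂μ = ∫⁻ x in A, F.support.indicator F x ∂μ := by rw [indicator_support]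
    _ = ∫⁻ x in F.support ∩ A, F x ∂μ := setLIntegral_indicator (measurableSet_support hF) _
    _ ≤ ∫⁻ x in A', F x ∂μ := lintegral_mono_set hA

end Layers

section OuterContentUpperBound

open Filter
open scoped Pointwise

section SingleFunction

variable {n : ℕ} {g : Euc n → ℝ} {B : Set (Euc n)}

lemma outerContent_le_mul_limsup {E : Set (Euc n)} {h : Euc n → ℝ} {σ : ℝ} (hg : Measurable g)
    (hσ : 0 < σ)
    (hE : ∀ᶠ ε in 𝓝[>] (0 : ℝ), g.support ∩ ((E + ε • B) \ E) ⊆ {x | h x ∈ Ico 0 (σ * ε)}) :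
    outerContent g E B ≤ ENNReal.ofReal σ *
      limsup (fun ε => wVol g {x | h x ∈ Ico 0 ε} / ENNReal.ofReal ε) (𝓝[>] 0) := by
  set u : ℝ → ℝ≥0∞ := fun ε => wVol g {x | h x ∈ Ico 0 ε} / ENNReal.ofReal ε with hu
  have hσ₀ : ENNReal.ofReal σ ≠ 0 := by simpa using hσ
  calc outerContent g E B ≤ limsup (fun ε => ENNReal.ofReal σ * u (σ * ε)) (𝓝[>] 0) := by
        refine limsup_le_limsup ?_
        filter_upwards [hE] with ε hε
        have hslab : wVol g ((E + ε • B) \ E) ≤ wVol g {x | h x ∈ Ico 0 (σ * ε)} :=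
          setLIntegral_le_of_inter_support_subset hg.ennreal_ofReal
            ((inter_subset_inter_left _ (Function.support_comp_subset ENNReal.ofReal_zero g)).trans
              hε)
        simp only [hu]
        rw [ENNReal.ofReal_mul hσ.le, ← mul_div_assoc,
          ENNReal.mul_div_mul_left _ _ hσ₀ ENNReal.ofReal_ne_top]
        gcongr
    _ = ENNReal.ofReal σ * limsup u (map (σ * ·) (𝓝[>] 0)) := by
        rw [ENNReal.limsup_const_mul_of_ne_top ENNReal.ofReal_ne_top]
        rfl
    _ ≤ ENNReal.ofReal σ * limsup u (𝓝[>] 0) := by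
        gcongr
        exact limsup_le_limsup_of_le
          (map_le_iff_le_comap.mpr (comap_mulLeft_nhdsGT_zero hσ).ge)

lemma outerContent_le_sum {ι : Type*} [Fintype ι] {f : Euc n → ℝ} {G : ι → Euc n → ℝ} {δ : ℝ}
    (hG : ∀ i, Measurable (G i)) (hf : Continuous f) (hB : B ⊆ closedBall 0 1) (hδ : 0 < δ)
    (hgG : ∀ x ∈ cthickening δ {x | f x = 0},
      ENNReal.ofReal (g x) ≤ ∑ i, ENNReal.ofReal (G i x)) :
    outerContent g {x | f x < 0} B ≤ ∑ i, outerContent (G i) {x | f x < 0} B := by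
  refine le_trans (limsup_le_limsup ?_) (limsup_sum_le Finset.univ _)
  filter_upwards [Ioo_mem_nhdsGT hδ] with ε hε
  have hlayer : ({x | f x < 0} + ε • B) \ {x | f x < 0} ⊆ cthickening δ {x | f x = 0} :=
    (layer_subset_cthickening hf hB hε.1).trans (cthickening_mono hε.2.le _)
  simp only [div_eq_mul_inv, ← Finset.sum_mul, wVol]
  gcongr
  rw [← lintegral_finsetSum _ fun i _ => (hG i).ennreal_ofReal]
  exact lintegral_mono_ae (ae_mono (Measure.restrict_mono hlayer le_rfl)
    (ae_restrict_of_forall_mem isClosed_cthickening.measurableSet hgG))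

lemma outerContent_le_lintegral_of_locally {f : Euc n → ℝ} (hf : Continuous f)
    (hf₀ : IsCompact {x | f x = 0}) (hB : B ⊆ closedBall 0 1) (ν : Measure (Euc n))
    (hloc : ∀ x₀, f x₀ = 0 → ∃ U ∈ 𝓝 x₀, ∀ G : Euc n → ℝ, Continuous G → HasCompactSupport G →
      G.support ⊆ U → outerContent G {x | f x < 0} B ≤ ∫⁻ x, ENNReal.ofReal (G x) ∂ν)
    (hg : Continuous g) (hg₀ : ∀ x, 0 ≤ g x) :
    outerContent g {x | f x < 0} B ≤ ∫⁻ x, ENNReal.ofReal (g x) ∂ν := by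
  choose! U hU hUle using hloc
  obtain ⟨t, ht₀, ht⟩ := hf₀.elim_nhds_subcover (fun x => interior (U x)) fun x hx =>
    interior_mem_nhds.mpr (hU x hx)
  rw [← iUnion_subtype (· ∈ t) fun i => interior (U i)] at ht
  have hopen : ∀ i : t, IsOpen (interior (U i)) := fun i => isOpen_interior
  obtain ⟨δ, hδ, hδU⟩ := hf₀.exists_cthickening_subset_open (isOpen_iUnion hopen) ht
  obtain ⟨ρ, hρU, hρc⟩ := PartitionOfUnity.exists_isSubordinate_of_locallyFinite_t2space
    hf₀.cthickening _ hopen (locallyFinite_of_finite _) hδU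
  have hcont : ∀ i, Continuous fun x => ρ i x * g x := fun i => (ρ i).continuous.mul hg
  have hsum : ∀ x, ∑ i, ENNReal.ofReal (ρ i x * g x) = ENNReal.ofReal ((∑ᶠ i, ρ i x) * g x) :=
    fun x => by
      rw [finsum_eq_sum_of_fintype, Finset.sum_mul,
        ENNReal.ofReal_sum_of_nonneg fun i _ => mul_nonneg (ρ.nonneg i x) (hg₀ x)]
  calc outerContent g {x | f x < 0} B
      ≤ ∑ i, outerContent (fun x => ρ i x * g x) {x | f x < 0} B :=
        outerContent_le_sum (fun i => (hcont i).measurable) hf hB hδ fun x hx => by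
          rw [hsum, ρ.sum_eq_one hx, one_mul]
    _ ≤ ∑ i, ∫⁻ x, ENNReal.ofReal (ρ i x * g x) ∂ν := by
        refine Finset.sum_le_sum fun i _ => hUle i (ht₀ i i.2) _ (hcont i) (hρc i).mul_right ?_
        exact (Function.support_mul_subset_left _ _).trans
          ((subset_tsupport _).trans ((hρU i).trans interior_subset))
    _ = ∫⁻ x, ENNReal.ofReal ((∑ᶠ i, ρ i x) * g x) ∂ν := by
        rw [← lintegral_finsetSum _ fun i _ => (hcont i).measurable.ennreal_ofReal]
        simp only [hsum]
    _ ≤ ∫⁻ x, ENNReal.ofReal (g x) ∂ν := lintegral_mono fun x =>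
        ENNReal.ofReal_le_ofReal (mul_le_of_le_one_left (hg₀ x) (ρ.sum_le_one x))

end SingleFunction

lemma exists_pos_add_mul_one_add_pow_le (k : ℕ) (s : ℝ) {η : ℝ} (hη : 0 < η) :
    ∃ κ : ℝ≥0, 0 < κ ∧ (s + κ) * (1 + κ) ^ k ≤ s + η := by
  have hcont : Continuous fun κ : ℝ => (s + κ) * (1 + κ) ^ k := by fun_prop
  have hlt : ∀ᶠ κ in 𝓝[>] (0 : ℝ), (s + κ) * (1 + κ) ^ k < s + η :=
    (hcont.continuousAt.eventually_lt continuousAt_const (by simpa)).filter_mono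
      nhdsWithin_le_nhds
  obtain ⟨κ, hκ, hκ₀⟩ := (hlt.and self_mem_nhdsWithin).exists
  exact ⟨⟨κ, le_of_lt hκ₀⟩, hκ₀, hκ.le⟩

section LevelSet

variable {m : ℕ} {f : Euc (m + 1) → ℝ} {f' : Euc (m + 1) →L[ℝ] ℝ} {x₀ : Euc (m + 1)}

lemma exists_nhds_outerContent_le_mul_wArea (hf : HasStrictFDerivAt f f' x₀) (hf' : f' ≠ 0)
    {B : Set (Euc (m + 1))} (hB : B ⊆ closedBall 0 1) {s η : ℝ} (hs : 0 ≤ s)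
    (hfB : ∀ b ∈ B, f' b ≤ s * ‖f'‖) (hη : 0 < η) :
    ∃ U ∈ 𝓝 x₀, ∀ g : Euc (m + 1) → ℝ, Continuous g → HasCompactSupport g → g.support ⊆ U →
      outerContent g {x | f x < 0} B ≤ ENNReal.ofReal (s + η) * wArea g {x | f x = 0} := by
  obtain ⟨κ, hκ, hκη⟩ := exists_pos_add_mul_one_add_pow_le (2 * m + 1) s hη
  have hnorm : 0 < ‖f'‖ := norm_pos_iff.mpr hf'
  have hσ : 0 < s + κ := add_pos_of_nonneg_of_pos hs hκ
  obtain ⟨Φ, hΦ, hΦ', hfΦ⟩ := exists_lipschitz_chart_of_hasStrictFDerivAt hf hf' hκ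
  obtain ⟨U, hU, hUlt⟩ := exists_nhds_lt_of_mem_layer hf hB hfB
    (mul_lt_mul_of_pos_right (lt_add_of_pos_right s hκ) hnorm)
  refine ⟨U ∩ {x | f x = ‖f'‖ * Φ x 0}, inter_mem hU hfΦ, fun g hg hgc hgU => ?_⟩
  have hslab : ∀ᶠ ε in 𝓝[>] (0 : ℝ), g.support ∩ (({x | f x < 0} + ε • B) \ {x | f x < 0}) ⊆
      {x | Φ x 0 ∈ Ico 0 ((s + κ) * ε)} := by
    filter_upwards [hUlt] with ε hε
    rintro x ⟨hxg, hxE, hx⟩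
    obtain ⟨hxU, hfx⟩ := hgU hxg
    have hfx : f x = ‖f'‖ * Φ x 0 := hfx
    have hlt := hε x hxU hxE
    rw [mem_ofPred_eq, not_lt, hfx] at hx
    rw [hfx, mul_right_comm, mul_comm _ ‖f'‖] at hlt
    exact ⟨nonneg_of_mul_nonneg_right hx hnorm, lt_of_mul_lt_mul_left hlt hnorm.le⟩
  have harea : wArea g {x | Φ x 0 = 0} ≤ wArea g {x | f x = 0} := by
    refine setLIntegral_le_of_inter_support_subset hg.measurable.ennreal_ofReal ?_
    rintro x ⟨hxg, hx⟩
    have hfx : f x = ‖f'‖ * Φ x 0 :=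
      (hgU (Function.support_comp_subset ENNReal.ofReal_zero g hxg)).2
    rw [mem_ofPred_eq] at hx ⊢
    rw [hfx, hx, mul_zero]
  calc outerContent g {x | f x < 0} B
      ≤ ENNReal.ofReal (s + κ) *
          (((1 + κ : ℝ≥0) : ℝ≥0∞) ^ (2 * m + 1) * wArea g {x | Φ x 0 = 0}) :=
        (outerContent_le_mul_limsup hg.measurable hσ hslab).trans
          (by gcongr; exact limsup_wVol_preimage_slab_div_le Φ hΦ hΦ' hg hgc)
    _ = ENNReal.ofReal ((s + κ) * (1 + κ) ^ (2 * m + 1)) * wArea g {x | Φ x 0 = 0} := by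
        rw [← mul_assoc, ENNReal.ofReal_mul hσ.le, ENNReal.ofReal_pow (by positivity),
          ← ENNReal.ofReal_coe_nnreal]
        simp
    _ ≤ ENNReal.ofReal (s + η) * wArea g {x | f x = 0} := by gcongr

lemma euclideanHausdorffMeasure_lt_top_of_isCompact_of_subset_chart
    (Φ : Euc (m + 1) ≃ₜ Euc (m + 1)) {K : ℝ≥0} (hΦ : LipschitzWith K Φ.symm)
    {A : Set (Euc (m + 1))} (hA : IsCompact A) (hAΦ : A ⊆ {x | Φ x 0 = 0}) :
    μHE[m] A < ∞ := by
  have hΦA : Φ '' A = consEuc 0 '' (consEuc 0 ⁻¹' (Φ '' A)) := by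
    rw [image_preimage_eq_inter_range, range_consEuc, eq_comm, inter_eq_left]
    exact image_subset_iff.mpr hAΦ
  calc μHE[m] A = μHE[m] (Φ.symm '' (Φ '' A)) := by rw [← image_comp]; simp
    _ ≤ (K : ℝ≥0∞) ^ m * μHE[m] (Φ '' A) :=
        euclideanHausdorffMeasure_image_le_of_lipschitzOnWith hΦ.lipschitzOnWith
    _ = (K : ℝ≥0∞) ^ m * volume (consEuc 0 ⁻¹' (Φ '' A)) := by
        rw [hΦA, (isometry_consEuc 0).euclideanHausdorffMeasure_image, ← hΦA,
          EuclideanSpace.euclideanHausdorffMeasure_eq_volume]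
    _ < ∞ := ENNReal.mul_lt_top (by simp)
        ((isometry_consEuc 0).isClosedEmbedding.isCompact_preimage
          (hA.image Φ.continuous)).measure_lt_top

lemma euclideanHausdorffMeasure_lt_top_of_regular_level (hf : ContDiff ℝ 1 f)
    (hf₀ : IsCompact {x | f x = 0}) (hreg : ∀ x, f x = 0 → fderiv ℝ f x ≠ 0) :
    μHE[m] {x | f x = 0} < ∞ := by
  refine hf₀.measure_lt_top_of_nhdsWithin fun x hx => ?_
  obtain ⟨Φ, -, hΦ, hfΦ⟩ := exists_lipschitz_chart_of_hasStrictFDerivAt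
    (hf.contDiffAt.hasStrictFDerivAt one_ne_zero) (hreg x hx) one_pos
  obtain ⟨r, hr, hrΦ⟩ := Metric.nhds_basis_closedBall.mem_iff.mp hfΦ
  refine ⟨closedBall x r ∩ {x | f x = 0}, ?_, ?_⟩
  · rw [inter_comm]
    exact inter_mem_nhdsWithin _ (closedBall_mem_nhds x hr)
  · refine euclideanHausdorffMeasure_lt_top_of_isCompact_of_subset_chart Φ hΦ
      (hf₀.inter_left isClosed_closedBall) ?_
    rintro y ⟨hy, hfy⟩
    rw [mem_ofPred_eq] at hfy ⊢
    have hΦy : f y = ‖fderiv ℝ f x‖ * Φ y 0 := hrΦ hy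
    rw [hfy, zero_eq_mul] at hΦy
    exact hΦy.resolve_left (norm_ne_zero_iff.mpr (hreg x hx))

variable {S : Set (Euc (m + 1))}

lemma IsOpenConvexCone.exists_nhds_outerContent_le_add (hS : IsOpenConvexCone S)
    (hf : HasStrictFDerivAt f f' x₀) (hf' : f' ≠ 0) (hfS : {x | f x < 0} ⊆ S) (hx₀ : f x₀ = 0)
    {η : ℝ} (hη : 0 < η) :
    ∃ U ∈ 𝓝 x₀, ∀ g : Euc (m + 1) → ℝ, Continuous g → HasCompactSupport g → g.support ⊆ U →
      outerContent g {x | f x < 0} (ball 0 1 ∩ S) ≤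
        wArea g ({x | f x = 0} ∩ S) + ENNReal.ofReal η * wArea g {x | f x = 0} := by
  have hB : ball 0 1 ∩ S ⊆ closedBall 0 1 := inter_subset_left.trans ball_subset_closedBall
  by_cases hx₀S : x₀ ∈ S
  · have hfB : ∀ b ∈ ball 0 1 ∩ S, f' b ≤ 1 * ‖f'‖ := fun b hb => by
      have hb₁ : ‖b‖ ≤ 1 := by simpa using hB hb
      rw [one_mul]
      exact (le_abs_self _).trans (f'.unit_le_opNorm b hb₁)
    obtain ⟨U, hU, hUle⟩ := exists_nhds_outerContent_le_mul_wArea hf hf' hB zero_le_one hfB hη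
    refine ⟨U ∩ S, inter_mem hU (hS.1.mem_nhds hx₀S), fun g hg hgc hgU => ?_⟩
    have harea : wArea g {x | f x = 0} ≤ wArea g ({x | f x = 0} ∩ S) :=
      setLIntegral_le_of_inter_support_subset hg.measurable.ennreal_ofReal fun x hx =>
        ⟨hx.2, (hgU (Function.support_comp_subset ENNReal.ofReal_zero g hx.1)).2⟩
    calc outerContent g {x | f x < 0} (ball 0 1 ∩ S)
        ≤ ENNReal.ofReal (1 + η) * wArea g {x | f x = 0} :=
          hUle g hg hgc (hgU.trans inter_subset_left)
      _ = wArea g {x | f x = 0} + ENNReal.ofReal η * wArea g {x | f x = 0} := by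
          rw [ENNReal.ofReal_add zero_le_one hη.le, ENNReal.ofReal_one, add_mul, one_mul]
      _ ≤ wArea g ({x | f x = 0} ∩ S) + ENNReal.ofReal η * wArea g {x | f x = 0} := by gcongr
  · have hfB : ∀ b ∈ ball 0 1 ∩ S, f' b ≤ 0 * ‖f'‖ := fun b hb => by
      rw [zero_mul]
      exact hS.fderiv_nonpos_of_notMem hf.hasFDerivAt hfS hx₀ hx₀S hb.2
    obtain ⟨U, hU, hUle⟩ := exists_nhds_outerContent_le_mul_wArea hf hf' hB le_rfl hfB hη
    refine ⟨U, hU, fun g hg hgc hgU => (hUle g hg hgc hgU).trans ?_⟩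
    rw [zero_add]
    exact le_add_self

lemma IsOpenConvexCone.outerContent_le_wArea (hS : IsOpenConvexCone S) (hf : ContDiff ℝ 1 f)
    (hf₀ : IsCompact {x | f x = 0}) (hreg : ∀ x, f x = 0 → fderiv ℝ f x ≠ 0)
    (hfS : {x | f x < 0} ⊆ S) {g : Euc (m + 1) → ℝ} (hg : Continuous g) (hg₀ : ∀ x, 0 ≤ g x) :
    outerContent g {x | f x < 0} (ball 0 1 ∩ S) ≤ wArea g ({x | f x = 0} ∩ S) := by
  have hfin : wArea g {x | f x = 0} ≠ ∞ := by
    obtain ⟨C, hC⟩ := hf₀.exists_bound_of_continuousOn hg.continuousOn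
    have hle : wArea g {x | f x = 0} ≤ ENNReal.ofReal C * μHE[m] {x | f x = 0} := by
      rw [← setLIntegral_const]
      exact setLIntegral_mono measurable_const fun x hx =>
        ENNReal.ofReal_le_ofReal ((le_abs_self _).trans (hC x hx))
    exact ne_top_of_le_ne_top (ENNReal.mul_ne_top ENNReal.ofReal_ne_top
      (euclideanHausdorffMeasure_lt_top_of_regular_level hf hf₀ hreg).ne) hle
  have hle : ∀ᶠ η : ℝ in 𝓝[>] 0, outerContent g {x | f x < 0} (ball 0 1 ∩ S) ≤
      wArea g ({x | f x = 0} ∩ S) + ENNReal.ofReal η * wArea g {x | f x = 0} := by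
    filter_upwards [self_mem_nhdsWithin] with η hη
    have hlocal := outerContent_le_lintegral_of_locally hf.continuous hf₀
      (inter_subset_left.trans ball_subset_closedBall)
      ((μHE[m] : Measure (Euc (m + 1))).restrict ({x | f x = 0} ∩ S) + ENNReal.ofReal η •
        (μHE[m] : Measure (Euc (m + 1))).restrict {x | f x = 0})
      (fun x₀ hx₀ => by
        simpa only [lintegral_add_measure, lintegral_smul_measure, smul_eq_mul, wArea] using
          hS.exists_nhds_outerContent_le_add (hf.contDiffAt.hasStrictFDerivAt one_ne_zero)
            (hreg x₀ hx₀) hfS hx₀ hη) hg hg₀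
    simpa only [lintegral_add_measure, lintegral_smul_measure, smul_eq_mul, wArea] using hlocal
  refine ge_of_tendsto ?_ hle
  have hη₀ : Tendsto (fun η : ℝ => ENNReal.ofReal η) (𝓝[>] 0) (𝓝 0) := by
    simpa using (ENNReal.continuous_ofReal.tendsto 0).mono_left nhdsWithin_le_nhds
  simpa using tendsto_const_nhds.add (ENNReal.Tendsto.mul_const hη₀ (Or.inr hfin))

end LevelSet

end OuterContentUpperBound

section Sphere

/-- Positive homogeneity of degree `α`, for functions with values in `[0, ∞]`. -/
def IsPosHomogeneous {n : ℕ} (α : ℝ) (G : Euc n → ℝ≥0∞) : Prop :=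
  ∀ x, ∀ t, 0 < t → G (t • x) = ENNReal.ofReal (t ^ α) * G x

section Homogeneity

variable {n : ℕ} {α κ : ℝ} {G : Euc n → ℝ≥0∞}

lemma IsPosHomogeneous.indicator (hG : IsPosHomogeneous α G) {C : Set (Euc n)}
    (hC : ∀ x, ∀ t : ℝ, 0 < t → (t • x ∈ C ↔ x ∈ C)) : IsPosHomogeneous α (C.indicator G) := by
  intro x t ht
  by_cases hx : x ∈ C
  · rw [indicator_of_mem hx, indicator_of_mem ((hC x t ht).2 hx), hG x t ht]
  · rw [indicator_of_notMem hx, indicator_of_notMem (mt (hC x t ht).1 hx), mul_zero]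

lemma IsPosHomogeneous.comp_linearIsometryEquiv (hG : IsPosHomogeneous α G)
    (A : Euc n ≃ₗᵢ[ℝ] Euc n) : IsPosHomogeneous α (G ∘ A) := by
  intro x t ht
  simp only [Function.comp_apply, map_smul, hG _ t ht]

lemma IsPosHomogeneous.setLIntegral_ball (hG : IsPosHomogeneous α G) (hGm : Measurable G)
    (hκ : 0 < κ) :
    ∫⁻ x in ball 0 κ, G x = ENNReal.ofReal (κ ^ ((n : ℝ) + α)) * ∫⁻ x in ball 0 1, G x := by
  have scale (x : Euc n) : (ball 0 κ).indicator G (κ • x) =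
      ENNReal.ofReal (κ ^ α) * (ball 0 1).indicator G x := by
    have hmem : κ • x ∈ ball (0 : Euc n) κ ↔ x ∈ ball (0 : Euc n) 1 := by
      rw [mem_ball_zero_iff, mem_ball_zero_iff, norm_smul, Real.norm_of_nonneg hκ.le,
        mul_lt_iff_lt_one_right hκ]
    by_cases hx : x ∈ ball (0 : Euc n) 1
    · rw [indicator_of_mem hx, indicator_of_mem (hmem.2 hx), hG x κ hκ]
    · rw [indicator_of_notMem hx, indicator_of_notMem (mt hmem.1 hx), mul_zero]
  rw [← lintegral_indicator measurableSet_ball, ← lintegral_indicator measurableSet_ball,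
    lintegral_eq_mul_lintegral_comp_smul (hGm.indicator measurableSet_ball) hκ]
  simp only [scale]
  rw [lintegral_const_mul _ (hGm.indicator measurableSet_ball), ← mul_assoc,
    ← ENNReal.ofReal_mul (by positivity), Real.rpow_add hκ, Real.rpow_natCast]

end Homogeneity

section Gnomonic

variable {m : ℕ} {α κ : ℝ} {G : Euc (m + 1) → ℝ≥0∞}

lemma dist_inv_norm_smul_le {F : Type*} [NormedAddCommGroup F] [InnerProductSpace ℝ F] {x y : F}
    (hx : 1 ≤ ‖x‖) (hy : 1 ≤ ‖y‖) : dist (‖x‖⁻¹ • x) (‖y‖⁻¹ • y) ≤ dist x y := by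
  have hx₀ : 0 < ‖x‖ := by linarith
  have hy₀ : 0 < ‖y‖ := by linarith
  have norm_unit {z : F} (hz : 0 < ‖z‖) : ‖‖z‖⁻¹ • z‖ = 1 := by
    rw [norm_smul, norm_inv, norm_norm, inv_mul_cancel₀ hz.ne']
  have hinner : ⟪x, y⟫ = ‖x‖ * ‖y‖ * ⟪‖x‖⁻¹ • x, ‖y‖⁻¹ • y⟫ := by
    rw [real_inner_smul_left, real_inner_smul_right]
    field_simp
  have hle : ⟪‖x‖⁻¹ • x, ‖y‖⁻¹ • y⟫ ≤ 1 := by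
    simpa only [norm_unit hx₀, norm_unit hy₀, mul_one] using
      real_inner_le_norm (‖x‖⁻¹ • x) (‖y‖⁻¹ • y)
  rw [dist_eq_norm, dist_eq_norm]
  refine le_of_sq_le_sq ?_ (norm_nonneg _)
  rw [norm_sub_sq_real, norm_sub_sq_real, norm_unit hx₀, norm_unit hy₀, hinner]
  have hxy : 1 ≤ ‖x‖ * ‖y‖ := one_le_mul_of_one_le_of_one_le hx hy
  nlinarith [sq_nonneg (‖x‖ - ‖y‖), mul_nonneg (sub_nonneg.2 hle) (sub_nonneg.2 hxy)]

/-- The gnomonic parametrization of the open hemisphere `{‖x‖ = 1, x 0 > 0}`: the central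
projection of the tangent hyperplane `{x 0 = 1}`. -/
def gnomonic (z : Euc m) : Euc (m + 1) := ‖consEuc 1 z‖⁻¹ • consEuc 1 z

lemma one_le_norm_consEuc_one (z : Euc m) : 1 ≤ ‖consEuc 1 z‖ := by
  simpa using PiLp.norm_apply_le (consEuc 1 z) 0

lemma lipschitzWith_gnomonic : LipschitzWith 1 (gnomonic : Euc m → Euc (m + 1)) :=
  LipschitzWith.of_dist_le_mul fun y z => by
    rw [NNReal.coe_one, one_mul, ← (isometry_consEuc 1).dist_eq y z]
    exact dist_inv_norm_smul_le (one_le_norm_consEuc_one y) (one_le_norm_consEuc_one z)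

lemma mem_range_gnomonic {x : Euc (m + 1)} (hx : ‖x‖ = 1) (hx₀ : 0 < x 0) :
    x ∈ range (gnomonic : Euc m → Euc (m + 1)) := by
  obtain ⟨z, hz⟩ : (x 0)⁻¹ • x ∈ range (consEuc 1 : Euc m → Euc (m + 1)) := by
    rw [range_consEuc, mem_ofPred_eq, PiLp.smul_apply, smul_eq_mul, inv_mul_cancel₀ hx₀.ne']
  refine ⟨z, ?_⟩
  rw [gnomonic, hz, norm_smul, hx, norm_inv, Real.norm_of_nonneg hx₀.le, mul_one, inv_inv,
    smul_inv_smul₀ hx₀.ne']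

lemma lintegral_Ioo_rpow {β : ℝ} (hβ : 0 ≤ β) :
    ∫⁻ t in Ioo (0 : ℝ) 1, ENNReal.ofReal (t ^ β) = ENNReal.ofReal (β + 1)⁻¹ := by
  rw [Measure.restrict_congr_set Ioo_ae_eq_Ioc, ← ofReal_integral_eq_lintegral_ofReal
    (intervalIntegral.intervalIntegrable_rpow' (by linarith)).1
    ((ae_restrict_mem measurableSet_Ioc).mono fun t ht => Real.rpow_nonneg ht.1.le β),
    ← intervalIntegral.integral_of_le zero_le_one, integral_rpow (Or.inl (by linarith)),
    Real.one_rpow, Real.zero_rpow (by linarith), sub_zero, one_div]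

lemma IsPosHomogeneous.lintegral_consEuc (hG : IsPosHomogeneous α G) (hGm : Measurable G) {t : ℝ}
    (ht : 0 < t) : ∫⁻ z, G (consEuc t z) =
      ENNReal.ofReal (t ^ ((m : ℝ) + α)) * ∫⁻ z : Euc m, G (consEuc 1 z) := by
  have hGz (s : ℝ) : Measurable fun z : Euc m => G (consEuc s z) :=
    hGm.comp (isometry_consEuc s).continuous.measurable
  have scale (z : Euc m) : G (consEuc t (t • z)) = ENNReal.ofReal (t ^ α) * G (consEuc 1 z) := by
    rw [← hG _ t ht, ← consEuc_smul, mul_one]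
  rw [lintegral_eq_mul_lintegral_comp_smul (hGz t) ht]
  simp only [scale]
  rw [lintegral_const_mul _ (hGz 1), ← mul_assoc, ← ENNReal.ofReal_mul (by positivity),
    Real.rpow_add ht, Real.rpow_natCast]

lemma IsPosHomogeneous.lintegral_consEuc_one (hG : IsPosHomogeneous α G) (hGm : Measurable G)
    (hα : 0 ≤ α) : ∫⁻ z : Euc m, G (consEuc 1 z) =
      ENNReal.ofReal ((m + 1 : ℕ) + α) * ∫⁻ x in {x | x 0 ∈ Ioo (0 : ℝ) 1}, G x := by
  have hmα : 0 ≤ (m : ℝ) + α := by positivity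
  have hD : ((m + 1 : ℕ) : ℝ) + α = m + α + 1 := by push_cast; ring
  rw [setLIntegral_apply_zero_mem hGm measurableSet_Ioo,
    setLIntegral_congr_fun measurableSet_Ioo fun t ht => hG.lintegral_consEuc hGm ht.1,
    lintegral_mul_const _ (by fun_prop), lintegral_Ioo_rpow hmα, hD, ← mul_assoc,
    ← ENNReal.ofReal_mul (by positivity), mul_inv_cancel₀ (by positivity), ENNReal.ofReal_one,
    one_mul]

lemma IsPosHomogeneous.setLIntegral_sphere_le_lintegral_consEuc (hG : IsPosHomogeneous α G)
    (hGm : Measurable G) (hα : 0 ≤ α) (hG₀ : G.support ⊆ {x | x = 0 ∨ 0 < x 0}) :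
    ∫⁻ x in sphere 0 1, G x ∂μHE[m] ≤ ∫⁻ z : Euc m, G (consEuc 1 z) := by
  have hrange : G.support ∩ sphere 0 1 ⊆ range (gnomonic : Euc m → Euc (m + 1)) := by
    rintro x ⟨hGx, hx⟩
    rw [mem_sphere_zero_iff_norm] at hx
    exact mem_range_gnomonic hx ((hG₀ hGx).resolve_left (norm_ne_zero_iff.1 (by simp [hx])))
  calc ∫⁻ x in sphere 0 1, G x ∂μHE[m]
      ≤ ∫⁻ x in range (gnomonic : Euc m → Euc (m + 1)), G x ∂μHE[m] :=
        setLIntegral_le_of_inter_support_subset hGm hrange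
    _ ≤ ∫⁻ z : Euc m, G (gnomonic z) := by
        simpa [EuclideanSpace.euclideanHausdorffMeasure_eq_volume] using
          setLIntegral_range_le_of_lipschitzWith (d := m) lipschitzWith_gnomonic hGm
    _ ≤ ∫⁻ z : Euc m, G (consEuc 1 z) := by
        refine lintegral_mono fun z => ?_
        have hz := one_le_norm_consEuc_one z
        rw [gnomonic, hG _ _ (by positivity)]
        refine mul_le_of_le_one_left' (ENNReal.ofReal_le_one.2 ?_)
        exact Real.rpow_le_one (by positivity) (inv_le_one_of_one_le₀ hz) hα

lemma IsPosHomogeneous.setLIntegral_sphere_le_of_support_subset_cone_zero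
    (hG : IsPosHomogeneous α G) (hGm : Measurable G) (hα : 0 ≤ α) (hκ : 0 < κ)
    (hGκ : G.support ⊆ {x | ‖x‖ ≤ κ * x 0}) :
    ∫⁻ x in sphere 0 1, G x ∂μHE[m] ≤ ENNReal.ofReal (κ ^ (((m + 1 : ℕ) : ℝ) + α)) *
      (ENNReal.ofReal ((m + 1 : ℕ) + α) * ∫⁻ x in ball 0 1, G x) := by
  have hpos : G.support ⊆ {x | x = 0 ∨ 0 < x 0} := fun x hx => by
    rw [mem_ofPred_eq, or_iff_not_imp_left]
    intro hx₀
    exact pos_of_mul_pos_right ((norm_pos_iff.2 hx₀).trans_le (hGκ hx)) hκ.le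
  have hslab : G.support ∩ {x | x 0 ∈ Ioo (0 : ℝ) 1} ⊆ ball 0 κ := by
    rintro x ⟨hGx, hx⟩
    rw [mem_ball_zero_iff]
    exact (hGκ hGx).trans_lt (mul_lt_of_lt_one_right hκ hx.2)
  calc ∫⁻ x in sphere 0 1, G x ∂μHE[m]
      ≤ ENNReal.ofReal ((m + 1 : ℕ) + α) * ∫⁻ x in {x | x 0 ∈ Ioo (0 : ℝ) 1}, G x :=
        (hG.setLIntegral_sphere_le_lintegral_consEuc hGm hα hpos).trans_eq
          (hG.lintegral_consEuc_one hGm hα)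
    _ ≤ ENNReal.ofReal ((m + 1 : ℕ) + α) * ∫⁻ x in ball 0 κ, G x := by
        gcongr _ * ?_
        exact setLIntegral_le_of_inter_support_subset hGm hslab
    _ = _ := by rw [hG.setLIntegral_ball hGm hκ, mul_left_comm]

lemma IsPosHomogeneous.setLIntegral_sphere_le_of_support_subset_cone (hG : IsPosHomogeneous α G)
    (hGm : Measurable G) (hα : 0 ≤ α) (hκ : 0 < κ) {v : Euc (m + 1)} (hv : ‖v‖ = 1)
    (hGκ : G.support ⊆ {x | ‖x‖ ≤ κ * ⟪v, x⟫}) :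
    ∫⁻ x in sphere 0 1, G x ∂μHE[m] ≤ ENNReal.ofReal (κ ^ (((m + 1 : ℕ) : ℝ) + α)) *
      (ENNReal.ofReal ((m + 1 : ℕ) + α) * ∫⁻ x in ball 0 1, G x) := by
  obtain ⟨A, hA⟩ := exists_linearIsometryEquiv_apply_zero_eq_inner hv
  have hcone : (G ∘ A.symm).support ⊆ {x | ‖x‖ ≤ κ * x 0} := fun x hx => by
    have h := hGκ hx
    rwa [mem_ofPred_eq, ← hA, A.apply_symm_apply, A.symm.norm_map] at h
  have h := (hG.comp_linearIsometryEquiv A.symm).setLIntegral_sphere_le_of_support_subset_cone_zero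
    (hGm.comp A.symm.continuous.measurable) hα hκ hcone
  have hsphere : ∫⁻ x in sphere 0 1, (G ∘ A.symm) x ∂μHE[m] = ∫⁻ x in sphere 0 1, G x ∂μHE[m] := by
    have hA := A.symm.toIsometryEquiv.measurePreserving_euclideanHausdorffMeasure m
    rw [← hA.setLIntegral_comp_preimage isClosed_sphere.measurableSet hGm]
    simp
  have hball : ∫⁻ x in ball 0 1, (G ∘ A.symm) x = ∫⁻ x in ball 0 1, G x := by
    rw [← A.symm.measurePreserving.setLIntegral_comp_preimage measurableSet_ball hGm]
    simp
  rwa [hsphere, hball] at h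

lemma exists_finset_norm_le_mul_inner {F : Type*} [NormedAddCommGroup F] [InnerProductSpace ℝ F]
    [ProperSpace F] [Nontrivial F] (hκ : 1 < κ) :
    ∃ s : Finset F, (∀ v ∈ s, ‖v‖ = 1) ∧ ∀ x, ∃ v ∈ s, ‖x‖ ≤ κ * ⟪v, x⟫ := by
  have hnhds : ∀ v ∈ sphere (0 : F) 1, {x : F | ‖x‖ < κ * ⟪v, x⟫} ∈ 𝓝 v := by
    intro v hv
    rw [mem_sphere_zero_iff_norm] at hv
    refine (isOpen_lt (by fun_prop) (by fun_prop)).mem_nhds ?_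
    rwa [mem_ofPred_eq, real_inner_self_eq_norm_sq, hv, one_pow, mul_one]
  obtain ⟨s, hs, hcover⟩ := (isCompact_sphere (0 : F) 1).elim_nhds_subcover _ hnhds
  refine ⟨s, fun v hv => mem_sphere_zero_iff_norm.1 (hs v hv), fun x => ?_⟩
  obtain ⟨u, hu, hx⟩ : ∃ u ∈ sphere (0 : F) 1, ‖x‖ • u = x := by
    rcases eq_or_ne x 0 with rfl | hx
    · obtain ⟨u, hu⟩ := NormedSpace.sphere_nonempty (x := (0 : F)).2 zero_le_one
      exact ⟨u, hu, by simp⟩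
    · exact ⟨‖x‖⁻¹ • x, by simp [norm_smul, hx], smul_inv_smul₀ (norm_ne_zero_iff.2 hx) x⟩
  obtain ⟨v, hv, huv⟩ := mem_iUnion₂.1 (hcover hu)
  refine ⟨v, hv, ?_⟩
  rw [mem_ofPred_eq, mem_sphere_zero_iff_norm.1 hu] at huv
  calc ‖x‖ = ‖x‖ * 1 := (mul_one _).symm
    _ ≤ ‖x‖ * (κ * ⟪v, u⟫) := by gcongr
    _ = κ * ⟪v, x⟫ := by rw [← hx, real_inner_smul_right, hx]; ring

lemma IsPosHomogeneous.setLIntegral_sphere_le_of_support_subset_cones {s : Finset (Euc (m + 1))}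
    (hs : ∀ v ∈ s, ‖v‖ = 1) (hα : 0 ≤ α) (hκ : 0 < κ) (hG : IsPosHomogeneous α G)
    (hGm : Measurable G) (hGs : ∀ x ∈ G.support, ∃ v ∈ s, ‖x‖ ≤ κ * ⟪v, x⟫) :
    ∫⁻ x in sphere 0 1, G x ∂μHE[m] ≤ ENNReal.ofReal (κ ^ (((m + 1 : ℕ) : ℝ) + α)) *
      (ENNReal.ofReal ((m + 1 : ℕ) + α) * ∫⁻ x in ball 0 1, G x) := by
  classical
  induction s using Finset.induction generalizing G with
  | empty =>
    have hG₀ : G = 0 := Function.support_eq_empty_iff.1 (eq_empty_of_forall_notMem fun x hx => by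
      simpa using hGs x hx)
    simp [hG₀]
  | insert v s _ ih =>
    set C : Set (Euc (m + 1)) := {x | ‖x‖ ≤ κ * ⟪v, x⟫}
    have hC : MeasurableSet C := measurableSet_le (by fun_prop) (by fun_prop)
    have smul_mem_C (x) (t : ℝ) (ht : 0 < t) : t • x ∈ C ↔ x ∈ C := by
      rw [mem_ofPred_eq, mem_ofPred_eq, norm_smul, Real.norm_of_nonneg ht.le,
        real_inner_smul_right, mul_left_comm, mul_le_mul_iff_right₀ ht]
    have inside := (hG.indicator smul_mem_C).setLIntegral_sphere_le_of_support_subset_cone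
      (hGm.indicator hC) hα hκ (hs v (Finset.mem_insert_self v s)) support_indicator_subset
    have outside := ih (fun u hu => hs u (Finset.mem_insert_of_mem hu))
      (hG.indicator fun x t ht => not_congr (smul_mem_C x t ht)) (hGm.indicator hC.compl)
      fun x hx => by
        rw [support_indicator] at hx
        obtain ⟨u, hu, hxu⟩ := hGs x hx.2
        rcases Finset.mem_insert.1 hu with rfl | hu
        · exact absurd hxu hx.1
        · exact ⟨u, hu, hxu⟩
    have split (μ : Measure (Euc (m + 1))) :
        ∫⁻ x, G x ∂μ = ∫⁻ x, C.indicator G x ∂μ + ∫⁻ x, Cᶜ.indicator G x ∂μ := by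
      rw [lintegral_indicator hC, lintegral_indicator hC.compl, lintegral_add_compl _ hC]
    rw [split, split, mul_add, mul_add]
    exact add_le_add inside outside

theorem IsPosHomogeneous.setLIntegral_sphere_le (hG : IsPosHomogeneous α G) (hGm : Measurable G)
    (hα : 0 ≤ α) : ∫⁻ x in sphere 0 1, G x ∂μHE[m] ≤
      ENNReal.ofReal ((m + 1 : ℕ) + α) * ∫⁻ x in ball 0 1, G x := by
  have bound : ∀ κ : ℝ, 1 < κ → ∫⁻ x in sphere 0 1, G x ∂μHE[m] ≤
      ENNReal.ofReal (κ ^ (((m + 1 : ℕ) : ℝ) + α)) *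
        (ENNReal.ofReal ((m + 1 : ℕ) + α) * ∫⁻ x in ball 0 1, G x) := by
    intro κ hκ
    obtain ⟨s, hs, hcover⟩ := exists_finset_norm_le_mul_inner (F := Euc (m + 1)) hκ
    exact IsPosHomogeneous.setLIntegral_sphere_le_of_support_subset_cones hs hα (by linarith) hG
      hGm fun x _ => hcover x
  have hlim : Filter.Tendsto (fun κ : ℝ => ENNReal.ofReal (κ ^ (((m + 1 : ℕ) : ℝ) + α)))
      (𝓝[>] 1) (𝓝 1) := by
    have hcont : ContinuousAt (fun κ : ℝ => κ ^ (((m + 1 : ℕ) : ℝ) + α)) 1 :=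
      Real.continuousAt_rpow_const _ _ (Or.inl one_ne_zero)
    simpa using (ENNReal.tendsto_ofReal hcont.tendsto).mono_left nhdsWithin_le_nhds
  simpa using ge_of_tendsto (ENNReal.Tendsto.mul_const hlim (Or.inl one_ne_zero))
    (Filter.eventually_of_mem self_mem_nhdsWithin bound)

lemma IsConeWeight.isPosHomogeneous_indicator {n : ℕ} {S : Set (Euc n)} {W : Euc n → ℝ}
    (hW : IsConeWeight S α W) (hS : IsOpenConvexCone S) :
    IsPosHomogeneous α (S.indicator fun x => ENNReal.ofReal (W x)) := by
  have smul_mem_iff (x : Euc n) (t : ℝ) (ht : 0 < t) : t • x ∈ S ↔ x ∈ S :=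
    ⟨fun h => by simpa [smul_smul, ht.ne'] using hS.2.2 _ h t⁻¹ (inv_pos.2 ht),
      fun h => hS.2.2 x h t ht⟩
  intro x t ht
  by_cases hx : x ∈ S
  · rw [indicator_of_mem hx, indicator_of_mem ((smul_mem_iff x t ht).2 hx), hW.map_smul x hx t ht,
      ENNReal.ofReal_mul (by positivity)]
  · rw [indicator_of_notMem hx, indicator_of_notMem (mt (smul_mem_iff x t ht).1 hx), mul_zero]

theorem IsConeWeight.wArea_sphere_le {S : Set (Euc (m + 1))} {W : Euc (m + 1) → ℝ}
    (hW : IsConeWeight S α W) (hS : IsOpenConvexCone S) (hα : 0 ≤ α) :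
    wArea W (sphere 0 1 ∩ S) ≤ ENNReal.ofReal ((m + 1 : ℕ) + α) * wVol W (ball 0 1 ∩ S) := by
  have hSm := hS.1.measurableSet
  have h := (hW.isPosHomogeneous_indicator hS).setLIntegral_sphere_le
    (hW.continuous.measurable.ennreal_ofReal.indicator hSm) hα
  rwa [setLIntegral_indicator hSm, setLIntegral_indicator hSm, inter_comm, inter_comm S] at h

end Gnomonic

end Sphere

section Isoperimetry

lemma div_rpow_le_div_rpow_of_le_mul {D P Q U V : ℝ≥0∞} {p q : ℝ} (hp : 0 ≤ p) (hpq : p + q = 1)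
    (hU₀ : U ≠ 0) (hU : U ≠ ∞) (hV₀ : V ≠ 0) (hV : V ≠ ∞) (hQ : Q ≤ D * U)
    (hP : D * V ^ p * U ^ q ≤ P) : Q / U ^ p ≤ P / V ^ p := by
  have hUp₀ : U ^ p ≠ 0 := (ENNReal.rpow_pos (pos_iff_ne_zero.2 hU₀) hU).ne'
  have hVp₀ : V ^ p ≠ 0 := (ENNReal.rpow_pos (pos_iff_ne_zero.2 hV₀) hV).ne'
  have hUp : U ^ p ≠ ∞ := ENNReal.rpow_ne_top_of_nonneg hp hU
  have hVp : V ^ p ≠ ∞ := ENNReal.rpow_ne_top_of_nonneg hp hV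
  calc Q / U ^ p ≤ D * U ^ q := by
        rw [ENNReal.div_le_iff hUp₀ hUp, mul_assoc, ← ENNReal.rpow_add _ _ hU₀ hU, add_comm q, hpq,
          ENNReal.rpow_one]
        exact hQ
    _ ≤ P / V ^ p := by
        rw [ENNReal.le_div_iff_mul_le (Or.inl hVp₀) (Or.inl hVp), mul_right_comm]
        exact hP

theorem IsConeWeight.wArea_sphere_div_le {m : ℕ} {α : ℝ} {S : Set (Euc (m + 1))}
    {W f : Euc (m + 1) → ℝ} (hW : IsConeWeight S α W) (hS : IsOpenConvexCone S) (hα : 0 < α)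
    (hf : ContDiff ℝ 1 f) (hf₀ : IsCompact {x | f x = 0}) (hreg : ∀ x, f x = 0 → fderiv ℝ f x ≠ 0)
    (hfS : {x | f x < 0} ⊆ S) (hfb : Bornology.IsBounded {x | f x < 0})
    (hpos : wVol W {x | f x < 0} ≠ 0) :
    wArea W (sphere 0 1 ∩ S) /
        wVol W (ball 0 1 ∩ S) ^ (((m + 1 : ℕ) + α - 1) / ((m + 1 : ℕ) + α)) ≤
      wArea W ({x | f x = 0} ∩ S) /
        wVol W {x | f x < 0} ^ (((m + 1 : ℕ) + α - 1) / ((m + 1 : ℕ) + α)) := by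
  have hD : 1 ≤ ((m + 1 : ℕ) : ℝ) + α := by
    push_cast
    linarith [Nat.cast_nonneg (α := ℝ) m]
  have hD₀ : 0 < ((m + 1 : ℕ) : ℝ) + α := by linarith
  have hexp : (((m + 1 : ℕ) : ℝ) + α - 1) / ((m + 1 : ℕ) + α) + 1 / ((m + 1 : ℕ) + α) = 1 := by
    rw [← add_div, sub_add_cancel, div_self hD₀.ne']
  have hEo : IsOpen {x | f x < 0} := isOpen_lt hf.continuous continuous_const
  have hvol := wVol_ne_top hW.continuous hfb
  refine div_rpow_le_div_rpow_of_le_mul (div_nonneg (sub_nonneg.2 hD) hD₀.le) hexp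
    (hW.wVol_ball_ne_zero hS hfS hfb hpos)
    (wVol_ne_top hW.continuous (isBounded_ball.subset inter_subset_left)) hpos hvol
    (hW.wArea_sphere_le hS hα.le) ?_
  exact (hW.le_outerContent hS hα hD hEo (isOpen_ball.inter hS.1) hfS inter_subset_right
    hpos hvol).trans
      (hS.outerContent_le_wArea hf hf₀ hreg hfS hW.continuous hW.nonneg)

lemma exists_wArea_eq_mul_lintegral_hausdorffMeasure (m : ℕ) : ∃ c : ℝ≥0∞, c ≠ 0 ∧ c ≠ ∞ ∧
    ∀ (g : Euc (m + 1) → ℝ) (A : Set (Euc (m + 1))),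
      wArea g A = c * ∫⁻ x in A, ENNReal.ofReal (g x) ∂(μH[((m + 1 : ℕ) : ℝ) - 1]) := by
  refine ⟨_, ENNReal.coe_ne_zero.2
    (Measure.addHaarScalarFactor_volume_hausdorffMeasure_ne_zero m), ENNReal.coe_ne_top,
    fun g A => ?_⟩
  rw [wArea, Measure.euclideanHausdorffMeasure_def, Measure.restrict_smul, ENNReal.smul_def,
    lintegral_smul_measure, smul_eq_mul, Nat.cast_add_one, add_sub_cancel_right]

theorem stmt_0_general {n : ℕ} (hn : 1 ≤ n) {α : ℝ} (hα : 0 < α) {S : Set (Euc n)}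
    (hS : IsOpenConvexCone S) {w : Euc n → ℝ} (hw : IsAdmissibleWeight S α w) {E : Set (Euc n)}
    (hES : E ⊆ S) (hEb : Bornology.IsBounded E) {f : Euc n → ℝ} (hf : ContDiff ℝ 1 f)
    (hE : E = {x | f x < 0}) (hfrontier : frontier E = {x | f x = 0})
    (hreg : ∀ x ∈ frontier E, fderiv ℝ f x ≠ 0) (hEpos : 0 < wVol w E) :
    (∫⁻ x in sphere (0 : Euc n) 1 ∩ S, ENNReal.ofReal (w x) ∂(μH[(n : ℝ) - 1])) /
        (wVol w (ball (0 : Euc n) 1 ∩ S)) ^ (((n : ℝ) + α - 1) / ((n : ℝ) + α)) ≤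
      wPer S w E / (wVol w E) ^ (((n : ℝ) + α - 1) / ((n : ℝ) + α)) := by
  obtain ⟨m, rfl⟩ := Nat.exists_eq_add_of_le' hn
  obtain ⟨W, hW, hWw⟩ := hw.exists_isConeWeight hS hα
  have hcongr (μ : Measure (Euc (m + 1))) {A : Set (Euc (m + 1))} (hA : MeasurableSet A)
      (hAS : A ⊆ S) : ∫⁻ x in A, ENNReal.ofReal (w x) ∂μ = ∫⁻ x in A, ENNReal.ofReal (W x) ∂μ :=
    setLIntegral_congr_fun hA fun x hx => by rw [hWw (hAS hx)]
  have hSm := hS.1.measurableSet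
  have hEm : MeasurableSet E := hE ▸ (isOpen_lt hf.continuous continuous_const).measurableSet
  have hvol : wVol w E = wVol W E := hcongr _ hEm hES
  have hball : wVol w (ball 0 1 ∩ S) = wVol W (ball 0 1 ∩ S) :=
    hcongr _ (measurableSet_ball.inter hSm) inter_subset_right
  have hcompact : IsCompact {x | f x = 0} := by
    rw [← hfrontier]
    exact isCompact_of_isClosed_isBounded isClosed_frontier
      (hEb.closure.subset frontier_subset_closure)
  rw [hfrontier] at hreg
  rw [wPer, hfrontier, hvol, hball,
    hcongr _ (isClosed_sphere.measurableSet.inter hSm) inter_subset_right,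
    hcongr _ (hcompact.measurableSet.inter hSm) inter_subset_right]
  rw [hvol] at hEpos
  subst hE
  have key := hW.wArea_sphere_div_le hS hα hf hcompact hreg hES hEb hEpos.ne'
  obtain ⟨c, hc₀, hc, harea⟩ := exists_wArea_eq_mul_lintegral_hausdorffMeasure m
  rwa [harea, harea, mul_div_assoc, mul_div_assoc, ENNReal.mul_le_mul_iff_right hc₀ hc] at key

end Isoperimetry

/-- The weighted isoperimetric inequality in a convex cone. -/
theorem stmt_0 {n : ℕ} (hn : 1 ≤ n) (α : ℝ) (hα : 0 < α)
    (S : Set (Euc n)) (hS : IsOpenConvexCone S)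
    (w : Euc n → ℝ) (hw : IsAdmissibleWeight S α w)
    (E : Set (Euc n)) (hES : E ⊆ S) (hEo : IsOpen E)
    (hEb : Bornology.IsBounded E) (hEsm : HasSmoothBoundary E)
    (hEpos : 0 < wVol w E) :
    (∫⁻ x in sphere (0 : Euc n) 1 ∩ S, ENNReal.ofReal (w x) ∂(μH[(n : ℝ) - 1])) /
        (wVol w (ball (0 : Euc n) 1 ∩ S)) ^ (((n : ℝ) + α - 1) / ((n : ℝ) + α)) ≤
      wPer S w E / (wVol w E) ^ (((n : ℝ) + α - 1) / ((n : ℝ) + α)) := by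
  obtain ⟨f, hf, hE, hfrontier, hreg⟩ := hEsm
  exact stmt_0_general hn hα hS hw hES hEb (hf.of_le (by simp)) hE hfrontier hreg hEpos
end
end

section
/- Assume k = 0, i.e. Σ contains no lines. Let η : ∂B₁ ∩ Σ → ℝ be a smooth function, compactly supported in the open spherical cap ∂B₁ ∩ Σ, not identically zero, and satisfying ∫_{∂B₁ ∩ Σ} η w dH^{n−1} = 0. For ε > 0, define E_ε = { tθ : θ ∈ ∂B₁ ∩ Σ, 0 < t < 1 + ε η(θ) }. Then there exist ε₀ > 0, C > 0 and c > 0, depending on n, α, Σ, w and η, such that for all 0 < ε < ε₀ one has δ_w(E_ε) ≤ C ε² and A_w(E_ε) ≥ c ε. In particular, the exponent 1/2 in the quantitative inequality A_w(E) ≤ C √(δ_w(E)) cannot be improved. -/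
open MeasureTheory Metric Set
open scoped RealInnerProductSpace ENNReal NNReal Topology

noncomputable section

def isoQuot {n : ℕ} (S : Set (Euc n)) (α : ℝ) (w : Euc n → ℝ) (E : Set (Euc n)) : ℝ :=
  (wPer S w E).toReal / (wVol w E).toReal ^ (((n : ℝ) + α - 1) / ((n : ℝ) + α))

def wDeficit {n : ℕ} (S : Set (Euc n)) (α : ℝ) (w : Euc n → ℝ) (E : Set (Euc n)) : ℝ :=
  isoQuot S α w E / isoQuot S α w (ball (0 : Euc n) 1 ∩ S) - 1

/-- The "radial graph" set `{ tθ : θ ∈ ∂B₁ ∩ Σ, 0 < t < ρ(θ) }`. -/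
def radSet {n : ℕ} (S : Set (Euc n)) (ρ : Euc n → ℝ) : Set (Euc n) :=
  {x | ∃ θ ∈ sphere (0 : Euc n) 1 ∩ S, ∃ t : ℝ, 0 < t ∧ t < ρ θ ∧ x = t • θ}

/-!
In polar coordinates the weighted volume of `{tθ : 0 < t < ρ(θ)}` is a constant multiple of
`∫ ρ ^ (n + α)` over the cap, for the measure `w dH^{n-1}`. For `ρ = 1 + εη` with `∫ η = 0`,
Bernoulli's inequality shows that this volume is at least that of the unit ball. The map
`θ ↦ ρ(θ)θ` is locally Lipschitz with constant `√(ρ² + O(ε²))`, so the perimeter is at most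
`∫ ρ ^ α (ρ² + O(ε²)) ^ ((n - 1) / 2)`, where the first order term integrates to zero: the deficit
is `O(ε²)`. The symmetric difference with the ball of radius `r` has volume at least a constant
times `∫ |1 + εη - r|`, and because `η` has mean zero this is at least `(ε / 2) ∫ |η|`, whatever `r`
is.

Both computations use that `H^{n-1}` on the sphere is a multiple of the surface measure of polar
coordinates: balls of equal radius have equal mass for each of the two measures, and such a measure
is unique up to a factor (Christensen).
-/

section UniformlyDistributed

variable {X : Type*} [PseudoMetricSpace X] [MeasurableSpace X]

/-- A measure is uniformly distributed if the mass of a ball depends on its radius only. Two such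
measures on a compact space are proportional (Christensen), which identifies rotation invariant
measures on the sphere without any computation. -/
def IsUniformlyDistributed (μ : Measure X) : Prop :=
  ∀ x y : X, ∀ r : ℝ, μ (ball x r) = μ (ball y r)

namespace IsUniformlyDistributed

variable {μ ν : Measure X}

lemma measure_ball_pos [CompactSpace X] [NeZero μ] (hμ : IsUniformlyDistributed μ) (x : X)
    {r : ℝ} (hr : 0 < r) : 0 < μ (ball x r) := by
  rw [pos_iff_ne_zero]
  intro hzero
  obtain ⟨t, -, hcover⟩ := (isCompact_univ (X := X)).elim_nhds_subcover (fun y => ball y r)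
    fun y _ => ball_mem_nhds y hr
  refine NeZero.ne μ (Measure.measure_univ_eq_zero.1 (measure_mono_null hcover ?_))
  exact (measure_biUnion_null_iff t.countable_toSet).2 fun y _ => (hμ y x r).trans hzero

variable [BorelSpace X] [SecondCountableTopology X] [IsFiniteMeasure μ] [IsFiniteMeasure ν]

lemma setIntegral_dist_lt_fst (hμ : IsUniformlyDistributed μ) {f : X → ℝ} (hf : Integrable f ν)
    (x₀ : X) (r : ℝ) :
    ∫ p in {p : X × X | dist p.1 p.2 < r}, f p.1 ∂(ν.prod μ) =
      μ.real (ball x₀ r) * ∫ x, f x ∂ν := by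
  have hK : MeasurableSet {p : X × X | dist p.1 p.2 < r} :=
    (isOpen_lt (by fun_prop) (by fun_prop)).measurableSet
  rw [← integral_indicator hK, integral_prod _ ((hf.comp_fst μ).indicator hK),
    ← integral_const_mul]
  congr 1 with x
  have hslice : (fun y => {p : X × X | dist p.1 p.2 < r}.indicator (fun p => f p.1) (x, y)) =
      (ball x r).indicator fun _ => f x := by
    ext y
    simp only [indicator, mem_ball, mem_ofPred_eq, dist_comm]
  rw [hslice, integral_indicator measurableSet_ball, setIntegral_const, smul_eq_mul,
    measureReal_def, measureReal_def, hμ x x₀]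

lemma setIntegral_dist_lt_snd (hν : IsUniformlyDistributed ν) {f : X → ℝ} (hf : Integrable f μ)
    (x₀ : X) (r : ℝ) :
    ∫ p in {p : X × X | dist p.1 p.2 < r}, f p.2 ∂(ν.prod μ) =
      ν.real (ball x₀ r) * ∫ x, f x ∂μ := by
  rw [← hν.setIntegral_dist_lt_fst hf x₀ r,
    ← Measure.measurePreserving_swap.setIntegral_preimage_emb
      MeasurableEquiv.prodComm.measurableEmbedding]
  simp only [preimage_ofPred_eq, Prod.fst_swap, Prod.snd_swap, dist_comm]

variable [CompactSpace X]

lemma abs_integral_sub_integral_le [NeZero μ] (hμ : IsUniformlyDistributed μ)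
    (hν : IsUniformlyDistributed ν) {f : X → ℝ} (hf : Continuous f) {δ : ℝ} (hδ : 0 < δ) :
    |μ.real univ * ∫ x, f x ∂ν - ν.real univ * ∫ x, f x ∂μ| ≤ δ * (μ.real univ * ν.real univ) := by
  have hint : ∀ (m : Measure X) [IsFiniteMeasure m], Integrable f m := fun m _ =>
    hf.integrable_of_hasCompactSupport (.of_compactSpace f)
  obtain ⟨r, hr, hfr⟩ :=
    Metric.uniformContinuous_iff.1 (CompactSpace.uniformContinuous_of_continuous hf) δ hδ
  obtain ⟨x₀⟩ : Nonempty X := μ.nonempty_of_neZero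
  set K : Set (X × X) := {p | dist p.1 p.2 < r}
  have hmass : μ.real (ball x₀ r) * ν.real univ = ν.real (ball x₀ r) * μ.real univ := by
    simpa using (hμ.setIntegral_dist_lt_fst (ν := ν) (integrable_const (1 : ℝ)) x₀ r).symm.trans
      (hν.setIntegral_dist_lt_snd (integrable_const (1 : ℝ)) x₀ r)
  have hpos : 0 < μ.real (ball x₀ r) :=
    ENNReal.toReal_pos (hμ.measure_ball_pos x₀ hr).ne' (measure_ne_top _ _)
  have hclose : |μ.real (ball x₀ r) * ∫ x, f x ∂ν - ν.real (ball x₀ r) * ∫ x, f x ∂μ| ≤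
      δ * (μ.real (ball x₀ r) * ν.real univ) := by
    have hsize : (ν.prod μ).real K = μ.real (ball x₀ r) * ν.real univ := by
      simpa using hμ.setIntegral_dist_lt_fst (ν := ν) (integrable_const (1 : ℝ)) x₀ r
    rw [← hμ.setIntegral_dist_lt_fst (hint ν) x₀ r, ← hν.setIntegral_dist_lt_snd (hint μ) x₀ r,
      ← integral_sub ((hint ν).comp_fst μ).restrict ((hint μ).comp_snd ν).restrict, ← hsize,
      ← Real.norm_eq_abs]
    refine norm_setIntegral_le_of_norm_le_const (measure_lt_top (ν.prod μ) K) fun p hp => ?_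
    rw [← dist_eq_norm]
    exact (hfr hp).le
  refine le_of_mul_le_mul_left ?_ hpos
  calc μ.real (ball x₀ r) * |μ.real univ * ∫ x, f x ∂ν - ν.real univ * ∫ x, f x ∂μ|
      = μ.real univ *
          |μ.real (ball x₀ r) * ∫ x, f x ∂ν - ν.real (ball x₀ r) * ∫ x, f x ∂μ| := by
        rw [← abs_of_pos hpos, ← abs_mul, abs_of_pos hpos,
          ← abs_of_nonneg (measureReal_nonneg (μ := μ) (s := univ)), ← abs_mul,
          abs_of_nonneg measureReal_nonneg]
        congr 1
        linear_combination (-∫ x, f x ∂μ) * hmass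
    _ ≤ μ.real univ * (δ * (μ.real (ball x₀ r) * ν.real univ)) := by gcongr
    _ = μ.real (ball x₀ r) * (δ * (μ.real univ * ν.real univ)) := by ring

theorem measure_univ_smul_eq (hμ : IsUniformlyDistributed μ) (hν : IsUniformlyDistributed ν) :
    μ univ • ν = ν univ • μ := by
  rcases eq_zero_or_neZero μ with rfl | _
  · simp
  have : IsFiniteMeasure (μ univ • ν) := ν.smul_finite (measure_ne_top μ univ)
  have : IsFiniteMeasure (ν univ • μ) := μ.smul_finite (measure_ne_top ν univ)
  refine ext_of_forall_integral_eq_of_IsFiniteMeasure fun f => ?_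
  simp only [integral_smul_measure, smul_eq_mul]
  have hzero : |μ.real univ * ∫ x, f x ∂ν - ν.real univ * ∫ x, f x ∂μ| ≤ 0 := by
    refine ge_of_tendsto' (f := fun k : ℕ => 1 / ((k : ℝ) + 1) * (μ.real univ * ν.real univ))
      (x := Filter.atTop) ?_
      fun k => hμ.abs_integral_sub_integral_le hν f.continuous (by positivity)
    simpa using tendsto_one_div_add_atTop_nhds_zero_nat.mul_const (μ.real univ * ν.real univ)
  exact sub_eq_zero.1 (abs_nonpos_iff.1 hzero)

end IsUniformlyDistributed

end UniformlyDistributed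

section Sphere

open Module

open scoped Pointwise

variable {E : Type*} [NormedAddCommGroup E] [InnerProductSpace ℝ E]

lemma exists_linearIsometryEquiv_apply_eq {x y : E} (h : ‖x‖ = ‖y‖) :
    ∃ T : E ≃ₗᵢ[ℝ] E, T x = y :=
  ⟨(ℝ ∙ (x - y))ᗮ.reflection, Submodule.reflection_sub h⟩

lemma exists_linearIsometryEquiv_image_ball_eq (x y : sphere (0 : E) 1) (r : ℝ) :
    ∃ T : E ≃ₗᵢ[ℝ] E, T '' (Subtype.val '' ball x r) = Subtype.val '' ball y r := by
  obtain ⟨T, hT⟩ := exists_linearIsometryEquiv_apply_eq (x := (x : E)) (y := y) (by simp)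
  refine ⟨T, ?_⟩
  have hsphere : {z : E | z ∈ sphere (0 : E) 1} = sphere 0 1 := rfl
  rw [Subtype.image_ball, Subtype.image_ball, hsphere, image_inter T.injective, T.image_ball, hT,
    T.image_sphere, map_zero]

lemma finrank_orthogonal_span_singleton_add_one [FiniteDimensional ℝ E] {v : E} (hv : v ≠ 0) :
    finrank ℝ (ℝ ∙ v)ᗮ + 1 = finrank ℝ E := by
  rw [add_comm, ← finrank_span_singleton (K := ℝ) hv, Submodule.finrank_add_finrank_orthogonal]

lemma finrank_sub_one_nonneg [FiniteDimensional ℝ E] [Nontrivial E] :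
    0 ≤ (finrank ℝ E : ℝ) - 1 := by
  rw [sub_nonneg]; exact_mod_cast finrank_pos (R := ℝ) (M := E)

lemma image_normalize_mem_nhdsWithin_sphere {v : E} (hv : ‖v‖ = 1) :
    (fun u : (ℝ ∙ v)ᗮ => ‖(u : E) + v‖⁻¹ • ((u : E) + v)) '' closedBall 0 3 ∈ 𝓝[sphere 0 1] v := by
  have hopen : {x : E | 2⁻¹ < ⟪v, x⟫} ∈ 𝓝 v :=
    (isOpen_lt continuous_const (by fun_prop)).mem_nhds (by norm_num [hv])
  filter_upwards [nhdsWithin_le_nhds hopen, self_mem_nhdsWithin] with x (hx : 2⁻¹ < ⟪v, x⟫) hx1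
  have hpos : 0 < ⟪v, x⟫ := by linarith
  have hxnorm : ‖x‖ = 1 := by simpa using hx1
  have hmem : ⟪v, x⟫⁻¹ • x - v ∈ (ℝ ∙ v)ᗮ := by
    rw [Submodule.mem_orthogonal_singleton_iff_inner_right, inner_sub_right, inner_smul_right,
      inv_mul_cancel₀ hpos.ne', real_inner_self_eq_norm_sq, hv]
    norm_num
  refine ⟨⟨_, hmem⟩, ?_, ?_⟩
  · rw [mem_closedBall_zero_iff, Submodule.coe_norm]
    calc ‖⟪v, x⟫⁻¹ • x - v‖ ≤ ⟪v, x⟫⁻¹ + 1 := by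
          simpa [norm_smul, hxnorm, hv, abs_of_pos hpos] using norm_sub_le (⟪v, x⟫⁻¹ • x) v
      _ ≤ 3 := by linarith [inv_le_of_inv_le₀ two_pos hx.le]
  · simp [norm_smul, hxnorm, abs_of_pos hpos, smul_smul, hpos.ne']

variable [MeasurableSpace E] [BorelSpace E]

lemma isUniformlyDistributed_hausdorffMeasure_sphere {d : ℝ} (hd : 0 ≤ d) :
    IsUniformlyDistributed (μH[d] : Measure (sphere (0 : E) 1)) := by
  intro x y r
  obtain ⟨T, hT⟩ := exists_linearIsometryEquiv_image_ball_eq x y r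
  have hval : Isometry ((↑) : sphere (0 : E) 1 → E) := isometry_subtype_coe
  rw [← hval.hausdorffMeasure_image (.inl hd), ← hval.hausdorffMeasure_image (.inl hd), ← hT,
    T.isometry.hausdorffMeasure_image (.inl hd)]

variable [FiniteDimensional ℝ E]

lemma isUniformlyDistributed_toSphere_volume :
    IsUniformlyDistributed (volume : Measure E).toSphere := by
  intro x y r
  obtain ⟨T, hT⟩ := exists_linearIsometryEquiv_image_ball_eq x y r
  rw [Measure.toSphere_apply' _ measurableSet_ball, Measure.toSphere_apply' _ measurableSet_ball,
    ← hT]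
  have hcone : Ioo (0 : ℝ) 1 • T '' (Subtype.val '' ball x r) =
      T '' (Ioo (0 : ℝ) 1 • Subtype.val '' ball x r) :=
    (image_image2_distrib_right T.map_smul).symm
  rw [hcone, T.image_eq_preimage_symm]
  exact congrArg _ (T.symm.measurePreserving.measure_preimage_equiv
    (f := T.symm.toHomeomorph.toMeasurableEquiv) _).symm

lemma hausdorffMeasure_sphere_lt_top [Nontrivial E] :
    μH[(finrank ℝ E : ℝ) - 1] (sphere (0 : E) 1) < ∞ := by
  refine (isCompact_sphere 0 1).measure_lt_top_of_nhdsWithin fun v hv => ?_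
  have hv1 : ‖v‖ = 1 := by simpa using hv
  have hv0 : v ≠ 0 := norm_ne_zero_iff.1 (by norm_num [hv1])
  have hdim : (finrank ℝ E : ℝ) - 1 = finrank ℝ (ℝ ∙ v)ᗮ := by
    rw [← finrank_orthogonal_span_singleton_add_one hv0]; push_cast; ring
  set F : (ℝ ∙ v)ᗮ → E := fun u => ‖(u : E) + v‖⁻¹ • ((u : E) + v)
  have hne : ∀ u : (ℝ ∙ v)ᗮ, (u : E) + v ≠ 0 := fun u hu => by
    have := congrArg (inner ℝ v) hu
    simp [inner_add_right, hv1, Submodule.mem_orthogonal_singleton_iff_inner_right.1 u.2] at this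
  have hF : ContDiff ℝ 1 F := by
    have hadd : ContDiff ℝ 1 fun u : (ℝ ∙ v)ᗮ => (u : E) + v :=
      (ℝ ∙ v)ᗮ.subtypeL.contDiff.add contDiff_const
    exact ((hadd.norm ℝ hne).inv fun u => norm_ne_zero_iff.2 (hne u)).smul hadd
  obtain ⟨K, hK⟩ := hF.contDiffOn.exists_lipschitzOnWith one_ne_zero
    (convex_closedBall (0 : (ℝ ∙ v)ᗮ) 3) (isCompact_closedBall 0 3)
  refine ⟨_, image_normalize_mem_nhdsWithin_sphere hv1, ?_⟩
  rw [hdim]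
  exact (hK.hausdorffMeasure_image_le (Nat.cast_nonneg _)).trans_lt
    (ENNReal.mul_lt_top (by finiteness) (isCompact_closedBall 0 3).measure_lt_top)

lemma hausdorffMeasure_sphere_pos [Nontrivial E] :
    0 < μH[(finrank ℝ E : ℝ) - 1] (sphere (0 : E) 1) := by
  obtain ⟨v, hv⟩ := exists_norm_eq E zero_le_one
  have hv0 : v ≠ 0 := norm_ne_zero_iff.1 (by norm_num [hv])
  have hdim : (finrank ℝ E : ℝ) - 1 = finrank ℝ (ℝ ∙ v)ᗮ := by
    rw [← finrank_orthogonal_span_singleton_add_one hv0]; push_cast; ring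
  have hball : ball 0 1 ⊆ (ℝ ∙ v)ᗮ.orthogonalProjectionOnto '' sphere (0 : E) 1 := by
    intro u hu
    have hu1 : ‖u‖ < 1 := by simpa using hu
    have huv : ⟪(u : E), v⟫ = 0 := Submodule.mem_orthogonal_singleton_iff_inner_left.1 u.2
    refine ⟨u + √(1 - ‖u‖ ^ 2) • v, ?_, ?_⟩
    · rw [mem_sphere_zero_iff_norm, ← sq_eq_sq₀ (norm_nonneg _) zero_le_one, norm_add_sq_real,
        norm_smul, hv, inner_smul_right, huv, mul_one, Real.norm_eq_abs, sq_abs,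
        Real.sq_sqrt (by nlinarith [norm_nonneg u]), Submodule.coe_norm]
      ring
    · simp
  rw [hdim]
  calc 0 < μH[finrank ℝ (ℝ ∙ v)ᗮ] (ball (0 : (ℝ ∙ v)ᗮ) 1) := measure_ball_pos _ _ one_pos
    _ ≤ μH[finrank ℝ (ℝ ∙ v)ᗮ] ((ℝ ∙ v)ᗮ.orthogonalProjectionOnto '' sphere (0 : E) 1) :=
        measure_mono hball
    _ ≤ _ := hausdorffMeasure_orthogonalProjectionOnto_le _ _ _ (Nat.cast_nonneg _)

lemma hausdorffMeasure_univ_sphere [Nontrivial E] :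
    (μH[(finrank ℝ E : ℝ) - 1] : Measure (sphere (0 : E) 1)) univ =
      μH[(finrank ℝ E : ℝ) - 1] (sphere (0 : E) 1) := by
  rw [← isometry_subtype_coe.hausdorffMeasure_image (.inl finrank_sub_one_nonneg), image_univ,
    Subtype.range_coe]

instance isFiniteMeasure_hausdorffMeasure_sphere [Nontrivial E] :
    IsFiniteMeasure (μH[(finrank ℝ E : ℝ) - 1] : Measure (sphere (0 : E) 1)) :=
  ⟨hausdorffMeasure_univ_sphere.trans_lt hausdorffMeasure_sphere_lt_top⟩

theorem exists_toSphere_eq_smul_hausdorffMeasure [Nontrivial E] :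
    ∃ c : ℝ≥0, 0 < c ∧ (volume : Measure E).toSphere =
      c • (μH[(finrank ℝ E : ℝ) - 1] : Measure (sphere (0 : E) 1)) := by
  set τ := (volume : Measure E).toSphere
  set σ : Measure (sphere (0 : E) 1) := μH[(finrank ℝ E : ℝ) - 1]
  have hfin : σ univ ≠ ∞ := measure_ne_top σ univ
  have hpos : σ univ ≠ 0 :=
    (hausdorffMeasure_sphere_pos.trans_eq hausdorffMeasure_univ_sphere.symm).ne'
  have hτ : τ univ ≠ 0 := Measure.measure_univ_ne_zero.2 (Measure.toSphere_ne_zero _)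
  have hc : τ univ / σ univ ≠ ∞ := ENNReal.div_ne_top (measure_ne_top _ _) hpos
  refine ⟨(τ univ / σ univ).toNNReal, ENNReal.toNNReal_pos (ENNReal.div_pos hτ hfin).ne' hc, ?_⟩
  have hprop : σ univ • τ = τ univ • σ :=
    (isUniformlyDistributed_hausdorffMeasure_sphere finrank_sub_one_nonneg).measure_univ_smul_eq
      isUniformlyDistributed_toSphere_volume
  calc τ = (σ univ)⁻¹ • σ univ • τ := by
        rw [smul_smul, ENNReal.inv_mul_cancel hpos hfin, one_smul]
    _ = (τ univ / σ univ) • σ := by rw [hprop, smul_smul, mul_comm, div_eq_mul_inv]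
    _ = (τ univ / σ univ).toNNReal • σ := by
        rw [← ENNReal.coe_toNNReal hc]; rfl

instance isOpenPosMeasure_hausdorffMeasure_sphere [Nontrivial E] :
    (μH[(finrank ℝ E : ℝ) - 1] : Measure (sphere (0 : E) 1)).IsOpenPosMeasure := by
  obtain ⟨c, -, htoSphere⟩ := exists_toSphere_eq_smul_hausdorffMeasure (E := E)
  refine Measure.AbsolutelyContinuous.isOpenPosMeasure (μ := (volume : Measure E).toSphere) ?_
  rw [htoSphere]
  exact Measure.smul_absolutelyContinuous

end Sphere

section Polar

open Module

lemma setLIntegral_rpow_volumeIoiPow {m : ℕ} {a R : ℝ} (ha : 0 < m + 1 + a) (hR : 0 ≤ R) :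
    ∫⁻ t in {t : Ioi (0 : ℝ) | (t : ℝ) < R}, ENNReal.ofReal ((t : ℝ) ^ a)
        ∂Measure.volumeIoiPow m =
      ENNReal.ofReal (R ^ (m + 1 + a) / (m + 1 + a)) := by
  have himage : Subtype.val '' {t : Ioi (0 : ℝ) | (t : ℝ) < R} = Ioo 0 R := by
    ext t
    simp [and_comm]
  rw [Measure.volumeIoiPow, setLIntegral_withDensity_eq_setLIntegral_mul _ (by fun_prop)
    (by fun_prop) (measurableSet_lt (by fun_prop) measurable_const)]
  simp only [Pi.mul_apply]
  rw [setLIntegral_subtype measurableSet_Ioi _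
      fun t : ℝ => ENNReal.ofReal (t ^ m) * ENNReal.ofReal (t ^ a), himage]
  calc ∫⁻ t in Ioo 0 R, ENNReal.ofReal (t ^ m) * ENNReal.ofReal (t ^ a)
      = ∫⁻ t in Ioo 0 R, ENNReal.ofReal (t ^ (m + a)) := by
        refine setLIntegral_congr_fun measurableSet_Ioo fun t ht => ?_
        rw [← ENNReal.ofReal_mul (pow_nonneg ht.1.le m), Real.rpow_add ht.1, Real.rpow_natCast]
    _ = ENNReal.ofReal (∫ t in Ioo 0 R, t ^ (m + a)) := by
        refine (ofReal_integral_eq_lintegral_ofReal ?_ ?_).symm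
        · rw [← IntegrableOn, ← intervalIntegrable_iff_integrableOn_Ioo_of_le hR]
          exact intervalIntegral.intervalIntegrable_rpow' (by linarith)
        · filter_upwards [ae_restrict_mem measurableSet_Ioo] with t ht
          exact Real.rpow_nonneg ht.1.le _
    _ = ENNReal.ofReal (R ^ (m + 1 + a) / (m + 1 + a)) := by
        rw [← integral_Ioc_eq_integral_Ioo, ← intervalIntegral.integral_of_le hR,
          integral_rpow (.inl (by linarith)), add_right_comm (m : ℝ) a 1,
          Real.zero_rpow ha.ne', sub_zero]

variable {E : Type*} [NormedAddCommGroup E] [NormedSpace ℝ E] [MeasurableSpace E] [BorelSpace E]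
  [FiniteDimensional ℝ E] [Nontrivial E]

lemma setLIntegral_eq_setLIntegral_polar (μ : Measure E) [μ.IsAddHaarMeasure] (A : Set E)
    (f : E → ℝ≥0∞) :
    ∫⁻ x in A, f x ∂μ =
      ∫⁻ p in {p : sphere (0 : E) 1 × Ioi (0 : ℝ) | (p.2 : ℝ) • (p.1 : E) ∈ A},
        f ((p.2 : ℝ) • (p.1 : E)) ∂(μ.toSphere.prod (Measure.volumeIoiPow (finrank ℝ E - 1))) := by
  have hpunctured : (A ∩ {0}ᶜ : Set E) =ᵐ[μ] A :=
    inter_ae_eq_left_of_ae_eq_univ (ae_eq_univ.2 (by simp))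
  have hpolar : ∀ x : ({0}ᶜ : Set E), ((homeomorphUnitSphereProd E x).2 : ℝ) •
      ((homeomorphUnitSphereProd E x).1 : E) = x := fun x =>
    congrArg Subtype.val ((homeomorphUnitSphereProd E).symm_apply_apply x)
  rw [← setLIntegral_congr hpunctured, inter_comm, ← Subtype.image_preimage_val,
    ← setLIntegral_subtype (measurableSet_singleton (0 : E)).compl,
    ← μ.measurePreserving_homeomorphUnitSphereProd.setLIntegral_comp_preimage_emb
      (Homeomorph.measurableEmbedding _)]
  simp only [preimage_ofPred_eq, hpolar]
  rfl

end Polar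

lemma setLIntegral_prod_mul {X Y : Type*} [MeasurableSpace X] [MeasurableSpace Y] {μ : Measure X}
    {ν : Measure Y} [SFinite ν] {A : Set (X × Y)} (hA : MeasurableSet A) {f : X → ℝ≥0∞}
    (hf : Measurable f) {g : Y → ℝ≥0∞} (hg : Measurable g) :
    ∫⁻ p in A, f p.1 * g p.2 ∂(μ.prod ν) =
      ∫⁻ x, f x * ∫⁻ y in Prod.mk x ⁻¹' A, g y ∂ν ∂μ := by
  have hfg : Measurable fun p : X × Y => f p.1 * g p.2 := by fun_prop
  rw [← lintegral_indicator hA, lintegral_prod _ (hfg.indicator hA).aemeasurable]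
  refine lintegral_congr fun x => ?_
  rw [← lintegral_const_mul _ hg, ← lintegral_indicator (measurable_prodMk_left hA)]
  rfl

section Weight

variable {n : ℕ} {S : Set (Euc n)} {α : ℝ} {w : Euc n → ℝ}

/-- A weight on an open cone as in the isoperimetric problem, but without the convexity of the cone
and the concavity of `w ^ (1 / α)`. The cone is allowed to contain its vertex. -/
structure IsHomogeneousWeight (S : Set (Euc n)) (α : ℝ) (w : Euc n → ℝ) : Prop where
  isOpen : IsOpen S
  smul_mem : ∀ x ∈ S, ∀ t : ℝ, 0 < t → t • x ∈ S
  continuousOn : ContinuousOn w (closure S)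
  nonneg : ∀ x ∈ S, 0 ≤ w x
  map_smul : ∀ x ∈ S, ∀ t : ℝ, 0 < t → w (t • x) = t ^ α * w x

/-- The weighted surface measure `w dH^{n-1}` on the spherical cap `∂B₁ ∩ Σ`, as a measure on the
unit sphere. -/
def capMeasure (S : Set (Euc n)) (w : Euc n → ℝ) : Measure (sphere (0 : Euc n) 1) :=
  μH[(n : ℝ) - 1].withDensity fun θ => ENNReal.ofReal (S.indicator w θ)

namespace IsHomogeneousWeight

lemma measurable_indicator (hw : IsHomogeneousWeight S α w) : Measurable (S.indicator w) := by
  classical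
  rw [← piecewise_eq_indicator]
  exact (hw.continuousOn.mono subset_closure).measurable_piecewise continuousOn_const
    hw.isOpen.measurableSet

lemma measurable_density (hw : IsHomogeneousWeight S α w) :
    Measurable fun θ : sphere (0 : Euc n) 1 => ENNReal.ofReal (S.indicator w θ) :=
  (hw.measurable_indicator.comp measurable_subtype_coe).ennreal_ofReal

lemma smul_mem_iff (hw : IsHomogeneousWeight S α w) {x : Euc n} {t : ℝ} (ht : 0 < t) :
    t • x ∈ S ↔ x ∈ S := by
  refine ⟨fun h => ?_, fun h => hw.smul_mem x h t ht⟩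
  simpa [smul_smul, ht.ne'] using hw.smul_mem _ h t⁻¹ (inv_pos.2 ht)

lemma map_zero (hw : IsHomogeneousWeight S α w) (hα : 0 < α) (h0 : (0 : Euc n) ∈ S) : w 0 = 0 := by
  have htwo : w 0 = 2 ^ α * w 0 := by simpa using hw.map_smul 0 h0 2 two_pos
  nlinarith [hw.nonneg 0 h0, Real.one_lt_rpow one_lt_two hα]

end IsHomogeneousWeight

lemma smul_mem_radSet_iff {ρ : Euc n → ℝ} {θ : Euc n} (hθ : ‖θ‖ = 1) {t : ℝ} (ht : 0 < t) :
    t • θ ∈ radSet S ρ ↔ θ ∈ S ∧ t < ρ θ := by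
  refine ⟨?_, fun h => ⟨θ, ⟨by simpa using hθ, h.1⟩, t, ht, h.2, rfl⟩⟩
  rintro ⟨ψ, ⟨hψ, hψS⟩, s, hs, hsρ, h⟩
  have hψ1 : ‖ψ‖ = 1 := by simpa using hψ
  obtain rfl : t = s := by
    simpa [norm_smul, hθ, hψ1, abs_of_pos ht, abs_of_pos hs] using congrArg norm h
  obtain rfl : θ = ψ := smul_right_injective _ ht.ne' h
  exact ⟨hψS, hsρ⟩

lemma exists_sphere_smul_eq {x : Euc n} (hx : x ≠ 0) :
    ∃ θ ∈ sphere (0 : Euc n) 1, x = ‖x‖ • θ :=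
  ⟨‖x‖⁻¹ • x, by simp [norm_smul, hx], by simp [smul_smul, hx]⟩

lemma radSet_subset_radSet {ρ₁ ρ₂ : Euc n → ℝ} (h : ∀ θ ∈ sphere (0 : Euc n) 1, ρ₁ θ ≤ ρ₂ θ) :
    radSet S ρ₁ ⊆ radSet S ρ₂ := by
  rintro x ⟨θ, hθ, t, ht, htρ, rfl⟩
  exact ⟨θ, hθ, t, ht, htρ.trans_le (h θ hθ.1), rfl⟩

lemma IsHomogeneousWeight.radSet_const (hw : IsHomogeneousWeight S α w) (r : ℝ) :
    radSet S (fun _ => r) = (ball 0 r ∩ S) \ {0} := by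
  ext x
  constructor
  · rintro ⟨θ, ⟨hθ, hθS⟩, t, ht, htr, rfl⟩
    have hθ1 : ‖θ‖ = 1 := by simpa using hθ
    have hθ0 : θ ≠ 0 := norm_ne_zero_iff.1 (by norm_num [hθ1])
    exact ⟨⟨by simpa [norm_smul, hθ1, abs_of_pos ht] using htr, hw.smul_mem θ hθS t ht⟩,
      smul_ne_zero ht.ne' hθ0⟩
  · rintro ⟨⟨hxr, hxS⟩, hx0 : x ≠ 0⟩
    obtain ⟨θ, hθ, hx⟩ := exists_sphere_smul_eq hx0
    rw [hx, smul_mem_radSet_iff (by simpa using hθ) (norm_pos_iff.2 hx0)]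
    exact ⟨(hw.smul_mem_iff (norm_pos_iff.2 hx0)).1 (hx ▸ hxS), by simpa using hxr⟩

variable [NeZero n]

lemma IsHomogeneousWeight.wVol_ball_inter (hw : IsHomogeneousWeight S α w) (r : ℝ) :
    wVol w (ball 0 r ∩ S) = wVol w (radSet S fun _ => r) := by
  rw [hw.radSet_const, wVol, wVol]
  exact (setLIntegral_congr (sdiff_null_ae_eq_self (measure_singleton 0))).symm

lemma IsHomogeneousWeight.wVol_radSet_eq_lintegral_toSphere (hw : IsHomogeneousWeight S α w)
    (hα : 0 < n + α) {ρ : Euc n → ℝ} (hρ : ContinuousOn ρ (sphere 0 1))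
    (hρ0 : ∀ θ ∈ sphere (0 : Euc n) 1, 0 ≤ ρ θ) :
    wVol w (radSet S ρ) =
      ∫⁻ θ, ENNReal.ofReal (S.indicator w θ) *
        ENNReal.ofReal (ρ θ ^ (n + α) / (n + α)) ∂(volume : Measure (Euc n)).toSphere := by
  have hdim : ((n - 1 : ℕ) : ℝ) + 1 = n := by
    exact_mod_cast Nat.sub_add_cancel (NeZero.one_le (n := n))
  set A : Set (sphere (0 : Euc n) 1 × Ioi (0 : ℝ)) := {p | (p.2 : ℝ) < ρ p.1}
  have hA : MeasurableSet A :=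
    measurableSet_lt (by fun_prop) (hρ.domRestrict.measurable.comp measurable_fst)
  have hpolar : {p : sphere (0 : Euc n) 1 × Ioi (0 : ℝ) | (p.2 : ℝ) • (p.1 : Euc n) ∈ radSet S ρ} =
      (fun p => (p.1 : Euc n)) ⁻¹' S ∩ A :=
    ext fun p => smul_mem_radSet_iff (by simp) p.2.2
  have hcone : MeasurableSet
      ((fun p : sphere (0 : Euc n) 1 × Ioi (0 : ℝ) => (p.1 : Euc n)) ⁻¹' S) :=
    hw.isOpen.measurableSet.preimage (by fun_prop)
  rw [wVol, setLIntegral_eq_setLIntegral_polar, finrank_euclideanSpace_fin, hpolar]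
  calc ∫⁻ p in (fun p => (p.1 : Euc n)) ⁻¹' S ∩ A, ENNReal.ofReal (w ((p.2 : ℝ) • (p.1 : Euc n)))
          ∂((volume : Measure (Euc n)).toSphere.prod (Measure.volumeIoiPow (n - 1)))
      = ∫⁻ p in A, ENNReal.ofReal (S.indicator w p.1) * ENNReal.ofReal ((p.2 : ℝ) ^ α)
          ∂((volume : Measure (Euc n)).toSphere.prod (Measure.volumeIoiPow (n - 1))) := by
        rw [← setLIntegral_indicator hcone]
        refine lintegral_congr fun p => ?_
        by_cases hp : (p.1 : Euc n) ∈ S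
        · rw [indicator_of_mem (by exact hp), indicator_of_mem hp, hw.map_smul _ hp _ p.2.2,
            mul_comm, ENNReal.ofReal_mul (hw.nonneg _ hp)]
        · rw [indicator_of_notMem (by exact hp), indicator_of_notMem hp, ENNReal.ofReal_zero,
            zero_mul]
    _ = ∫⁻ θ : sphere (0 : Euc n) 1, ENNReal.ofReal (S.indicator w θ) *
          ∫⁻ t in {t : Ioi (0 : ℝ) | (t : ℝ) < ρ θ}, ENNReal.ofReal ((t : ℝ) ^ α)
            ∂Measure.volumeIoiPow (n - 1) ∂(volume : Measure (Euc n)).toSphere :=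
        setLIntegral_prod_mul hA hw.measurable_density (g := fun t => .ofReal ((t : ℝ) ^ α))
          (by fun_prop)
    _ = _ := by
        refine lintegral_congr fun θ => ?_
        rw [setLIntegral_rpow_volumeIoiPow (by rwa [hdim]) (hρ0 θ θ.2), hdim]

theorem IsHomogeneousWeight.exists_wVol_radSet_eq (hw : IsHomogeneousWeight S α w)
    (hα : 0 < n + α) :
    ∃ κ : ℝ≥0, 0 < κ ∧ ∀ ρ : Euc n → ℝ, ContinuousOn ρ (sphere 0 1) →
      (∀ θ ∈ sphere (0 : Euc n) 1, 0 ≤ ρ θ) →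
      wVol w (radSet S ρ) = κ * ∫⁻ θ, ENNReal.ofReal (ρ θ ^ (n + α)) ∂capMeasure S w := by
  obtain ⟨c, hc, htoSphere⟩ := exists_toSphere_eq_smul_hausdorffMeasure (E := Euc n)
  rw [finrank_euclideanSpace_fin] at htoSphere
  refine ⟨c * (n + α).toNNReal⁻¹, by positivity, fun ρ hρ hρ0 => ?_⟩
  have hmeas : Measurable fun θ : sphere (0 : Euc n) 1 => ENNReal.ofReal (ρ θ ^ (n + α)) :=
    (hρ.domRestrict.measurable.pow_const _).ennreal_ofReal
  rw [hw.wVol_radSet_eq_lintegral_toSphere hα hρ hρ0, htoSphere, capMeasure,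
    lintegral_withDensity_eq_lintegral_mul _ hw.measurable_density hmeas, lintegral_smul_measure,
    ENNReal.smul_def, smul_eq_mul, ENNReal.coe_mul, mul_assoc,
    ← lintegral_const_mul _ (hw.measurable_density.mul hmeas)]
  congr 1
  refine lintegral_congr fun θ => ?_
  rw [div_eq_inv_mul, ENNReal.ofReal_mul (inv_nonneg.2 hα.le), mul_left_comm]
  simp only [ENNReal.ofReal, Real.toNNReal_inv, Pi.mul_apply]

end Weight

section HausdorffMeasure

variable {X Y : Type*} [EMetricSpace X] [MeasurableSpace X] [BorelSpace X] [EMetricSpace Y]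
  [MeasurableSpace Y] [BorelSpace Y] {d : ℝ}

lemma measurePreserving_subtype_coe_hausdorffMeasure (hd : 0 ≤ d) (A : Set X) :
    MeasurePreserving ((↑) : A → X) μH[d] (μH[d].restrict A) :=
  ⟨measurable_subtype_coe, by
    rw [isometry_subtype_coe.map_hausdorffMeasure (.inl hd), Subtype.range_coe]⟩

lemma setLIntegral_inter_hausdorffMeasure (hd : 0 ≤ d) {A B : Set X} (hA : MeasurableSet A)
    (hB : MeasurableSet B) (f : X → ℝ≥0∞) :
    ∫⁻ x in A ∩ B, f x ∂μH[d] = ∫⁻ x in ((↑) : A → X) ⁻¹' B, f x ∂(μH[d] : Measure A) := by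
  rw [(measurePreserving_subtype_coe_hausdorffMeasure hd A).setLIntegral_comp_preimage_emb
    (.subtype_coe hA), Measure.restrict_restrict hB, inter_comm]

lemma setLIntegral_image_hausdorffMeasure_le (hd : 0 ≤ d) {A : Set X} {F : X → Y} {K : ℝ≥0}
    (hF : LipschitzOnWith K F A) (hFm : Measurable F) {g : Y → ℝ≥0∞} (hg : Measurable g) :
    ∫⁻ y in F '' A, g y ∂μH[d] ≤ (K : ℝ≥0∞) ^ d * ∫⁻ x in A, g (F x) ∂μH[d] := by
  have hle : μH[d].restrict (F '' A) ≤ (K : ℝ≥0∞) ^ d • (μH[d].restrict A).map F := by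
    refine Measure.le_iff.2 fun s hs => ?_
    rw [Measure.restrict_apply hs, Measure.smul_apply, Measure.map_apply hFm hs,
      Measure.restrict_apply (hFm hs), smul_eq_mul, ← image_preimage_inter]
    exact (hF.mono inter_subset_right).hausdorffMeasure_image_le hd
  calc ∫⁻ y in F '' A, g y ∂μH[d] ≤ ∫⁻ y, g y ∂((K : ℝ≥0∞) ^ d • (μH[d].restrict A).map F) :=
        lintegral_mono' hle le_rfl
    _ = (K : ℝ≥0∞) ^ d * ∫⁻ x in A, g (F x) ∂μH[d] := by
        rw [lintegral_smul_measure, lintegral_map hg hFm, smul_eq_mul]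

lemma exists_iUnion_eq_of_forall_mem_nhds {X : Type*} [TopologicalSpace X]
    [SecondCountableTopology X] [MeasurableSpace X] [OpensMeasurableSpace X] {A : Set X}
    (hA : MeasurableSet A) (hne : A.Nonempty) {U : X → Set X} (hU : ∀ x ∈ A, U x ∈ 𝓝 x) :
    ∃ V : ℕ → Set X, (∀ i, MeasurableSet (V i)) ∧ Pairwise (Function.onFun Disjoint V) ∧
      ⋃ i, V i = A ∧ ∀ i, ∃ x ∈ A, V i ⊆ U x := by
  obtain ⟨t, htA, htc, hcover⟩ := TopologicalSpace.countable_cover_nhdsWithin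
    fun x hx => mem_nhdsWithin_of_mem_nhds (interior_mem_nhds.2 (hU x hx))
  have htne : t.Nonempty := by
    by_contra! ht
    simp [ht, hne.ne_empty] at hcover
  obtain ⟨x, rfl⟩ := htc.exists_eq_range htne
  refine ⟨fun i => A ∩ disjointed (fun i => interior (U (x i))) i, fun i => ?_, fun i j hij => ?_,
    ?_, fun i => ⟨x i, htA (mem_range_self i), ?_⟩⟩
  · exact hA.inter (.disjointed (fun j => isOpen_interior.measurableSet) i)
  · exact (disjoint_disjointed _ hij).mono inter_subset_right inter_subset_right
  · rw [← inter_iUnion, iUnion_disjointed]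
    exact inter_eq_left.2 (by simpa using hcover)
  · exact (inter_subset_right.trans (disjointed_subset _ i)).trans interior_subset

theorem setLIntegral_image_hausdorffMeasure_le_of_local [SecondCountableTopology X] (hd : 0 ≤ d)
    {A : Set X} (hA : MeasurableSet A) {F : X → Y} (hFm : Measurable F) {K : X → ℝ≥0}
    (hF : ∀ x ∈ A, ∃ U ∈ 𝓝 x, ∃ c : ℝ≥0, LipschitzOnWith c F U ∧ ∀ y ∈ U, c ≤ K y)
    {g : Y → ℝ≥0∞} (hg : Measurable g) :
    ∫⁻ y in F '' A, g y ∂μH[d] ≤ ∫⁻ x in A, (K x : ℝ≥0∞) ^ d * g (F x) ∂μH[d] := by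
  rcases A.eq_empty_or_nonempty with rfl | hne
  · simp
  choose! U hU c hc hcK using hF
  obtain ⟨V, hVm, hVd, hVA, hVU⟩ := exists_iUnion_eq_of_forall_mem_nhds hA hne hU
  have hpiece : ∀ i, ∫⁻ y in F '' V i, g y ∂μH[d] ≤
      ∫⁻ x in V i, (K x : ℝ≥0∞) ^ d * g (F x) ∂μH[d] := fun i => by
    obtain ⟨x, hxA, hVx⟩ := hVU i
    calc ∫⁻ y in F '' V i, g y ∂μH[d]
        ≤ (c x : ℝ≥0∞) ^ d * ∫⁻ y in V i, g (F y) ∂μH[d] :=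
          setLIntegral_image_hausdorffMeasure_le hd ((hc x hxA).mono hVx) hFm hg
      _ ≤ ∫⁻ y in V i, (c x : ℝ≥0∞) ^ d * g (F y) ∂μH[d] := lintegral_const_mul_le _ _
      _ ≤ ∫⁻ y in V i, (K y : ℝ≥0∞) ^ d * g (F y) ∂μH[d] := by
          refine setLIntegral_mono' (hVm i) fun y hy => ?_
          gcongr
          exact hcK x hxA y (hVx hy)
  calc ∫⁻ y in F '' A, g y ∂μH[d] = ∫⁻ y in ⋃ i, F '' V i, g y ∂μH[d] := by
        rw [← image_iUnion, hVA]
    _ ≤ ∑' i, ∫⁻ y in F '' V i, g y ∂μH[d] := lintegral_iUnion_le _ _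
    _ ≤ ∑' i, ∫⁻ x in V i, (K x : ℝ≥0∞) ^ d * g (F x) ∂μH[d] := ENNReal.tsum_le_tsum hpiece
    _ = ∫⁻ x in A, (K x : ℝ≥0∞) ^ d * g (F x) ∂μH[d] := by
        rw [← lintegral_iUnion hVm hVd, hVA]

end HausdorffMeasure

section RadialGraph

variable {E : Type*} [NormedAddCommGroup E] [InnerProductSpace ℝ E]

lemma norm_smul_sub_smul_sq {x y : E} (hx : ‖x‖ = 1) (hy : ‖y‖ = 1) (a b : ℝ) :
    ‖a • x - b • y‖ ^ 2 = (a - b) ^ 2 + a * b * ‖x - y‖ ^ 2 := by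
  rw [norm_sub_sq_real, norm_sub_sq_real]
  simp only [norm_smul, hx, hy, Real.norm_eq_abs, inner_smul_left, inner_smul_right, mul_one,
    sq_abs, conj_trivial]
  ring

lemma exists_lipschitzOnWith_smul_nhds {ρ : E → ℝ} {L M : ℝ≥0}
    (hρ : LipschitzOnWith L ρ (sphere 0 1)) (hLM : L < M) (x : sphere (0 : E) 1) :
    ∃ U ∈ 𝓝 x, ∃ c : ℝ≥0, LipschitzOnWith c (fun θ : sphere (0 : E) 1 => ρ θ • (θ : E)) U ∧
      ∀ y ∈ U, c ≤ (√(ρ y ^ 2 + M ^ 2)).toNNReal := by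
  have hLM' : (L : ℝ) ^ 2 < M ^ 2 := by gcongr
  refine ⟨{y | |ρ y ^ 2 - ρ x ^ 2| < (M ^ 2 - L ^ 2) / 2}, ?_,
    (√(ρ x ^ 2 + (L ^ 2 + M ^ 2) / 2)).toNNReal, ?_, fun y hy => ?_⟩
  · have hcont : Continuous fun y : sphere (0 : E) 1 => ρ y := hρ.continuousOn.domRestrict
    exact (isOpen_lt ((hcont.pow 2).sub continuous_const).abs continuous_const).mem_nhds
      (by simpa using hLM')
  · refine LipschitzOnWith.of_dist_le_mul fun y hy z hz => ?_
    have hy' : ρ y ^ 2 - ρ x ^ 2 < (M ^ 2 - L ^ 2) / 2 := (abs_lt.1 hy).2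
    have hz' : ρ z ^ 2 - ρ x ^ 2 < (M ^ 2 - L ^ 2) / 2 := (abs_lt.1 hz).2
    have hρyz : (ρ y - ρ z) ^ 2 ≤ L ^ 2 * ‖(y : E) - z‖ ^ 2 := by
      rw [← mul_pow, ← sq_abs, ← Real.dist_eq, ← dist_eq_norm]
      gcongr
      exact hρ.dist_le_mul y y.2 z z.2
    rw [Subtype.dist_eq, dist_eq_norm, dist_eq_norm, Real.coe_toNNReal _ (Real.sqrt_nonneg _)]
    refine le_of_sq_le_sq ?_ (by positivity)
    rw [norm_smul_sub_smul_sq (by simp) (by simp), mul_pow, Real.sq_sqrt (by positivity)]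
    calc (ρ y - ρ z) ^ 2 + ρ y * ρ z * ‖(y : E) - z‖ ^ 2
        ≤ L ^ 2 * ‖(y : E) - z‖ ^ 2 + ρ y * ρ z * ‖(y : E) - z‖ ^ 2 := by gcongr
      _ = (L ^ 2 + ρ y * ρ z) * ‖(y : E) - z‖ ^ 2 := by ring
      _ ≤ (ρ x ^ 2 + (L ^ 2 + M ^ 2) / 2) * ‖(y : E) - z‖ ^ 2 := by
        refine mul_le_mul_of_nonneg_right ?_ (sq_nonneg _)
        linarith [two_mul_le_add_sq (ρ y) (ρ z)]
  · have hy' : -((M ^ 2 - L ^ 2) / 2 : ℝ) < ρ y ^ 2 - ρ x ^ 2 := (abs_lt.1 hy).1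
    exact Real.toNNReal_le_toNNReal (Real.sqrt_le_sqrt (by linarith))

end RadialGraph

section Perimeter

variable {n : ℕ} {S : Set (Euc n)} {α : ℝ} {w : Euc n → ℝ}

namespace IsHomogeneousWeight

lemma lintegral_capMeasure (hw : IsHomogeneousWeight S α w) {f : sphere (0 : Euc n) 1 → ℝ≥0∞}
    (hf : Measurable f) :
    ∫⁻ θ, f θ ∂capMeasure S w =
      ∫⁻ θ : sphere (0 : Euc n) 1 in (↑) ⁻¹' S, f θ * ENNReal.ofReal (w θ) ∂μH[(n : ℝ) - 1] := by
  rw [capMeasure, lintegral_withDensity_eq_lintegral_mul _ hw.measurable_density hf,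
    ← lintegral_indicator (hw.isOpen.measurableSet.preimage measurable_subtype_coe)]
  refine lintegral_congr fun θ => ?_
  by_cases hθ : (θ : Euc n) ∈ S
  · rw [Pi.mul_apply, mul_comm, indicator_of_mem hθ, indicator_of_mem (by exact hθ)]
  · rw [Pi.mul_apply, indicator_of_notMem hθ, indicator_of_notMem (by exact hθ),
      ENNReal.ofReal_zero, zero_mul]

lemma frontier_radSet_inter_subset (hw : IsHomogeneousWeight S α w) {ρ : Euc n → ℝ}
    (hρ : ContinuousOn ρ (sphere 0 1)) :
    frontier (radSet S ρ) ∩ S ⊆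
      (fun θ : sphere (0 : Euc n) 1 => ρ θ • (θ : Euc n)) '' ((↑) ⁻¹' S) ∪ {0} := by
  rintro x ⟨hx, hxS⟩
  refine or_iff_not_imp_right.2 fun (hx0 : x ≠ 0) => ?_
  set g : Euc n → ℝ := fun y => ρ (‖y‖⁻¹ • y)
  have hsphere : ∀ y : Euc n, y ≠ 0 → ‖y‖⁻¹ • y ∈ sphere (0 : Euc n) 1 := fun y hy => by
    simp [norm_smul, hy]
  have hmem : ∀ y : Euc n, y ≠ 0 → (y ∈ radSet S ρ ↔ ‖y‖⁻¹ • y ∈ S ∧ ‖y‖ < g y) := fun y hy => by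
    rw [← smul_mem_radSet_iff (by simpa using hsphere y hy) (norm_pos_iff.2 hy), smul_smul,
      mul_inv_cancel₀ (norm_ne_zero_iff.2 hy), one_smul]
  have hg : ContinuousAt g x := by
    have hnormalize : ContinuousOn (fun y : Euc n => ‖y‖⁻¹ • y) {0}ᶜ :=
      (continuousOn_id.norm.inv₀ fun y hy => norm_ne_zero_iff.2 hy).smul continuousOn_id
    exact (hρ.comp hnormalize hsphere).continuousAt (isOpen_ne.mem_nhds hx0)
  refine ⟨⟨‖x‖⁻¹ • x, hsphere x hx0⟩, hw.smul_mem x hxS _ (inv_pos.2 (norm_pos_iff.2 hx0)), ?_⟩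
  suffices g x = ‖x‖ by
    change g x • _ = x
    rw [this, smul_smul, mul_inv_cancel₀ (norm_ne_zero_iff.2 hx0), one_smul]
  refine le_antisymm (not_lt.1 fun hlt => hx.2 (mem_interior_iff_mem_nhds.2 ?_))
    (not_lt.1 fun hlt => mem_closure_iff_frequently.1 hx.1 ?_)
  · filter_upwards [continuous_norm.continuousAt.eventually_lt hg hlt, hw.isOpen.mem_nhds hxS,
      isOpen_ne.mem_nhds hx0] with y hy hyS hy0
    exact (hmem y hy0).2 ⟨hw.smul_mem y hyS _ (inv_pos.2 (norm_pos_iff.2 hy0)), hy⟩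
  · filter_upwards [hg.eventually_lt continuous_norm.continuousAt hlt, isOpen_ne.mem_nhds hx0]
      with y hy hy0 hyR
    exact hy.not_gt ((hmem y hy0).1 hyR).2

variable [NeZero n]

lemma wPer_ball_inter (hw : IsHomogeneousWeight S α w) :
    wPer S w (ball 0 1 ∩ S) = capMeasure S w univ := by
  have hn : (0 : ℝ) ≤ n - 1 := sub_nonneg.2 (by exact_mod_cast NeZero.one_le)
  rw [wPer, frontier_inter_open_inter hw.isOpen, frontier_ball _ one_ne_zero,
    setLIntegral_inter_hausdorffMeasure hn isClosed_sphere.measurableSet hw.isOpen.measurableSet,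
    ← lintegral_one, hw.lintegral_capMeasure measurable_const]
  simp only [one_mul]

theorem wPer_radSet_le (hw : IsHomogeneousWeight S α w) (hα : 0 < α) {ρ : Euc n → ℝ} {L M : ℝ≥0}
    (hρ : LipschitzOnWith L ρ (sphere 0 1)) (hLM : L < M)
    (hρ0 : ∀ θ ∈ sphere (0 : Euc n) 1, 0 < ρ θ) :
    wPer S w (radSet S ρ) ≤
      ∫⁻ θ, ENNReal.ofReal (ρ θ ^ α * √(ρ θ ^ 2 + M ^ 2) ^ ((n : ℝ) - 1)) ∂capMeasure S w := by
  have hn : (0 : ℝ) ≤ n - 1 := sub_nonneg.2 (by exact_mod_cast NeZero.one_le)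
  have hρc : Continuous fun θ : sphere (0 : Euc n) 1 => ρ θ := hρ.continuousOn.domRestrict
  have hcap : MeasurableSet ((↑) ⁻¹' S : Set (sphere (0 : Euc n) 1)) :=
    hw.isOpen.measurableSet.preimage measurable_subtype_coe
  have hw0 : ENNReal.ofReal (S.indicator w 0) = 0 := by
    by_cases h0 : (0 : Euc n) ∈ S <;> simp [h0, hw.map_zero hα]
  calc wPer S w (radSet S ρ)
      = ∫⁻ x in frontier (radSet S ρ) ∩ S, ENNReal.ofReal (S.indicator w x) ∂μH[(n : ℝ) - 1] :=
        setLIntegral_congr_fun (isClosed_frontier.measurableSet.inter hw.isOpen.measurableSet)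
          fun x hx => by rw [indicator_of_mem hx.2]
    _ ≤ ∫⁻ x in (fun θ : sphere (0 : Euc n) 1 => ρ θ • (θ : Euc n)) '' ((↑) ⁻¹' S) ∪ {0},
          ENNReal.ofReal (S.indicator w x) ∂μH[(n : ℝ) - 1] :=
        lintegral_mono_set (hw.frontier_radSet_inter_subset hρ.continuousOn)
    _ ≤ ∫⁻ x in (fun θ : sphere (0 : Euc n) 1 => ρ θ • (θ : Euc n)) '' ((↑) ⁻¹' S),
          ENNReal.ofReal (S.indicator w x) ∂μH[(n : ℝ) - 1] := by
        refine (lintegral_union_le _ _ _).trans ?_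
        rw [lintegral_singleton, hw0, zero_mul, add_zero]
    _ ≤ ∫⁻ θ : sphere (0 : Euc n) 1 in (↑) ⁻¹' S,
          ((√(ρ θ ^ 2 + M ^ 2)).toNNReal : ℝ≥0∞) ^ ((n : ℝ) - 1) *
            ENNReal.ofReal (S.indicator w (ρ θ • (θ : Euc n))) ∂μH[(n : ℝ) - 1] :=
        setLIntegral_image_hausdorffMeasure_le_of_local hn hcap
          (F := fun θ : sphere (0 : Euc n) 1 => ρ θ • (θ : Euc n))
          (hρc.smul continuous_subtype_val).measurable
          (fun θ _ => exists_lipschitzOnWith_smul_nhds hρ hLM θ)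
          hw.measurable_indicator.ennreal_ofReal
    _ = ∫⁻ θ : sphere (0 : Euc n) 1 in (↑) ⁻¹' S,
          ENNReal.ofReal (ρ θ ^ α * √(ρ θ ^ 2 + M ^ 2) ^ ((n : ℝ) - 1)) * ENNReal.ofReal (w θ)
            ∂μH[(n : ℝ) - 1] := by
        refine setLIntegral_congr_fun hcap fun θ hθ => ?_
        have hpos := hρ0 θ θ.2
        rw [indicator_of_mem (hw.smul_mem _ hθ _ hpos), hw.map_smul _ hθ _ hpos,
          ENNReal.ofReal_mul (by positivity), ENNReal.ofReal_mul (by positivity),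
          ← ENNReal.ofReal_rpow_of_nonneg (Real.sqrt_nonneg _) hn]
        exact mul_left_comm _ _ _ |>.trans (mul_assoc _ _ _).symm
    _ = _ := (hw.lintegral_capMeasure (Measurable.ennreal_ofReal
          (hρc.measurable.pow_const _ |>.mul
            ((hρc.measurable.pow_const 2 |>.add_const _).sqrt.pow_const _)))).symm

end IsHomogeneousWeight

end Perimeter

section CapMeasure

variable {n : ℕ} [NeZero n] {S : Set (Euc n)} {α : ℝ} {w : Euc n → ℝ}

namespace IsHomogeneousWeight

lemma isFiniteMeasure_capMeasure (hw : IsHomogeneousWeight S α w) :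
    IsFiniteMeasure (capMeasure S w) := by
  obtain ⟨b, hb⟩ := ((isCompact_sphere (0 : Euc n) 1).inter_right
    (isClosed_closure (s := S))).exists_bound_of_continuousOn
      (hw.continuousOn.mono inter_subset_right)
  have : IsFiniteMeasure (μH[(n : ℝ) - 1] : Measure (sphere (0 : Euc n) 1)) := by
    simpa using isFiniteMeasure_hausdorffMeasure_sphere (E := Euc n)
  refine isFiniteMeasure_withDensity (ne_top_of_le_ne_top (b := ∫⁻ _, ENNReal.ofReal b ∂_)
    (by rw [lintegral_const]; finiteness) (lintegral_mono fun θ => ?_))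
  by_cases hθ : (θ : Euc n) ∈ S
  · rw [indicator_of_mem hθ]
    exact ENNReal.ofReal_le_ofReal ((Real.le_norm_self _).trans (hb θ ⟨θ.2, subset_closure hθ⟩))
  · simp [indicator_of_notMem hθ]

lemma integrable_capMeasure (hw : IsHomogeneousWeight S α w) {f : sphere (0 : Euc n) 1 → ℝ}
    (hf : Continuous f) : Integrable f (capMeasure S w) :=
  have := hw.isFiniteMeasure_capMeasure
  hf.integrable_of_hasCompactSupport (.of_compactSpace f)

lemma integral_capMeasure (hw : IsHomogeneousWeight S α w) (f : Euc n → ℝ) :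
    ∫ θ : sphere (0 : Euc n) 1, f θ ∂capMeasure S w =
      ∫ x in sphere 0 1 ∩ S, f x * w x ∂μH[(n : ℝ) - 1] := by
  have hn : (0 : ℝ) ≤ n - 1 := sub_nonneg.2 (by exact_mod_cast NeZero.one_le)
  rw [capMeasure, integral_withDensity_eq_integral_toReal_smul hw.measurable_density (by simp),
    ← setIntegral_indicator hw.isOpen.measurableSet,
    ← (measurePreserving_subtype_coe_hausdorffMeasure hn _).integral_comp
      (.subtype_coe isClosed_sphere.measurableSet)]
  refine integral_congr_ae (.of_forall fun θ => ?_)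
  by_cases hθ : (θ : Euc n) ∈ S
  · simp [hθ, hw.nonneg _ hθ, mul_comm]
  · simp [hθ]

lemma capMeasure_pos (hw : IsHomogeneousWeight S α w) {U : Set (sphere (0 : Euc n) 1)}
    (hU : IsOpen U) {θ : sphere (0 : Euc n) 1} (hθU : θ ∈ U) (hθS : (θ : Euc n) ∈ S)
    (hwθ : w θ ≠ 0) : 0 < capMeasure S w U := by
  have : (μH[(n : ℝ) - 1] : Measure (sphere (0 : Euc n) 1)).IsOpenPosMeasure := by
    simpa using isOpenPosMeasure_hausdorffMeasure_sphere (E := Euc n)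
  rw [pos_iff_ne_zero, capMeasure, Ne, withDensity_apply_eq_zero hw.measurable_density]
  refine (Measure.measure_pos_of_mem_nhds _ (x := θ) (Filter.inter_mem ?_ (hU.mem_nhds hθU))).ne'
  have hcont : ContinuousAt (fun ψ : sphere (0 : Euc n) 1 => w ψ) θ :=
    ((hw.continuousOn.mono subset_closure).continuousAt (hw.isOpen.mem_nhds hθS)).comp
      continuous_subtype_val.continuousAt
  filter_upwards [continuous_subtype_val.continuousAt (hw.isOpen.mem_nhds hθS),
    hcont.eventually_ne hwθ] with ψ (hψ : (ψ : Euc n) ∈ S) hwψ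
  have hpos : 0 < w ψ := (hw.nonneg _ hψ).lt_of_ne' hwψ
  simpa [indicator_of_mem hψ] using hpos

lemma integral_abs_capMeasure_pos (hw : IsHomogeneousWeight S α w) {f : Euc n → ℝ}
    (hf : ContinuousOn f (sphere 0 1)) {x : Euc n} (hx : x ∈ sphere (0 : Euc n) 1 ∩ S)
    (hfx : f x ≠ 0) (hwx : w x ≠ 0) :
    0 < ∫ θ : sphere (0 : Euc n) 1, |f θ| ∂capMeasure S w := by
  have hcont : Continuous fun θ : sphere (0 : Euc n) 1 => |f θ| := hf.domRestrict.abs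
  rw [integral_pos_iff_support_of_nonneg (fun _ => abs_nonneg _) (hw.integrable_capMeasure hcont)]
  exact hw.capMeasure_pos hcont.isOpen_support (θ := ⟨x, hx.1⟩) (by simpa using hfx) hx.2 hwx

theorem exists_wVol_radSet_eq_integral (hw : IsHomogeneousWeight S α w) (hα : 0 < n + α) :
    ∃ κ : ℝ, 0 < κ ∧ ∀ ρ : Euc n → ℝ, ContinuousOn ρ (sphere 0 1) →
      (∀ θ ∈ sphere (0 : Euc n) 1, 0 ≤ ρ θ) →
      wVol w (radSet S ρ) =
        ENNReal.ofReal (κ * ∫ θ : sphere (0 : Euc n) 1, ρ θ ^ (n + α) ∂capMeasure S w) := by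
  obtain ⟨κ, hκ, hvol⟩ := hw.exists_wVol_radSet_eq hα
  refine ⟨κ, hκ, fun ρ hρ hρ0 => ?_⟩
  have hcont : Continuous fun θ : sphere (0 : Euc n) 1 => ρ θ ^ (n + α) :=
    hρ.domRestrict.rpow_const fun _ => .inr hα.le
  rw [hvol ρ hρ hρ0, ENNReal.ofReal_mul κ.coe_nonneg, ENNReal.ofReal_coe_nnreal,
    ofReal_integral_eq_lintegral_ofReal (hw.integrable_capMeasure hcont)
      (.of_forall fun θ => Real.rpow_nonneg (hρ0 θ θ.2) _)]

lemma wVol_radSet_lt_top (hw : IsHomogeneousWeight S α w) (hα : 0 < n + α) {ρ : Euc n → ℝ}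
    (hρ : ContinuousOn ρ (sphere 0 1)) (hρ0 : ∀ θ ∈ sphere (0 : Euc n) 1, 0 ≤ ρ θ) :
    wVol w (radSet S ρ) < ∞ := by
  obtain ⟨κ, -, hvol⟩ := hw.exists_wVol_radSet_eq_integral hα
  exact hvol ρ hρ hρ0 ▸ ENNReal.ofReal_lt_top

end IsHomogeneousWeight

end CapMeasure

section RealInequalities

lemma one_add_rpow_le_one_add_add_sq {d s : ℝ} (hd : 0 ≤ d) (hs : -1 ≤ s) (hds : |d * s| ≤ 1) :
    (1 + s) ^ d ≤ 1 + d * s + (d * s) ^ 2 :=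
  calc (1 + s) ^ d ≤ Real.exp s ^ d := by
        gcongr
        · linarith
        · linarith [Real.add_one_le_exp s]
    _ = Real.exp (d * s) := by rw [← Real.exp_mul, mul_comm]
    _ ≤ 1 + d * s + (d * s) ^ 2 := by
        linarith [(abs_le.1 (Real.abs_exp_sub_one_sub_id_le hds)).2]

lemma rpow_mul_sqrt_rpow_le_add_rpow {α β ρ a : ℝ} (hα : 0 ≤ α) (hβ : 0 ≤ β) (hρ : 2⁻¹ ≤ ρ)
    (ha : 0 ≤ a) : ρ ^ α * √(ρ ^ 2 + a) ^ β ≤ (ρ + a) ^ (α + β) := by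
  have hsqrt : √(ρ ^ 2 + a) ≤ ρ + a := Real.sqrt_le_iff.2 ⟨by positivity, by nlinarith⟩
  rw [Real.rpow_add (by positivity)]
  gcongr
  linarith

lemma exists_rpow_mul_sqrt_rpow_le {α β : ℝ} (hα : 0 ≤ α) (hβ : 0 ≤ β) (b M : ℝ) :
    ∃ C : ℝ, 0 < C ∧ ∀ᶠ ε in 𝓝[>] (0 : ℝ), ∀ h : ℝ, |h| ≤ b →
      (1 + ε * h) ^ α * √((1 + ε * h) ^ 2 + (ε * M) ^ 2) ^ β ≤
        1 + C * ε ^ 2 + (α + β) * ε * h := by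
  have hsmall : ∀ x c : ℝ, 0 < c → ∀ᶠ ε in 𝓝[>] (0 : ℝ), ε * x < c := fun x c hc =>
    ((Continuous.tendsto' (by fun_prop) 0 0 (zero_mul x)).eventually_lt_const hc).filter_mono
      nhdsWithin_le_nhds
  refine ⟨(α + β) * M ^ 2 + ((α + β) * (b + M ^ 2)) ^ 2 + 1, by positivity, ?_⟩
  filter_upwards [self_mem_nhdsWithin, hsmall 1 1 one_pos, hsmall (b + M ^ 2) 2⁻¹ (by norm_num),
    hsmall ((α + β) * (b + M ^ 2)) 1 one_pos] with ε (hε : 0 < ε) hε1 hhalf hone h hh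
  have hεh : |ε * h| ≤ ε * b := by rw [abs_mul, abs_of_pos hε]; gcongr
  have hεM : (ε * M) ^ 2 ≤ ε * M ^ 2 := by nlinarith [mul_nonneg hε.le (sq_nonneg M)]
  set s : ℝ := ε * h + (ε * M) ^ 2
  have hs : |s| ≤ ε * (b + M ^ 2) := by
    calc |s| ≤ |ε * h| + |(ε * M) ^ 2| := abs_add_le _ _
      _ ≤ ε * (b + M ^ 2) := by rw [abs_of_nonneg (sq_nonneg (ε * M))]; linarith
  have hds : |(α + β) * s| ≤ ε * ((α + β) * (b + M ^ 2)) := by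
    rw [abs_mul, abs_of_nonneg (by positivity), mul_left_comm]
    gcongr
  calc (1 + ε * h) ^ α * √((1 + ε * h) ^ 2 + (ε * M) ^ 2) ^ β ≤ (1 + s) ^ (α + β) := by
        rw [← add_assoc]
        exact rpow_mul_sqrt_rpow_le_add_rpow hα hβ
          (by nlinarith [(abs_le.1 hεh).1, mul_nonneg hε.le (sq_nonneg M)]) (sq_nonneg _)
    _ ≤ 1 + (α + β) * s + ((α + β) * s) ^ 2 :=
        one_add_rpow_le_one_add_add_sq (by positivity) (by linarith [(abs_le.1 hs).1])
          (by linarith)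
    _ ≤ 1 + (α + β) * s + (ε * ((α + β) * (b + M ^ 2))) ^ 2 :=
        (add_le_add_iff_left _).2 (sq_le_sq.2 (hds.trans (le_abs_self _)))
    _ ≤ _ := by
        simp only [s]
        linarith [sq_nonneg ε]

lemma rpow_sub_one_mul_sub_le_rpow_sub_rpow {D m x y : ℝ} (hD : 1 ≤ D) (hm : 0 ≤ m)
    (hmx : m ≤ x) (hy : 0 ≤ y) (hyx : y ≤ x) : m ^ (D - 1) * (x - y) ≤ x ^ D - y ^ D := by
  have hsplit : ∀ z : ℝ, 0 ≤ z → z ^ D = z ^ (D - 1) * z := fun z hz => by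
    rw [← Real.rpow_add_one' hz (by linarith), sub_add_cancel]
  calc m ^ (D - 1) * (x - y) ≤ x ^ (D - 1) * (x - y) := by gcongr
    _ = x ^ (D - 1) * x - x ^ (D - 1) * y := mul_sub _ _ _
    _ ≤ x ^ (D - 1) * x - y ^ (D - 1) * y := by gcongr
    _ = x ^ D - y ^ D := by rw [hsplit x (hy.trans hyx), hsplit y hy]

end RealInequalities

section MeanZero

variable {X : Type*} [MeasurableSpace X] {μ : Measure X} [IsFiniteMeasure μ] {f : X → ℝ}

lemma integral_const_add_const_mul (hf : Integrable f μ) (hmean : ∫ x, f x ∂μ = 0) (a b : ℝ) :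
    ∫ x, (a + b * f x) ∂μ = μ.real univ * a := by
  rw [integral_add (integrable_const a) (hf.const_mul b), integral_const_mul, hmean,
    integral_const, mul_zero, add_zero, smul_eq_mul]

lemma integral_abs_le_two_mul_integral_abs_sub (hf : Integrable f μ) (hmean : ∫ x, f x ∂μ = 0)
    (c : ℝ) :
    ∫ x, |f x| ∂μ ≤ 2 * ∫ x, |f x - c| ∂μ := by
  have hfc : Integrable (fun x => |f x - c|) μ := (hf.sub (integrable_const c)).abs
  have hconst : μ.real univ * |c| ≤ ∫ x, |f x - c| ∂μ := by
    calc μ.real univ * |c| = |∫ x, (f x - c) ∂μ| := by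
          rw [integral_sub hf (integrable_const c), hmean, integral_const, zero_sub, abs_neg,
            smul_eq_mul, abs_mul, abs_of_nonneg measureReal_nonneg]
      _ ≤ ∫ x, |f x - c| ∂μ := abs_integral_le_integral_abs
  calc ∫ x, |f x| ∂μ ≤ ∫ x, (|f x - c| + |c|) ∂μ :=
        integral_mono hf.abs (hfc.add (integrable_const _)) fun x => by
          simpa using abs_add_le (f x - c) c
    _ = ∫ x, |f x - c| ∂μ + μ.real univ * |c| := by
        rw [integral_add hfc (integrable_const _), integral_const, smul_eq_mul]
    _ ≤ 2 * ∫ x, |f x - c| ∂μ := by linarith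

end MeanZero

section Deficit

variable {n : ℕ} {S : Set (Euc n)} {α : ℝ} {w : Euc n → ℝ} {η : Euc n → ℝ}

lemma eventually_abs_mul_le_of_continuousOn_sphere (hη : ContinuousOn η (sphere 0 1)) :
    ∀ᶠ ε in 𝓝[>] (0 : ℝ), ∀ θ ∈ sphere (0 : Euc n) 1, |ε * η θ| ≤ 2⁻¹ := by
  obtain ⟨b, hb⟩ := (isCompact_sphere 0 1).exists_bound_of_continuousOn hη
  have hsmall : ∀ᶠ ε in 𝓝[>] (0 : ℝ), ε * b < 2⁻¹ :=
    ((Continuous.tendsto' (by fun_prop) 0 0 (zero_mul b)).eventually_lt_const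
      (by norm_num)).filter_mono nhdsWithin_le_nhds
  filter_upwards [self_mem_nhdsWithin, hsmall] with ε (hε : 0 < ε) hεb θ hθ
  calc |ε * η θ| = ε * ‖η θ‖ := by rw [abs_mul, abs_of_pos hε, Real.norm_eq_abs]
    _ ≤ ε * b := by gcongr; exact hb θ hθ
    _ ≤ 2⁻¹ := hεb.le

variable [NeZero n]

namespace IsHomogeneousWeight

lemma exists_wVol_ball_inter_eq (hw : IsHomogeneousWeight S α w) (hα : 0 < n + α)
    (hcap : capMeasure S w ≠ 0) {r : ℝ} (hr : 0 < r) :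
    ∃ v : ℝ, 0 < v ∧ wVol w (ball 0 r ∩ S) = ENNReal.ofReal v := by
  have := hw.isFiniteMeasure_capMeasure
  have : NeZero (capMeasure S w) := ⟨hcap⟩
  obtain ⟨κ, hκ, hvol⟩ := hw.exists_wVol_radSet_eq_integral hα
  refine ⟨κ * ((capMeasure S w).real univ * r ^ (n + α)),
    mul_pos hκ (mul_pos measureReal_univ_pos (by positivity)), ?_⟩
  rw [hw.wVol_ball_inter, hvol _ continuousOn_const fun _ _ => hr.le, integral_const, smul_eq_mul]

lemma wVol_ball_inter_le_wVol_radSet (hw : IsHomogeneousWeight S α w) (hα : 1 ≤ n + α)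
    (hη : ContinuousOn η (sphere 0 1))
    (hmean : ∫ θ : sphere (0 : Euc n) 1, η θ ∂capMeasure S w = 0) {ε : ℝ}
    (hε : ∀ θ ∈ sphere (0 : Euc n) 1, |ε * η θ| ≤ 1) :
    wVol w (ball 0 1 ∩ S) ≤ wVol w (radSet S fun θ => 1 + ε * η θ) := by
  have := hw.isFiniteMeasure_capMeasure
  obtain ⟨κ, hκ, hvol⟩ := hw.exists_wVol_radSet_eq_integral (one_pos.trans_le hα)
  have hge : ∀ θ ∈ sphere (0 : Euc n) 1, -1 ≤ ε * η θ := fun θ hθ => (abs_le.1 (hε θ hθ)).1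
  have hcont : Continuous fun θ : sphere (0 : Euc n) 1 => η θ := hη.domRestrict
  rw [hw.wVol_ball_inter, hvol _ continuousOn_const fun _ _ => zero_le_one,
    hvol (fun θ => 1 + ε * η θ) (by fun_prop) fun θ hθ => by linarith [hge θ hθ]]
  refine ENNReal.ofReal_le_ofReal (mul_le_mul_of_nonneg_left ?_ hκ.le)
  have hbernoulli : Continuous fun θ : sphere (0 : Euc n) 1 => 1 + (n + α) * ε * η θ :=
    (hcont.const_mul _).const_add 1
  have hpow : Continuous fun θ : sphere (0 : Euc n) 1 => (1 + ε * η θ) ^ (n + α) :=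
    ((hcont.const_mul ε).const_add 1).rpow_const fun _ => .inr (by linarith)
  calc ∫ _ : sphere (0 : Euc n) 1, (1 : ℝ) ^ (n + α) ∂capMeasure S w
      = ∫ θ : sphere (0 : Euc n) 1, (1 + (n + α) * ε * η θ) ∂capMeasure S w := by
        rw [integral_const_add_const_mul (hw.integrable_capMeasure hcont) hmean]
        simp
    _ ≤ ∫ θ : sphere (0 : Euc n) 1, (1 + ε * η θ) ^ (n + α) ∂capMeasure S w :=
        integral_mono (hw.integrable_capMeasure hbernoulli) (hw.integrable_capMeasure hpow)
          fun θ => by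
            simpa only [mul_assoc] using one_add_mul_self_le_rpow_one_add (hge θ θ.2) hα

theorem exists_wPer_radSet_le (hw : IsHomogeneousWeight S α w) (hα : 0 < α) {K : ℝ≥0}
    (hη : LipschitzOnWith K η (sphere 0 1))
    (hmean : ∫ θ : sphere (0 : Euc n) 1, η θ ∂capMeasure S w = 0) :
    ∃ C : ℝ, 0 < C ∧ ∀ᶠ ε in 𝓝[>] (0 : ℝ), wPer S w (radSet S fun θ => 1 + ε * η θ) ≤
      ENNReal.ofReal (1 + C * ε ^ 2) * wPer S w (ball 0 1 ∩ S) := by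
  have := hw.isFiniteMeasure_capMeasure
  have hn : (0 : ℝ) ≤ n - 1 := sub_nonneg.2 (by exact_mod_cast NeZero.one_le)
  have hcont : Continuous fun θ : sphere (0 : Euc n) 1 => η θ := hη.continuousOn.domRestrict
  obtain ⟨b, hb⟩ := (isCompact_sphere 0 1).exists_bound_of_continuousOn hη.continuousOn
  obtain ⟨C, hC, hdensity⟩ := exists_rpow_mul_sqrt_rpow_le hα.le hn b (K + 1)
  refine ⟨C, hC, ?_⟩
  filter_upwards [self_mem_nhdsWithin, hdensity,
    eventually_abs_mul_le_of_continuousOn_sphere hη.continuousOn]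
    with ε (hε : 0 < ε) hdensity hsmall
  have hpos : ∀ θ ∈ sphere (0 : Euc n) 1, 0 < 1 + ε * η θ := fun θ hθ => by
    linarith [(abs_le.1 (hsmall θ hθ)).1]
  have hle : ∀ θ : sphere (0 : Euc n) 1, (1 + ε * η θ) ^ α *
      √((1 + ε * η θ) ^ 2 + (ε.toNNReal * (K + 1) : ℝ≥0) ^ 2) ^ ((n : ℝ) - 1) ≤
        1 + C * ε ^ 2 + (α + (n - 1)) * ε * η θ := fun θ => by
    simpa [hε.le] using hdensity (η θ) (hb θ θ.2)
  have hbound : Continuous fun θ : sphere (0 : Euc n) 1 =>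
      1 + C * ε ^ 2 + (α + (n - 1)) * ε * η θ := (hcont.const_mul _).const_add _
  have hlip : LipschitzOnWith (ε.toNNReal * K) (fun θ => 1 + ε * η θ) (sphere 0 1) :=
    LipschitzOnWith.of_dist_le_mul fun x hx y hy => by
      rw [dist_add_left, NNReal.coe_mul, Real.coe_toNNReal _ hε.le, Real.dist_eq, ← mul_sub,
        abs_mul, abs_of_pos hε, mul_assoc]
      gcongr
      exact hη.dist_le_mul x hx y hy
  calc wPer S w (radSet S fun θ => 1 + ε * η θ)
      ≤ ∫⁻ θ : sphere (0 : Euc n) 1, ENNReal.ofReal ((1 + ε * η θ) ^ α *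
          √((1 + ε * η θ) ^ 2 + (ε.toNNReal * (K + 1) : ℝ≥0) ^ 2) ^ ((n : ℝ) - 1))
            ∂capMeasure S w :=
        hw.wPer_radSet_le hα hlip (by gcongr; exact lt_add_one K) hpos
    _ ≤ ∫⁻ θ : sphere (0 : Euc n) 1,
          ENNReal.ofReal (1 + C * ε ^ 2 + (α + (n - 1)) * ε * η θ) ∂capMeasure S w :=
        lintegral_mono fun θ => ENNReal.ofReal_le_ofReal (hle θ)
    _ = ENNReal.ofReal ((capMeasure S w).real univ * (1 + C * ε ^ 2)) := by
        rw [← integral_const_add_const_mul (hw.integrable_capMeasure hcont) hmean,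
          ofReal_integral_eq_lintegral_ofReal (hw.integrable_capMeasure hbound)]
        exact .of_forall fun θ => (mul_nonneg (Real.rpow_nonneg (hpos θ θ.2).le _)
          (Real.rpow_nonneg (Real.sqrt_nonneg _) _)).trans (hle θ)
    _ = ENNReal.ofReal (1 + C * ε ^ 2) * wPer S w (ball 0 1 ∩ S) := by
        rw [mul_comm, ENNReal.ofReal_mul (by positivity), ofReal_measureReal, hw.wPer_ball_inter]

theorem exists_wDeficit_le (hw : IsHomogeneousWeight S α w) (hα : 0 < α)
    (hcap : capMeasure S w ≠ 0) {K : ℝ≥0} (hη : LipschitzOnWith K η (sphere 0 1))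
    (hmean : ∫ θ : sphere (0 : Euc n) 1, η θ ∂capMeasure S w = 0) :
    ∃ C : ℝ, 0 < C ∧ ∀ᶠ ε in 𝓝[>] (0 : ℝ),
      wDeficit S α w (radSet S fun θ => 1 + ε * η θ) ≤ C * ε ^ 2 := by
  have := hw.isFiniteMeasure_capMeasure
  have hD : 1 ≤ n + α := by
    linarith [show (1 : ℝ) ≤ n by exact_mod_cast NeZero.one_le (n := n)]
  obtain ⟨v, hv, hball⟩ := hw.exists_wVol_ball_inter_eq (one_pos.trans_le hD) hcap one_pos
  obtain ⟨C, hC, hper⟩ := hw.exists_wPer_radSet_le hα hη hmean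
  refine ⟨C, hC, ?_⟩
  filter_upwards [hper, eventually_abs_mul_le_of_continuousOn_sphere hη.continuousOn]
    with ε hper hsmall
  have hvol_le : (wVol w (ball 0 1 ∩ S)).toReal ≤
      (wVol w (radSet S fun θ => 1 + ε * η θ)).toReal := by
    have hρ : ContinuousOn (fun θ => 1 + ε * η θ) (sphere 0 1) := by
      have := hη.continuousOn
      fun_prop
    exact ENNReal.toReal_mono
      (hw.wVol_radSet_lt_top (one_pos.trans_le hD) hρ fun θ hθ => by
        linarith [(abs_le.1 (hsmall θ hθ)).1]).ne
      (hw.wVol_ball_inter_le_wVol_radSet hD hη.continuousOn hmean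
        fun θ hθ => (hsmall θ hθ).trans (by norm_num))
  have hper_le : (wPer S w (radSet S fun θ => 1 + ε * η θ)).toReal ≤
      (1 + C * ε ^ 2) * (wPer S w (ball 0 1 ∩ S)).toReal := by
    refine (ENNReal.toReal_mono ?_ hper).trans_eq ?_
    · rw [hw.wPer_ball_inter]
      exact ENNReal.mul_ne_top ENNReal.ofReal_ne_top (measure_ne_top _ _)
    · rw [ENNReal.toReal_mul, ENNReal.toReal_ofReal (by positivity)]
  have hball_pos : 0 < (wVol w (ball 0 1 ∩ S)).toReal := by
    rwa [hball, ENNReal.toReal_ofReal hv.le]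
  refine sub_le_iff_le_add'.2 (div_le_of_le_mul₀ (by unfold isoQuot; positivity)
    (by positivity) ?_)
  calc isoQuot S α w (radSet S fun θ => 1 + ε * η θ)
      ≤ (1 + C * ε ^ 2) * (wPer S w (ball 0 1 ∩ S)).toReal /
          (wVol w (ball 0 1 ∩ S)).toReal ^ ((n + α - 1) / (n + α)) := by
        unfold isoQuot
        gcongr
    _ = (1 + C * ε ^ 2) * isoQuot S α w (ball 0 1 ∩ S) := mul_div_assoc _ _ _

end IsHomogeneousWeight

end Deficit

section Asymmetry

variable {n : ℕ} {S : Set (Euc n)} {α : ℝ} {w : Euc n → ℝ}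

namespace IsHomogeneousWeight

lemma radSet_max_subset_symmDiff_union (hw : IsHomogeneousWeight S α w) (ρ : Euc n → ℝ) (r : ℝ) :
    radSet S (fun θ => max (ρ θ) r) ⊆
      symmDiff (radSet S ρ) (ball 0 r ∩ S) ∪ radSet S fun θ => min (ρ θ) r := by
  rintro x ⟨θ, ⟨hθ, hθS⟩, t, ht, htmax, rfl⟩
  have hθ1 : ‖θ‖ = 1 := by simpa using hθ
  have hball : t • θ ∈ ball (0 : Euc n) r ∩ S ↔ t < r := by
    simp [norm_smul, hθ1, abs_of_pos ht, hw.smul_mem θ hθS t ht]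
  rw [mem_union, mem_symmDiff, hball, smul_mem_radSet_iff hθ1 ht, smul_mem_radSet_iff hθ1 ht,
    lt_min_iff]
  have := lt_max_iff.1 htmax
  tauto

variable [NeZero n]

lemma wVol_symmDiff_ball_lt_top (hw : IsHomogeneousWeight S α w) (hα : 0 < n + α) {ρ : Euc n → ℝ}
    (hρ : ContinuousOn ρ (sphere 0 1)) (hρ0 : ∀ θ ∈ sphere (0 : Euc n) 1, 0 ≤ ρ θ) {r : ℝ}
    (hr : 0 ≤ r) : wVol w (symmDiff (radSet S ρ) (ball 0 r ∩ S)) < ∞ :=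
  calc wVol w (symmDiff (radSet S ρ) (ball 0 r ∩ S))
      ≤ wVol w (radSet S ρ ∪ ball 0 r ∩ S) := lintegral_mono_set symmDiff_subset_union
    _ ≤ wVol w (radSet S ρ) + wVol w (ball 0 r ∩ S) := lintegral_union_le _ _ _
    _ < ∞ := by
      rw [hw.wVol_ball_inter]
      exact ENNReal.add_lt_top.2 ⟨hw.wVol_radSet_lt_top hα hρ hρ0,
        hw.wVol_radSet_lt_top hα continuousOn_const fun _ _ => hr⟩

lemma toReal_wVol_radSet_max_le (hw : IsHomogeneousWeight S α w) (hα : 0 < n + α)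
    {ρ : Euc n → ℝ} (hρ : ContinuousOn ρ (sphere 0 1)) (hρ0 : ∀ θ ∈ sphere (0 : Euc n) 1, 0 ≤ ρ θ)
    {r : ℝ} (hr : 0 ≤ r) :
    (wVol w (radSet S fun θ => max (ρ θ) r)).toReal ≤
      (wVol w (symmDiff (radSet S ρ) (ball 0 r ∩ S))).toReal +
        (wVol w (radSet S fun θ => min (ρ θ) r)).toReal := by
  have hsymm := hw.wVol_symmDiff_ball_lt_top hα hρ hρ0 hr
  have hmin : wVol w (radSet S fun θ => min (ρ θ) r) < ∞ :=
    hw.wVol_radSet_lt_top hα (by fun_prop) fun θ hθ => le_min (hρ0 θ hθ) hr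
  rw [← ENNReal.toReal_add hsymm.ne hmin.ne]
  exact ENNReal.toReal_mono (ENNReal.add_lt_top.2 ⟨hsymm, hmin⟩).ne
    ((lintegral_mono_set (hw.radSet_max_subset_symmDiff_union ρ r)).trans
      (lintegral_union_le _ _ _))

lemma exists_mul_integral_sub_le_toReal_wVol_sub (hw : IsHomogeneousWeight S α w)
    (hα : 1 ≤ n + α) :
    ∃ κ : ℝ, 0 < κ ∧ ∀ (m : ℝ) (f g : Euc n → ℝ), 0 ≤ m → ContinuousOn f (sphere 0 1) →
      ContinuousOn g (sphere 0 1) → (∀ θ ∈ sphere (0 : Euc n) 1, m ≤ f θ) →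
      (∀ θ ∈ sphere (0 : Euc n) 1, 0 ≤ g θ ∧ g θ ≤ f θ) →
      κ * m ^ (n + α - 1) * ∫ θ : sphere (0 : Euc n) 1, (f θ - g θ) ∂capMeasure S w ≤
        (wVol w (radSet S f)).toReal - (wVol w (radSet S g)).toReal := by
  have hα0 : 0 < n + α := one_pos.trans_le hα
  obtain ⟨κ, hκ, hvol⟩ := hw.exists_wVol_radSet_eq_integral hα0
  have htoReal : ∀ f : Euc n → ℝ, ContinuousOn f (sphere 0 1) →
      (∀ θ ∈ sphere (0 : Euc n) 1, 0 ≤ f θ) → (wVol w (radSet S f)).toReal =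
        κ * ∫ θ : sphere (0 : Euc n) 1, f θ ^ (n + α) ∂capMeasure S w := fun f hf hf0 => by
    have hnonneg : 0 ≤ ∫ θ : sphere (0 : Euc n) 1, f θ ^ (n + α) ∂capMeasure S w :=
      integral_nonneg fun θ : sphere (0 : Euc n) 1 => Real.rpow_nonneg (hf0 θ θ.2) _
    rw [hvol f hf hf0, ENNReal.toReal_ofReal (by positivity)]
  have hpow : ∀ f : Euc n → ℝ, ContinuousOn f (sphere 0 1) →
      Integrable (fun θ : sphere (0 : Euc n) 1 => f θ ^ (n + α)) (capMeasure S w) := fun f hf =>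
    hw.integrable_capMeasure (hf.domRestrict.rpow_const fun _ => .inr hα0.le)
  refine ⟨κ, hκ, fun m f g hm hf hg hmf hgf => ?_⟩
  have hsub : Continuous fun θ : sphere (0 : Euc n) 1 => m ^ (n + α - 1) * (f θ - g θ) :=
    (hf.domRestrict.sub hg.domRestrict).const_mul _
  rw [htoReal f hf fun θ hθ => hm.trans (hmf θ hθ), htoReal g hg fun θ hθ => (hgf θ hθ).1,
    ← mul_sub, ← integral_sub (hpow f hf) (hpow g hg), mul_assoc, ← integral_const_mul]
  exact mul_le_mul_of_nonneg_left (integral_mono (hw.integrable_capMeasure hsub)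
    ((hpow f hf).sub (hpow g hg)) fun θ : sphere (0 : Euc n) 1 =>
      rpow_sub_one_mul_sub_le_rpow_sub_rpow hα hm (hmf θ θ.2) (hgf θ θ.2).1 (hgf θ θ.2).2) hκ.le

lemma exists_mul_integral_abs_sub_le_wVol_symmDiff (hw : IsHomogeneousWeight S α w)
    (hα : 1 ≤ n + α) :
    ∃ κ : ℝ, 0 < κ ∧ ∀ (m r : ℝ) (ρ : Euc n → ℝ), 0 ≤ m → 0 ≤ r → ContinuousOn ρ (sphere 0 1) →
      (∀ θ ∈ sphere (0 : Euc n) 1, m ≤ ρ θ) →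
      κ * m ^ (n + α - 1) * ∫ θ : sphere (0 : Euc n) 1, |ρ θ - r| ∂capMeasure S w ≤
        (wVol w (symmDiff (radSet S ρ) (ball 0 r ∩ S))).toReal := by
  obtain ⟨κ, hκ, hsub⟩ := hw.exists_mul_integral_sub_le_toReal_wVol_sub hα
  refine ⟨κ, hκ, fun m r ρ hm hr hρ hmρ => ?_⟩
  have hρ0 : ∀ θ ∈ sphere (0 : Euc n) 1, 0 ≤ ρ θ := fun θ hθ => hm.trans (hmρ θ hθ)
  have hle := hsub m (fun θ => max (ρ θ) r) (fun θ => min (ρ θ) r) hm (by fun_prop) (by fun_prop)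
    (fun θ hθ => le_max_of_le_left (hmρ θ hθ)) fun θ hθ => ⟨le_min (hρ0 θ hθ) hr, min_le_max⟩
  simp only [max_sub_min_eq_abs'] at hle
  linarith [hw.toReal_wVol_radSet_max_le (one_pos.trans_le hα) hρ hρ0 hr]

variable {η : Euc n → ℝ}

lemma exists_toReal_wVol_radSet_mem_Ioc (hw : IsHomogeneousWeight S α w) (hα : 1 ≤ n + α)
    (hcap : capMeasure S w ≠ 0) (hη : ContinuousOn η (sphere 0 1))
    (hmean : ∫ θ : sphere (0 : Euc n) 1, η θ ∂capMeasure S w = 0) :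
    ∃ V : ℝ, 0 < V ∧ ∀ ε : ℝ, (∀ θ ∈ sphere (0 : Euc n) 1, |ε * η θ| ≤ 1) →
      (wVol w (radSet S fun θ => 1 + ε * η θ)).toReal ∈ Ioc 0 V := by
  have hα0 : 0 < n + α := one_pos.trans_le hα
  obtain ⟨v, hv, hball⟩ := hw.exists_wVol_ball_inter_eq hα0 hcap one_pos
  obtain ⟨V, hV, hball_two⟩ := hw.exists_wVol_ball_inter_eq hα0 hcap two_pos
  refine ⟨V, hV, fun ε hε => ?_⟩
  have hle : wVol w (radSet S fun θ => 1 + ε * η θ) ≤ ENNReal.ofReal V := by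
    rw [← hball_two, hw.wVol_ball_inter]
    exact lintegral_mono_set (radSet_subset_radSet fun θ hθ => by
      linarith [(abs_le.1 (hε θ hθ)).2])
  have hge : ENNReal.ofReal v ≤ wVol w (radSet S fun θ => 1 + ε * η θ) :=
    hball ▸ hw.wVol_ball_inter_le_wVol_radSet hα hη hmean hε
  exact ⟨ENNReal.toReal_pos ((ENNReal.ofReal_pos.2 hv).trans_le hge).ne'
    (hle.trans_lt ENNReal.ofReal_lt_top).ne, ENNReal.toReal_le_of_le_ofReal hV.le hle⟩

lemma mul_integral_abs_le_two_mul_integral_abs_sub (hw : IsHomogeneousWeight S α w)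
    (hη : ContinuousOn η (sphere 0 1))
    (hmean : ∫ θ : sphere (0 : Euc n) 1, η θ ∂capMeasure S w = 0) {ε : ℝ} (hε : 0 ≤ ε) (r : ℝ) :
    ε * ∫ θ : sphere (0 : Euc n) 1, |η θ| ∂capMeasure S w ≤
      2 * ∫ θ : sphere (0 : Euc n) 1, |1 + ε * η θ - r| ∂capMeasure S w := by
  have := hw.isFiniteMeasure_capMeasure
  have hεη : Integrable (fun θ : sphere (0 : Euc n) 1 => ε * η θ) (capMeasure S w) :=
    hw.integrable_capMeasure (hη.domRestrict.const_mul ε)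
  have h := integral_abs_le_two_mul_integral_abs_sub hεη
    (by rw [integral_const_mul, hmean, mul_zero]) (r - 1)
  simp only [abs_mul, abs_of_nonneg hε, integral_const_mul] at h
  simpa only [sub_sub_eq_add_sub, add_comm] using h

theorem exists_mul_le_wVol_symmDiff_div (hw : IsHomogeneousWeight S α w) (hα : 1 ≤ n + α)
    (hη : ContinuousOn η (sphere 0 1))
    (hmean : ∫ θ : sphere (0 : Euc n) 1, η θ ∂capMeasure S w = 0)
    (hpos : 0 < ∫ θ : sphere (0 : Euc n) 1, |η θ| ∂capMeasure S w) :
    ∃ c : ℝ, 0 < c ∧ ∀ᶠ ε in 𝓝[>] (0 : ℝ), ∀ r : ℝ, 0 ≤ r →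
      c * ε ≤ (wVol w (symmDiff (radSet S fun θ => 1 + ε * η θ) (ball 0 r ∩ S))).toReal /
        (wVol w (radSet S fun θ => 1 + ε * η θ)).toReal := by
  have hcap : capMeasure S w ≠ 0 := fun h => by simp [h] at hpos
  obtain ⟨V, hV, hvol⟩ := hw.exists_toReal_wVol_radSet_mem_Ioc hα hcap hη hmean
  obtain ⟨κ, hκ, hsymm⟩ := hw.exists_mul_integral_abs_sub_le_wVol_symmDiff hα
  set I := ∫ θ : sphere (0 : Euc n) 1, |η θ| ∂capMeasure S w
  refine ⟨κ * 2⁻¹ ^ (n + α - 1) * (I / 2) / V, by positivity, ?_⟩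
  filter_upwards [self_mem_nhdsWithin, eventually_abs_mul_le_of_continuousOn_sphere hη]
    with ε (hε : 0 < ε) hsmall r hr
  obtain ⟨hvol_pos, hvol_le⟩ := hvol ε fun θ hθ => (hsmall θ hθ).trans (by norm_num)
  have hmean_le := hw.mul_integral_abs_le_two_mul_integral_abs_sub hη hmean hε.le r
  rw [le_div_iff₀ hvol_pos]
  calc κ * 2⁻¹ ^ (n + α - 1) * (I / 2) / V * ε * (wVol w (radSet S fun θ => 1 + ε * η θ)).toReal
      ≤ κ * 2⁻¹ ^ (n + α - 1) * (I / 2) / V * ε * V := by gcongr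
    _ = κ * 2⁻¹ ^ (n + α - 1) * (ε * I / 2) := by field_simp
    _ ≤ κ * 2⁻¹ ^ (n + α - 1) *
          ∫ θ : sphere (0 : Euc n) 1, |1 + ε * η θ - r| ∂capMeasure S w := by
        gcongr
        linarith
    _ ≤ (wVol w (symmDiff (radSet S fun θ => 1 + ε * η θ) (ball 0 r ∩ S))).toReal :=
        hsymm 2⁻¹ r (fun θ => 1 + ε * η θ) (by norm_num) hr (by fun_prop) fun θ hθ => by
          linarith [(abs_le.1 (hsmall θ hθ)).1]

end IsHomogeneousWeight

end Asymmetry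

section Admissible

lemma concaveOn_pos_of_isOpen {E : Type*} [AddCommGroup E] [Module ℝ E] [TopologicalSpace E]
    [ContinuousAdd E] [ContinuousSMul ℝ E] {s : Set E} {f : E → ℝ} (hs : IsOpen s)
    (hf : ConcaveOn ℝ s f) (hf0 : ∀ x ∈ s, 0 ≤ f x) {x y : E} (hx : x ∈ s) (hy : y ∈ s)
    (hfy : 0 < f y) : 0 < f x := by
  have hlim : Filter.Tendsto (fun t : ℝ => x + t • (x - y)) (𝓝[>] 0) (𝓝 x) :=
    (Continuous.tendsto' (by fun_prop) _ _ (by simp)).mono_left nhdsWithin_le_nhds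
  obtain ⟨t, hz, ht : 0 < t⟩ := ((hlim.eventually (hs.mem_nhds hx)).and self_mem_nhdsWithin).exists
  have hseg : x ∈ openSegment ℝ (x + t • (x - y)) y :=
    ⟨(1 + t)⁻¹, t / (1 + t), by positivity, by positivity, by field_simp, by
      match_scalars
      · field_simp
      · field_simp; ring⟩
  by_contra! hfx
  linarith [hf.left_lt_of_lt_right hz hy hseg (hfx.trans_lt hfy), hf0 _ hz]

namespace IsAdmissibleWeight

variable {n : ℕ} {S : Set (Euc n)} {α : ℝ} {w : Euc n → ℝ}

lemma isHomogeneousWeight (hw : IsAdmissibleWeight S α w) (hS : IsOpenConvexCone S) :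
    IsHomogeneousWeight S α w where
  isOpen := hS.1
  smul_mem := hS.2.2
  continuousOn := hw.1
  nonneg x hx := hw.2.1 x (subset_closure hx)
  map_smul x hx := hw.2.2.2.1 x (subset_closure hx)

lemma pos (hw : IsAdmissibleWeight S α w) (hα : 0 < α) (hS : IsOpen S) {x : Euc n} (hx : x ∈ S) :
    0 < w x := by
  obtain ⟨hcont, hnonneg, ⟨z, hz, hwz⟩, -, hconcave⟩ := hw
  have hwS : ∀ y ∈ S, 0 ≤ w y := fun y hy => hnonneg y (subset_closure hy)
  obtain ⟨y, hwy, hy⟩ : ∃ y, w y ≠ 0 ∧ y ∈ S :=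
    have := mem_closure_iff_nhdsWithin_neBot.1 hz
    ((((hcont z hz).mono subset_closure).eventually_ne hwz).and self_mem_nhdsWithin).exists
  have hpos := concaveOn_pos_of_isOpen hS hconcave (fun y hy => Real.rpow_nonneg (hwS y hy) _) hx hy
    (Real.rpow_pos_of_pos ((hwS y hy).lt_of_ne' hwy) _)
  refine (hwS x hx).lt_of_ne' fun h => hpos.ne' ?_
  rw [h, Real.zero_rpow (one_div_ne_zero hα.ne')]

end IsAdmissibleWeight

end Admissible

theorem stmt_3_general {n : ℕ} [NeZero n] {α : ℝ} (hα : 0 < α) {S : Set (Euc n)} {w : Euc n → ℝ}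
    (hw : IsHomogeneousWeight S α w) {η : Euc n → ℝ} {K : ℝ≥0}
    (hη : LipschitzOnWith K η (sphere 0 1))
    (hne : ∃ x ∈ sphere (0 : Euc n) 1 ∩ S, η x ≠ 0 ∧ w x ≠ 0)
    (hmean : (∫ x in sphere (0 : Euc n) 1 ∩ S, η x * w x ∂(μH[(n : ℝ) - 1])) = 0) :
    ∃ ε₀ C c : ℝ, 0 < ε₀ ∧ 0 < C ∧ 0 < c ∧
      ∀ ε : ℝ, 0 < ε → ε < ε₀ →
        wDeficit S α w (radSet S (fun θ => 1 + ε * η θ)) ≤ C * ε ^ 2 ∧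
        ∀ r : ℝ, 0 < r →
          c * ε ≤
            (wVol w (symmDiff (radSet S (fun θ => 1 + ε * η θ))
                (ball (0 : Euc n) r ∩ S))).toReal /
              (wVol w (radSet S (fun θ => 1 + ε * η θ))).toReal := by
  have hD : 1 ≤ n + α := by
    linarith [show (1 : ℝ) ≤ n by exact_mod_cast NeZero.one_le (n := n)]
  obtain ⟨x, hx, hηx, hwx⟩ := hne
  have hpos := hw.integral_abs_capMeasure_pos hη.continuousOn hx hηx hwx
  have hcap : capMeasure S w ≠ 0 := fun h => by simp [h] at hpos
  rw [← hw.integral_capMeasure] at hmean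
  obtain ⟨C, hC, hdeficit⟩ := hw.exists_wDeficit_le hα hcap hη hmean
  obtain ⟨c, hc, hasymm⟩ := hw.exists_mul_le_wVol_symmDiff_div hD hη.continuousOn hmean hpos
  obtain ⟨ε₀, hε₀, hsub⟩ := mem_nhdsGT_iff_exists_Ioo_subset.1 (hdeficit.and hasymm)
  refine ⟨ε₀, C, c, hε₀, hC, hc, fun ε hε hεε₀ => ?_⟩
  obtain ⟨hdef, hasy⟩ := hsub ⟨hε, hεε₀⟩
  exact ⟨hdef, fun r hr => hasy r hr.le⟩

/-- Sharpness of the exponent 1/2 in the quantitative weighted isoperimetric inequality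
(case `k = 0`, i.e. `Σ` contains no lines): a smooth mean-zero perturbation of the unit ball
has deficit `O(ε²)` but asymmetry `≳ ε`. -/
theorem stmt_3 {n : ℕ} (hn : 1 ≤ n) (α : ℝ) (hα : 0 < α)
    (S : Set (Euc n)) (hS : IsOpenConvexCone S)
    -- `k = 0`: `Σ` contains no lines
    (hNoLine : ∀ p v : Euc n, (∀ t : ℝ, p + t • v ∈ S) → v = 0)
    (w : Euc n → ℝ) (hw : IsAdmissibleWeight S α w)
    (η : Euc n → ℝ) (hη : ContDiff ℝ (⊤ : ℕ∞) η)
    -- compactly supported in the open spherical cap `∂B₁ ∩ Σ`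
    (hsupp : ∃ Kc : Set (Euc n), IsCompact Kc ∧ Kc ⊆ sphere (0 : Euc n) 1 ∩ S ∧
      ∀ x ∈ sphere (0 : Euc n) 1, η x ≠ 0 → x ∈ Kc)
    (hne : ∃ x ∈ sphere (0 : Euc n) 1 ∩ S, η x ≠ 0)
    (hmean : (∫ x in sphere (0 : Euc n) 1 ∩ S, η x * w x ∂(μH[(n : ℝ) - 1])) = 0) :
    ∃ ε₀ C c : ℝ, 0 < ε₀ ∧ 0 < C ∧ 0 < c ∧
      ∀ ε : ℝ, 0 < ε → ε < ε₀ →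
        wDeficit S α w (radSet S (fun θ => 1 + ε * η θ)) ≤ C * ε ^ 2 ∧
        ∀ r : ℝ, 0 < r →
          wVol w (ball (0 : Euc n) r ∩ S) = wVol w (radSet S (fun θ => 1 + ε * η θ)) →
          c * ε ≤
            (wVol w (symmDiff (radSet S (fun θ => 1 + ε * η θ))
                (ball (0 : Euc n) r ∩ S))).toReal /
              (wVol w (radSet S (fun θ => 1 + ε * η θ))).toReal := by
  have : NeZero n := ⟨Nat.one_le_iff_ne_zero.1 hn⟩
  obtain ⟨x, hx, hηx⟩ := hne
  obtain ⟨K, hlip⟩ := hη.contDiffOn.exists_lipschitzOnWith (by simp) (convex_closedBall 0 1)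
    (isCompact_closedBall 0 1)
  obtain ⟨ε₀, C, c, hε₀, hC, hc, h⟩ := stmt_3_general hα (hw.isHomogeneousWeight hS)
    (hlip.mono sphere_subset_closedBall) ⟨x, hx, hηx, (hw.pos hα hS.1 hx.2).ne'⟩ hmean
  exact ⟨ε₀, C, c, hε₀, hC, hc, fun ε hε hεε₀ =>
    ⟨(h ε hε hεε₀).1, fun r hr _ => (h ε hε hεε₀).2 r hr⟩⟩
end
end
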